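/- Let H ⊂ ℂ^n be a compact convex set with nonempty interior and suppose (H,ν) satisfies the density condition. Then for every μ ∈ 𝓜(H), J(μ) = W(μ) = inf{ δ̄^{e^{−Q}}(H) · exp(∫_H Q dμ) : Q : H → ℝ continuous }. -/

import Mathlib

open MeasureTheory Filter Topology ENNReal

noncomputable section

/-- Points of `ℂⁿ` (with the Euclidean metric). -/
abbrev Pt (n : ℕ) := EuclideanSpace ℂ (Fin n)

instance Pt.measurableSpace (n : ℕ) : MeasurableSpace (Pt n) := borel _

instance Pt.borelSpace (n : ℕ) : BorelSpace (Pt n) := ⟨rfl⟩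

/-- `s(d) = binomial(d+n, n)`, the number of multi-indices `α ∈ ℕⁿ` with `|α| ≤ d`. -/
def sdim (n d : ℕ) : ℕ := (d + n).choose n

lemma sdim_pos (n d : ℕ) : 0 < sdim n d := Nat.choose_pos (Nat.le_add_left n d)

/-- `E` is an enumeration of the multi-indices `α ∈ ℕⁿ` with `|α| ≤ d`. -/
def IsEnum (n d : ℕ) (E : Fin (sdim n d) → (Fin n → ℕ)) : Prop :=
  Function.Injective E ∧ ∀ α : Fin n → ℕ, ((∑ i, α i) ≤ d ↔ α ∈ Set.range E)

/-- The Vandermonde determinant `VDM_d(a_1, …, a_{s(d)}) = det [a_j^{α_i}]`. -/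
def VDM (n d : ℕ) (E : Fin (sdim n d) → (Fin n → ℕ))
    (a : Fin (sdim n d) → Pt n) : ℂ :=
  Matrix.det (Matrix.of fun i j => ∏ k, (a j k) ^ (E i k))

/-- `|VDM_d^Q(a)| = |VDM_d(a)| · w(a_1)^d ⋯ w(a_s)^d` where `w = e^{-Q}`, as a member
of `ℝ≥0∞`. -/
def absVDMQ (n d : ℕ) (E : Fin (sdim n d) → (Fin n → ℕ)) (H : Set (Pt n)) (Q : H → ℝ)
    (a : Fin (sdim n d) → H) : ℝ≥0∞ :=
  ENNReal.ofReal (‖VDM n d E (fun j => (a j : Pt n))‖ *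
    ∏ j, Real.exp (-(d : ℝ) * Q (a j)))

/-- The empirical measure `(1/s) ∑_j δ_{a_j}` of a tuple of points. -/
def emp {X : Type*} [MeasurableSpace X] {s : ℕ} (a : Fin s → X) : Measure X :=
  ((s : ℝ≥0∞))⁻¹ • ∑ j, Measure.dirac (a j)

lemma emp_univ {X : Type*} [MeasurableSpace X] {s : ℕ} (hs : s ≠ 0) (a : Fin s → X) :
    emp a Set.univ = 1 := by
  have : (emp a) Set.univ = ((s : ℝ≥0∞))⁻¹ * ∑ j : Fin s, (Measure.dirac (a j)) Set.univ := by
    simp [emp, Measure.smul_apply, Measure.finset_sum_apply]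
  rw [this]
  simp only [measure_univ, Finset.sum_const, Finset.card_univ, Fintype.card_fin, nsmul_eq_mul,
    mul_one]
  exact ENNReal.inv_mul_cancel (by exact_mod_cast hs) (by simp)

/-- The empirical probability measure `(1/s) ∑_j δ_{a_j}` of a tuple of points. -/
def empPM {X : Type*} [MeasurableSpace X] {s : ℕ} (hs : s ≠ 0) (a : Fin s → X) :
    ProbabilityMeasure X := ⟨emp a, ⟨emp_univ hs a⟩⟩

/-- `G̃_s(μ)`: the tuples in `H^s` whose empirical measure lies in `G`. -/
def Gtilde {n : ℕ} (d : ℕ) (H : Set (Pt n)) (G : Set (ProbabilityMeasure H)) :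
    Set (Fin (sdim n d) → H) :=
  {a | empPM (sdim_pos n d).ne' a ∈ G}

/-- `J_d^Q(μ, G) = (∫_{G̃_s(μ)} |VDM_d^Q(a)|² dν^{⊗s}(a))^{1/(2ds)}`. -/
def Jd (n d : ℕ) (E : Fin (sdim n d) → (Fin n → ℕ)) (H : Set (Pt n)) (ν : Measure H)
    (Q : H → ℝ) (G : Set (ProbabilityMeasure H)) : ℝ≥0∞ :=
  (∫⁻ a in Gtilde d H G, (absVDMQ n d E H Q a) ^ 2
      ∂(Measure.pi fun _ : Fin (sdim n d) => ν)) ^ (1 / (2 * d * sdim n d) : ℝ)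

/-- `W_d^Q(μ, G) = sup { |VDM_d^Q(a)|^{1/(ds)} : a ∈ G̃_s(μ) }`. -/
def Wd (n d : ℕ) (E : Fin (sdim n d) → (Fin n → ℕ)) (H : Set (Pt n))
    (Q : H → ℝ) (G : Set (ProbabilityMeasure H)) : ℝ≥0∞ :=
  ⨆ a ∈ Gtilde d H G, (absVDMQ n d E H Q a) ^ (1 / (d * sdim n d) : ℝ)

/-- `J^Q(μ) = inf_{G ∋ μ} limsup_{d → ∞} J_d^Q(μ, G)`, the infimum being over all open
neighborhoods `G` of `μ` in `𝓜(H)`. -/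
def JQ (n : ℕ) (E : ∀ d, Fin (sdim n d) → (Fin n → ℕ)) (H : Set (Pt n)) (ν : Measure H)
    (Q : H → ℝ) (μ : ProbabilityMeasure H) : ℝ≥0∞ :=
  ⨅ G ∈ {G : Set (ProbabilityMeasure H) | IsOpen G ∧ μ ∈ G},
    limsup (fun d => Jd n d (E d) H ν Q G) atTop

/-- `W^Q(μ) = inf_{G ∋ μ} limsup_{d → ∞} W_d^Q(μ, G)`, the infimum being over all open
neighborhoods `G` of `μ` in `𝓜(H)`. -/
def WQ (n : ℕ) (E : ∀ d, Fin (sdim n d) → (Fin n → ℕ)) (H : Set (Pt n))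
    (Q : H → ℝ) (μ : ProbabilityMeasure H) : ℝ≥0∞ :=
  ⨅ G ∈ {G : Set (ProbabilityMeasure H) | IsOpen G ∧ μ ∈ G},
    limsup (fun d => Wd n d (E d) H Q G) atTop

/-- `δ̄^w(H) = lim sup_d (sup_{a ∈ H^{s(d)}} |VDM_d^Q(a)|)^{1/(d·s(d))}` where `w = e^{-Q}`. -/
def deltaBar (n : ℕ) (E : ∀ d, Fin (sdim n d) → (Fin n → ℕ)) (H : Set (Pt n))
    (Q : H → ℝ) : ℝ≥0∞ :=
  limsup (fun d => (⨆ a : Fin (sdim n d) → H, absVDMQ n d (E d) H Q a)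
    ^ (1 / (d * sdim n d) : ℝ)) atTop

/-- The density condition on `(H, ν)`: there is `T > 0` such that for every `z₀ ∈ H`
there is `r(z₀) > 0` with `ν(B(z₀,r)) ≥ r^T` for all `0 < r < r(z₀)`. -/
def DensityCond {n : ℕ} (H : Set (Pt n)) (ν : Measure H) : Prop :=
  ∃ T : ℝ, 0 < T ∧ ∀ z₀ : H, ∃ r₀ > 0, ∀ r : ℝ, 0 < r → r < r₀ →
    ENNReal.ofReal (r ^ T) ≤ ν (Metric.ball z₀ r)

section
section PartA
open scoped ComplexOrder MatrixOrder

lemma posSemidef_det_le {s : ℕ} (hs : 0 < s) (A : Matrix (Fin s) (Fin s) ℂ)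
    (hA : A.PosSemidef) : A.det.re ≤ (A.trace.re / s) ^ s := by
  have h1 := hA.1.det_eq_prod_eigenvalues
  have h2 := hA.1.trace_eq_sum_eigenvalues
  have h3 := hA.eigenvalues_nonneg
  set e := hA.1.eigenvalues with he
  have h1' : A.det.re = ∏ i, e i := by
    rw [h1, ← Complex.ofReal_re (∏ i, e i)]; push_cast; rfl
  have h2' : A.trace.re = ∑ i, e i := by
    rw [h2, ← Complex.ofReal_re (∑ i, e i)]; push_cast; rfl
  have hs' : (0:ℝ) < s := by exact_mod_cast hs
  have h4 := Real.geom_mean_le_arith_mean_weighted Finset.univ (fun _ : Fin s => (1 / s : ℝ)) e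
    (fun i _ => by positivity) (by simp [hs'.ne']) (fun i _ => h3 i)
  rw [h1', h2']
  have h5 : ∏ i, e i = (∏ i, e i ^ (1 / s : ℝ)) ^ s := by
    rw [← Finset.prod_pow]
    refine Finset.prod_congr rfl fun i _ => ?_
    rw [← Real.rpow_natCast, ← Real.rpow_mul (h3 i)]
    simp [hs'.ne']
  rw [h5]
  refine pow_le_pow_left₀ (Finset.prod_nonneg fun i _ => Real.rpow_nonneg (h3 i) _) ?_ _
  refine h4.trans (le_of_eq ?_)
  rw [← Finset.mul_sum]; ring

section Det
set_option linter.unusedSectionVars false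
variable {X : Type*} [TopologicalSpace X] [CompactSpace X] [SecondCountableTopology X]
  [MeasurableSpace X] [BorelSpace X]

lemma cont_integrable {Y F : Type*} [TopologicalSpace Y] [CompactSpace Y]
    [MeasurableSpace Y] [OpensMeasurableSpace Y] [NormedAddCommGroup F] (ν : Measure Y)
    [IsFiniteMeasureOnCompacts ν] {f : Y → F} (hf : Continuous f) : Integrable f ν :=
  hf.integrable_of_hasCompactSupport (HasCompactSupport.of_compactSpace f)

def gram {s : ℕ} (ν : Measure X) (φ : Fin s → X → ℂ) (g : X → ℝ) :
    Matrix (Fin s) (Fin s) ℂ :=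
  Matrix.of fun i k => ∫ x, φ i x * (starRingEnd ℂ) (φ k x) * (g x : ℂ) ∂ν

lemma andreief {s : ℕ} (ν : Measure X) [IsFiniteMeasure ν] (φ : Fin s → X → ℂ)
    (hφ : ∀ i, Continuous (φ i)) (g : X → ℝ) (hg : Continuous g) :
    ((∫ a : Fin s → X, ‖Matrix.det (Matrix.of fun i j => φ i (a j))‖ ^ 2 * ∏ j, g (a j)
      ∂(Measure.pi fun _ => ν) : ℝ) : ℂ) = (s.factorial : ℂ) * (gram ν φ g).det := by
  rw [← integral_complex_ofReal]
  have key : ∀ a : Fin s → X,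
      ((‖Matrix.det (Matrix.of fun i j => φ i (a j))‖ ^ 2 * ∏ j, g (a j) : ℝ) : ℂ) =
      ∑ π : Equiv.Perm (Fin s), ∑ τ : Equiv.Perm (Fin s),
        ((Equiv.Perm.sign π : ℤ) : ℂ) * ((Equiv.Perm.sign τ : ℤ) : ℂ) *
        ∏ j, (φ (π j) (a j) * (starRingEnd ℂ) (φ (τ j) (a j)) * (g (a j) : ℂ)) := by
    intro a
    push_cast
    rw [← Complex.mul_conj', Matrix.det_apply', map_sum, Finset.sum_mul_sum, Finset.sum_mul]
    refine Finset.sum_congr rfl fun π _ => ?_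
    rw [Finset.sum_mul]
    refine Finset.sum_congr rfl fun τ _ => ?_
    simp only [Finset.prod_mul_distrib, map_mul, map_prod, Matrix.of_apply, map_intCast]
    ring
  simp_rw [key]
  rw [integral_finsetSum]
  swap
  · intro π _
    refine cont_integrable _ ?_
    refine continuous_finsetSum _ fun τ _ => continuous_const.mul ?_
    refine continuous_finsetProd _ fun j _ => ?_
    have h1 := (hφ (π j)).comp (continuous_apply (A := fun _ : Fin s => X) j)
    have h2 := (hφ (τ j)).comp (continuous_apply (A := fun _ : Fin s => X) j)
    have h3 := hg.comp (continuous_apply (A := fun _ : Fin s => X) j)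
    exact (h1.mul (Complex.continuous_conj.comp h2)).mul (Complex.continuous_ofReal.comp h3)
  have key2 : ∀ π : Equiv.Perm (Fin s), ∫ a : Fin s → X, ∑ τ : Equiv.Perm (Fin s),
        ((Equiv.Perm.sign π : ℤ) : ℂ) * ((Equiv.Perm.sign τ : ℤ) : ℂ) *
        ∏ j, (φ (π j) (a j) * (starRingEnd ℂ) (φ (τ j) (a j)) * (g (a j) : ℂ))
        ∂(Measure.pi fun _ => ν) = (gram ν φ g).det := by
    intro π
    rw [integral_finsetSum]
    swap
    · intro τ _
      refine cont_integrable _ ?_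
      refine continuous_const.mul ?_
      refine continuous_finsetProd _ fun j _ => ?_
      have h1 := (hφ (π j)).comp (continuous_apply (A := fun _ : Fin s => X) j)
      have h2 := (hφ (τ j)).comp (continuous_apply (A := fun _ : Fin s => X) j)
      have h3 := hg.comp (continuous_apply (A := fun _ : Fin s => X) j)
      exact (h1.mul (Complex.continuous_conj.comp h2)).mul (Complex.continuous_ofReal.comp h3)
    have e1 : ∀ τ : Equiv.Perm (Fin s), ∫ a : Fin s → X,
        ((Equiv.Perm.sign π : ℤ) : ℂ) * ((Equiv.Perm.sign τ : ℤ) : ℂ) *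
        ∏ j, (φ (π j) (a j) * (starRingEnd ℂ) (φ (τ j) (a j)) * (g (a j) : ℂ))
        ∂(Measure.pi fun _ => ν) = ((Equiv.Perm.sign π : ℤ) : ℂ) *
          (((Equiv.Perm.sign τ : ℤ) : ℂ) *
          ∏ j, (Matrix.transpose ((gram ν φ g).submatrix π id)) (τ j) j) := by
      intro τ
      rw [integral_const_mul, mul_assoc]
      congr 2
      exact integral_fintype_prod_eq_prod (𝕜 := ℂ) (E := fun _ : Fin s => X)
        (μ := fun _ => ν)
        (fun j x => φ (π j) x * (starRingEnd ℂ) (φ (τ j) x) * (g x : ℂ))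
    rw [Finset.sum_congr rfl fun τ _ => e1 τ, ← Finset.mul_sum, ← Matrix.det_apply',
      Matrix.det_transpose, Matrix.det_permute, ← mul_assoc, ← Int.cast_mul]
    have : ((Equiv.Perm.sign π : ℤ) * (Equiv.Perm.sign π : ℤ)) = 1 := by
      rw [← Units.val_mul, Int.units_mul_self]; rfl
    rw [this]; simp
  rw [Finset.sum_congr rfl fun π _ => key2 π]
  simp [Finset.card_univ, Fintype.card_perm]

lemma gram_quad {s : ℕ} (ν : Measure X) [IsFiniteMeasure ν] (φ : Fin s → X → ℂ)
    (hφ : ∀ i, Continuous (φ i)) (g : X → ℝ) (hg : Continuous g) (v : Fin s → ℂ) :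
    star v ⬝ᵥ (gram ν φ g).mulVec v =
      ((∫ x, ‖∑ i, (starRingEnd ℂ) (v i) * φ i x‖ ^ 2 * g x ∂ν : ℝ) : ℂ) := by
  rw [← integral_complex_ofReal]
  have key : ∀ x, ((‖∑ i, (starRingEnd ℂ) (v i) * φ i x‖ ^ 2 * g x : ℝ) : ℂ) =
      ∑ i, ∑ k, (starRingEnd ℂ) (v i) * (φ i x * (starRingEnd ℂ) (φ k x) * (g x : ℂ)) * v k := by
    intro x
    push_cast
    rw [← Complex.mul_conj', map_sum, Finset.sum_mul_sum, Finset.sum_mul]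
    refine Finset.sum_congr rfl fun i _ => ?_
    rw [Finset.sum_mul]
    refine Finset.sum_congr rfl fun k _ => ?_
    simp only [map_mul, Complex.conj_conj]
    ring
  have hc : ∀ i k, Continuous fun x => φ i x * (starRingEnd ℂ) (φ k x) * (g x : ℂ) := fun i k =>
    ((hφ i).mul (Complex.continuous_conj.comp (hφ k))).mul (Complex.continuous_ofReal.comp hg)
  simp_rw [key]
  have hc2 : ∀ i k, Continuous fun x => (starRingEnd ℂ) (v i) *
      (φ i x * (starRingEnd ℂ) (φ k x) * (g x : ℂ)) * v k := fun i k =>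
    (continuous_const.mul (hc i k)).mul continuous_const
  rw [integral_finsetSum _ fun i _ => cont_integrable _
    (continuous_finsetSum _ fun k _ => hc2 i k)]
  simp only [dotProduct, Matrix.mulVec, Finset.mul_sum]
  refine Finset.sum_congr rfl fun i _ => ?_
  rw [integral_finsetSum _ fun k _ => cont_integrable _ (hc2 i k)]
  refine Finset.sum_congr rfl fun k _ => ?_
  rw [integral_mul_const, integral_const_mul]
  simp [gram, mul_assoc]

lemma gram_posSemidef {s : ℕ} (ν : Measure X) [IsFiniteMeasure ν] (φ : Fin s → X → ℂ)
    (hφ : ∀ i, Continuous (φ i)) (g : X → ℝ) (hg : Continuous g) (hg0 : ∀ x, 0 ≤ g x) :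
    (gram ν φ g).PosSemidef := by
  refine Matrix.PosSemidef.of_dotProduct_mulVec_nonneg ?_ ?_
  · ext i k
    simp only [gram, Matrix.conjTranspose_apply, Matrix.of_apply]
    rw [← starRingEnd_apply, ← integral_conj]
    congr 1
    ext x
    simp only [map_mul, Complex.conj_conj, Complex.conj_ofReal]
    ring
  · intro v
    rw [gram_quad ν φ hφ g hg v]
    rw [Complex.zero_le_real]
    exact integral_nonneg fun x => mul_nonneg (by positivity) (hg0 x)

/-- Negative-association type inequality for determinantal ensembles. -/
lemma det_key {s : ℕ} (hs : 0 < s) (ν : Measure X) [IsFiniteMeasure ν] (φ : Fin s → X → ℂ)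
    (hφ : ∀ i, Continuous (φ i))
    (hZ : 0 < ∫ a : Fin s → X, ‖Matrix.det (Matrix.of fun i j => φ i (a j))‖ ^ 2
      ∂(Measure.pi fun _ => ν)) :
    ∃ k : X → ℝ, Continuous k ∧ (∀ x, 0 ≤ k x) ∧ ∫ x, k x ∂ν = 1 ∧
      ∀ g : X → ℝ, Continuous g → (∀ x, 0 ≤ g x) →
        ∫ a : Fin s → X, ‖Matrix.det (Matrix.of fun i j => φ i (a j))‖ ^ 2 * ∏ j, g (a j)
          ∂(Measure.pi fun _ => ν) ≤
        (∫ a : Fin s → X, ‖Matrix.det (Matrix.of fun i j => φ i (a j))‖ ^ 2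
          ∂(Measure.pi fun _ => ν)) * (∫ x, g x * k x ∂ν) ^ s := by
  have hZ1 := andreief ν φ hφ (fun _ => 1) continuous_const
  simp only [Finset.prod_const_one, mul_one] at hZ1
  set Z := ∫ a : Fin s → X, ‖Matrix.det (Matrix.of fun i j => φ i (a j))‖ ^ 2
      ∂(Measure.pi fun _ => ν) with hZdef
  have hG1 := gram_posSemidef ν φ hφ (fun _ => 1) continuous_const (fun _ => zero_le_one)
  set G1 := gram ν φ (fun _ => 1) with hG1def
  have hdet : G1.det ≠ 0 := by
    intro h
    rw [h, mul_zero] at hZ1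
    exact hZ.ne' (by exact_mod_cast hZ1)
  obtain ⟨B, hB⟩ : ∃ B : Matrix (Fin s) (Fin s) ℂ, G1 = B.conjTranspose * B := by
    obtain ⟨Y, hY, -, hYY⟩ :=
      CFC.exists_sqrt_of_isSelfAdjoint_of_quasispectrumRestricts hG1.isHermitian
        (QuasispectrumRestricts.nnreal_of_nonneg hG1.nonneg)
    exact ⟨Y, by rw [← hYY, ← Matrix.star_eq_conjTranspose, hY.star_eq]⟩
  have hBdet : IsUnit B.det := by
    rw [isUnit_iff_ne_zero]
    intro h
    apply hdet
    rw [hB, Matrix.det_mul, h, mul_zero]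
  set C := B⁻¹ with hC
  have hCG : C.conjTranspose * G1 * C = 1 := by
    have h1 : B * C = 1 := Matrix.mul_nonsing_inv B hBdet
    rw [hB]
    calc C.conjTranspose * (B.conjTranspose * B) * C
        = (B * C).conjTranspose * (B * C) := by
          rw [Matrix.conjTranspose_mul]; simp only [Matrix.mul_assoc]
      _ = 1 := by rw [h1]; simp
  have htr : ∀ g : X → ℝ, Continuous g → (C.conjTranspose * gram ν φ g * C).trace =
      ((∫ x, ∑ l, ‖∑ i, (starRingEnd ℂ) (C i l) * φ i x‖ ^ 2 * g x ∂ν : ℝ) : ℂ) := by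
    intro g hg
    rw [integral_finsetSum]
    swap
    · intro l _
      refine cont_integrable _ (Continuous.mul ?_ hg)
      exact (continuous_norm.comp
        (continuous_finsetSum _ fun i _ => continuous_const.mul (hφ i))).pow 2
    push_cast
    rw [Matrix.trace]
    refine Finset.sum_congr rfl fun l _ => ?_
    rw [← gram_quad ν φ hφ g hg (fun i => C i l)]
    simp only [Matrix.diag_apply, Matrix.mul_apply, dotProduct, Matrix.mulVec,
      Matrix.conjTranspose_apply, Finset.sum_mul, Finset.mul_sum, Pi.star_apply]
    rw [Finset.sum_comm]
    simp only [mul_assoc]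
  have hs' : (0:ℝ) < s := by exact_mod_cast hs
  refine ⟨fun x => (∑ l, ‖∑ i, (starRingEnd ℂ) (C i l) * φ i x‖ ^ 2) / s, ?_, ?_, ?_, ?_⟩
  · refine Continuous.div_const (continuous_finsetSum _ fun l _ => ?_) _
    exact (continuous_norm.comp
        (continuous_finsetSum _ fun i _ => continuous_const.mul (hφ i))).pow 2
  · intro x; positivity
  · have h1 := htr (fun _ => 1) continuous_const
    rw [← hG1def, hCG] at h1
    simp only [mul_one, Matrix.trace_one, Fintype.card_fin] at h1
    rw [integral_div, div_eq_one_iff_eq hs'.ne']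
    exact_mod_cast h1.symm
  · intro g hg hg0
    have hA : (C.conjTranspose * gram ν φ g * C).PosSemidef :=
      (gram_posSemidef ν φ hφ g hg hg0).conjTranspose_mul_mul_same C
    have h1 := posSemidef_det_le hs _ hA
    have h2 := htr g hg
    have h3 : (∫ x, ∑ l, ‖∑ i, (starRingEnd ℂ) (C i l) * φ i x‖ ^ 2 * g x ∂ν) / s =
        ∫ x, g x * ((∑ l, ‖∑ i, (starRingEnd ℂ) (C i l) * φ i x‖ ^ 2) / s) ∂ν := by
      rw [← integral_div]
      congr 1
      ext x
      rw [← Finset.sum_mul]; ring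
    rw [h2, Complex.ofReal_re, h3] at h1
    refine le_trans (le_of_eq ?_) (mul_le_mul_of_nonneg_left h1 hZ.le)
    have h4 := andreief ν φ hφ g hg
    have h5 : (C.conjTranspose * gram ν φ g * C).det * G1.det = (gram ν φ g).det := by
      have h6 : (C.conjTranspose * G1 * C).det = 1 := by rw [hCG]; simp
      rw [Matrix.det_mul, Matrix.det_mul] at h6 ⊢
      calc _ = (C.conjTranspose.det * G1.det * C.det) * (gram ν φ g).det := by ring
        _ = _ := by rw [h6, one_mul]
    have h7 : (((∫ a : Fin s → X, ‖Matrix.det (Matrix.of fun i j => φ i (a j))‖ ^ 2 *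
        ∏ j, g (a j) ∂(Measure.pi fun _ => ν)) : ℝ) : ℂ) =
        (Z : ℂ) * (C.conjTranspose * gram ν φ g * C).det := by
      rw [h4, ← h5, hZ1]; ring
    have h8 := congrArg Complex.re h7
    rw [Complex.ofReal_re, Complex.re_ofReal_mul] at h8
    exact h8

end Det
end PartA

end

section
section PartB
set_option linter.unusedSectionVars false
variable {X : Type*} [TopologicalSpace X] [CompactSpace X] [SecondCountableTopology X]
  [MeasurableSpace X] [BorelSpace X]

/-- The weighted density. -/
def rhoF {s : ℕ} (φ : Fin s → X → ℂ) (d : ℕ) (Q : X → ℝ) (a : Fin s → X) : ℝ :=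
  (‖Matrix.det (Matrix.of fun i j => φ i (a j))‖ * ∏ j, Real.exp (-(d : ℝ) * Q (a j))) ^ 2

def Zf {s : ℕ} (ν : Measure X) (φ : Fin s → X → ℂ) (d : ℕ) (Q : X → ℝ) : ℝ :=
  ∫ a, rhoF φ d Q a ∂(Measure.pi fun _ : Fin s => ν)

lemma rhoF_nonneg {s : ℕ} (φ : Fin s → X → ℂ) (d : ℕ) (Q : X → ℝ) (a : Fin s → X) :
    0 ≤ rhoF φ d Q a := sq_nonneg _

lemma cont_det {s : ℕ} (φ : Fin s → X → ℂ) (hφ : ∀ i, Continuous (φ i)) :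
    Continuous fun a : Fin s → X => Matrix.det (Matrix.of fun i j => φ i (a j)) := by
  refine Continuous.matrix_det ?_
  refine continuous_matrix fun i j => ?_
  exact (hφ i).comp (continuous_apply j)

lemma cont_prod_apply {s : ℕ} (g : X → ℝ) (hg : Continuous g) :
    Continuous fun a : Fin s → X => ∏ j, g (a j) :=
  continuous_finsetProd _ fun j _ => hg.comp (continuous_apply j)

lemma rhoF_cont {s : ℕ} (φ : Fin s → X → ℂ) (hφ : ∀ i, Continuous (φ i)) (d : ℕ) (Q : X → ℝ)
    (hQ : Continuous Q) : Continuous (rhoF φ d Q) := by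
  unfold rhoF
  refine Continuous.pow (Continuous.mul (cont_det φ hφ).norm ?_) 2
  exact cont_prod_apply (fun x => Real.exp (-(d : ℝ) * Q x)) (by fun_prop)

lemma rhoF_eq {s : ℕ} (φ : Fin s → X → ℂ) (d : ℕ) (Q : X → ℝ) (a : Fin s → X) :
    rhoF φ d Q a =
      ‖Matrix.det (Matrix.of fun i j => φ i (a j) * (Real.exp (-(d : ℝ) * Q (a j)) : ℂ))‖ ^ 2 := by
  have h : (Matrix.of fun i j => φ i (a j) * (Real.exp (-(d : ℝ) * Q (a j)) : ℂ)) =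
      Matrix.of fun i j => ((fun j => (Real.exp (-(d : ℝ) * Q (a j)) : ℂ)) j) *
        (Matrix.of fun i j => φ i (a j)) i j := by
    ext i j; simp [mul_comm]
  rw [h, Matrix.det_mul_row, norm_mul, norm_prod, rhoF, mul_comm]
  congr 3
  ext j
  rw [Complex.norm_real, Real.norm_of_nonneg (Real.exp_pos _).le]

lemma tilt_key {s : ℕ} (hs : 0 < s) (ν : Measure X) [IsFiniteMeasure ν] (φ : Fin s → X → ℂ)
    (hφ : ∀ i, Continuous (φ i)) (d : ℕ) (Q : X → ℝ) (hQ : Continuous Q)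
    (hZ : 0 < Zf ν φ d Q) :
    ∃ k : X → ℝ, Continuous k ∧ (∀ x, 0 ≤ k x) ∧ ∫ x, k x ∂ν = 1 ∧
      ∀ v : X → ℝ, Continuous v →
        ∫ a : Fin s → X, rhoF φ d Q a * ∏ j, Real.exp (v (a j)) ∂(Measure.pi fun _ => ν) ≤
        Zf ν φ d Q * (∫ x, Real.exp (v x) * k x ∂ν) ^ s := by
  simp only [Zf, rhoF_eq] at hZ ⊢
  obtain ⟨k, h1, h2, h3, h4⟩ := det_key hs ν
    (fun i x => φ i x * (Real.exp (-(d : ℝ) * Q x) : ℂ)) (fun i => by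
      refine (hφ i).mul (Complex.continuous_ofReal.comp ?_); fun_prop) hZ
  exact ⟨k, h1, h2, h3, fun v hv => h4 (fun x => Real.exp (v x)) (by fun_prop)
    (fun x => (Real.exp_pos _).le)⟩

lemma exp_le_quad {x : ℝ} (hx : |x| ≤ 1) : Real.exp x ≤ 1 + x + x ^ 2 := by
  have := Real.abs_exp_sub_one_sub_id_le hx
  have := (abs_le.mp this).2
  linarith

lemma integral_exp_le (ν : Measure X) [IsFiniteMeasure ν] (k : X → ℝ) (hk : Continuous k)
    (hk0 : ∀ x, 0 ≤ k x) (hk1 : ∫ x, k x ∂ν = 1) (v : X → ℝ) (hv : Continuous v)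
    (c : ℝ) (hc : ∀ x, |v x| ≤ c) (hc1 : c ≤ 1) :
    ∫ x, Real.exp (v x) * k x ∂ν ≤ Real.exp (∫ x, v x * k x ∂ν + c ^ 2) := by
  have h1 : ∫ x, Real.exp (v x) * k x ∂ν ≤ ∫ x, ((1 + c ^ 2) * k x + v x * k x) ∂ν := by
    refine integral_mono (cont_integrable _ (by fun_prop)) (cont_integrable _ (by fun_prop)) ?_
    intro x
    have h2 := exp_le_quad ((hc x).trans hc1)
    have h3 : v x ^ 2 ≤ c ^ 2 := sq_le_sq' (by linarith [(abs_le.mp (hc x)).1]) (abs_le.mp (hc x)).2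
    have h4 := mul_le_mul_of_nonneg_right (show Real.exp (v x) ≤ 1 + c ^ 2 + v x by linarith) (hk0 x)
    simp only
    linarith
  rw [integral_add (cont_integrable _ (by fun_prop)) (cont_integrable _ (by fun_prop)),
    integral_const_mul, hk1] at h1
  have := Real.add_one_le_exp (∫ x, v x * k x ∂ν + c ^ 2)
  linarith

lemma linear_zero {A C r1 : ℝ} (hr1 : 0 < r1) (h : ∀ r, |r| < r1 → 0 ≤ r * A + r ^ 2 * C) :
    A = 0 := by
  by_contra hA
  have hA' : 0 < |A| := abs_pos.mpr hA
  set q := min (r1 / 2) (|A| / (2 * (|C| + 1))) with hq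
  have hCp : 0 < 2 * (|C| + 1) := by positivity
  have hq0 : 0 < q := lt_min (by linarith) (by positivity)
  have hq1 : q < r1 := lt_of_le_of_lt (min_le_left _ _) (by linarith)
  have hq2 : q * (2 * (|C| + 1)) ≤ |A| := by
    rw [← le_div_iff₀ hCp]; exact min_le_right _ _
  have hC := le_abs_self C
  have key : 0 ≤ q * (-|A| + q * C) := by
    rcases lt_or_gt_of_ne hA with hneg | hpos
    · have := h q (by rw [abs_of_pos hq0]; exact hq1)
      rw [abs_of_neg hneg]; nlinarith
    · have := h (-q) (by rw [abs_neg, abs_of_pos hq0]; exact hq1)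
      rw [abs_of_pos hpos]; nlinarith
  have h2 : 0 ≤ -|A| + q * C := by
    by_contra hh
    push Not at hh
    nlinarith
  nlinarith

lemma rhoF_shift {s : ℕ} (φ : Fin s → X → ℂ) (d : ℕ) (Q v : X → ℝ) (a : Fin s → X) :
    rhoF φ d (fun x => Q x + v x) a = rhoF φ d Q a * ∏ j, Real.exp (-(2 * d : ℝ) * v (a j)) := by
  unfold rhoF
  have : ∏ j, Real.exp (-(2 * d : ℝ) * v (a j)) = (∏ j, Real.exp (-(d : ℝ) * v (a j))) ^ 2 := by
    rw [← Finset.prod_pow]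
    refine Finset.prod_congr rfl fun j _ => ?_
    rw [← Real.exp_nat_mul]; congr 1; push_cast; ring
  rw [this, ← mul_pow, mul_assoc, ← Finset.prod_mul_distrib]
  congr 3
  ext j
  rw [← Real.exp_add]; congr 1; ring

lemma Zf_le_of {s : ℕ} (ν : Measure X) [IsFiniteMeasure ν] (φ : Fin s → X → ℂ)
    (hφ : ∀ i, Continuous (φ i)) (d : ℕ) (Q Q' : X → ℝ) (hQ : Continuous Q)
    (hQ' : Continuous Q') (c : ℝ) (hc : ∀ x, Q' x ≤ Q x + c) :
    Zf ν φ d Q ≤ Real.exp (2 * d * s * c) * Zf ν φ d Q' := by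
  unfold Zf
  rw [← integral_const_mul]
  refine integral_mono (cont_integrable _ (rhoF_cont φ hφ d Q hQ))
    (cont_integrable _ (continuous_const.mul (rhoF_cont φ hφ d Q' hQ'))) fun a => ?_
  have h := rhoF_shift φ d Q' (fun x => Q x - Q' x) a
  simp only [add_sub_cancel] at h
  rw [h, mul_comm]
  refine mul_le_mul_of_nonneg_right ?_ (rhoF_nonneg _ _ _ _)
  calc ∏ j, Real.exp (-(2 * d : ℝ) * (Q (a j) - Q' (a j)))
      ≤ ∏ _j : Fin s, Real.exp (2 * d * c) := by
        refine Finset.prod_le_prod (fun j _ => (Real.exp_pos _).le) fun j _ => ?_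
        rw [Real.exp_le_exp]
        have := hc (a j)
        have hd : (0:ℝ) ≤ 2 * d := by positivity
        nlinarith
    _ = Real.exp (2 * d * s * c) := by
        rw [Finset.prod_const, Finset.card_univ, Fintype.card_fin, ← Real.exp_nat_mul]
        congr 1; ring

/-- linear combination of test functions -/
def Qt {m : ℕ} (u : Fin m → X → ℝ) (t : Fin m → ℝ) (x : X) : ℝ := ∑ i, t i * u i x

lemma Qt_cont {m : ℕ} (u : Fin m → X → ℝ) (hu : ∀ i, Continuous (u i)) (t : Fin m → ℝ) :
    Continuous (Qt u t) :=
  continuous_finsetSum _ fun i _ => continuous_const.mul (hu i)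

def psiF {s m : ℕ} (ν : Measure X) (φ : Fin s → X → ℂ) (d : ℕ) (u : Fin m → X → ℝ)
    (mv : Fin m → ℝ) (t : Fin m → ℝ) : ℝ :=
  Real.log (Zf ν φ d (Qt u t)) / (2 * d * s) + ∑ i, t i * mv i

lemma Qt_diff {m : ℕ} (u : Fin m → X → ℝ) (B : ℝ) (hB : ∀ i x, |u i x| ≤ B)
    (t t' : Fin m → ℝ) (x : X) : Qt u t' x ≤ Qt u t x + B * ∑ i, |t' i - t i| := by
  unfold Qt
  rw [Finset.mul_sum, ← Finset.sum_add_distrib]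
  refine Finset.sum_le_sum fun i _ => ?_
  have h1 : (t' i - t i) * u i x ≤ |t' i - t i| * B := by
    calc _ ≤ |(t' i - t i) * u i x| := le_abs_self _
      _ = |t' i - t i| * |u i x| := abs_mul _ _
      _ ≤ _ := mul_le_mul_of_nonneg_left (hB i x) (abs_nonneg _)
  nlinarith

lemma Zf_pos_all {s m : ℕ} (ν : Measure X) [IsFiniteMeasure ν] (φ : Fin s → X → ℂ)
    (hφ : ∀ i, Continuous (φ i)) (d : ℕ) (u : Fin m → X → ℝ) (hu : ∀ i, Continuous (u i))
    (B : ℝ) (hB : ∀ i x, |u i x| ≤ B) (t t' : Fin m → ℝ) (h : 0 < Zf ν φ d (Qt u t)) :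
    0 < Zf ν φ d (Qt u t') := by
  have := Zf_le_of ν φ hφ d _ _ (Qt_cont u hu t) (Qt_cont u hu t') _ (Qt_diff u B hB t t')
  exact (mul_pos_iff_of_pos_left (Real.exp_pos _)).mp (h.trans_le this)

lemma psiF_diff {s m : ℕ} (hs : 0 < s) (ν : Measure X) [IsFiniteMeasure ν] (φ : Fin s → X → ℂ)
    (hφ : ∀ i, Continuous (φ i)) (d : ℕ) (hd : 0 < d) (u : Fin m → X → ℝ)
    (hu : ∀ i, Continuous (u i))
    (B : ℝ) (hB : ∀ i x, |u i x| ≤ B) (mv : Fin m → ℝ) (hmv : ∀ i, |mv i| ≤ B)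
    (t t' : Fin m → ℝ) (h : 0 < Zf ν φ d (Qt u t)) :
    psiF ν φ d u mv t ≤ psiF ν φ d u mv t' + 2 * B * ∑ i, |t' i - t i| := by
  have h1 := Zf_le_of ν φ hφ d _ _ (Qt_cont u hu t) (Qt_cont u hu t') _ (Qt_diff u B hB t t')
  have h2 := Zf_pos_all ν φ hφ d u hu B hB t t' h
  have h3 := Real.log_le_log h h1
  rw [Real.log_mul (Real.exp_pos _).ne' h2.ne', Real.log_exp] at h3
  have hp : (0:ℝ) < 2 * d * s := by positivity
  unfold psiF
  have h4 : Real.log (Zf ν φ d (Qt u t)) / (2 * d * s) ≤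
      Real.log (Zf ν φ d (Qt u t')) / (2 * d * s) + B * ∑ i, |t' i - t i| := by
    rw [div_add' _ _ _ hp.ne', div_le_div_iff_of_pos_right hp]
    linarith
  have h5 : ∑ i, t i * mv i ≤ ∑ i, t' i * mv i + B * ∑ i, |t' i - t i| := by
    rw [Finset.mul_sum, ← Finset.sum_add_distrib]
    refine Finset.sum_le_sum fun i _ => ?_
    have h1 : (t i - t' i) * mv i ≤ |t' i - t i| * B := by
      calc _ ≤ |(t i - t' i) * mv i| := le_abs_self _
        _ = |t' i - t i| * |mv i| := by rw [abs_mul, abs_sub_comm]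
        _ ≤ _ := mul_le_mul_of_nonneg_left (hmv i) (abs_nonneg _)
    nlinarith
  linarith

lemma psiF_continuous {s m : ℕ} (hs : 0 < s) (ν : Measure X) [IsFiniteMeasure ν]
    (φ : Fin s → X → ℂ)
    (hφ : ∀ i, Continuous (φ i)) (d : ℕ) (hd : 0 < d) (u : Fin m → X → ℝ)
    (hu : ∀ i, Continuous (u i))
    (B : ℝ) (hB : ∀ i x, |u i x| ≤ B) (mv : Fin m → ℝ) (hmv : ∀ i, |mv i| ≤ B)
    (h : 0 < Zf ν φ d (Qt u 0)) : Continuous (psiF ν φ d u mv) := by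
  rw [continuous_iff_continuousAt]
  intro t
  have hpos := fun t' => Zf_pos_all ν φ hφ d u hu B hB 0 t' h
  rw [ContinuousAt, tendsto_iff_dist_tendsto_zero]
  refine squeeze_zero (fun _ => dist_nonneg) (g := fun t' => 2 * B * ∑ i, |t' i - t i|) ?_ ?_
  · intro t'
    rw [Real.dist_eq, abs_le]
    have h1 := psiF_diff hs ν φ hφ d hd u hu B hB mv hmv t t' (hpos t)
    have h2 := psiF_diff hs ν φ hφ d hd u hu B hB mv hmv t' t (hpos t')
    simp only [abs_sub_comm (t _) (t' _)] at h2
    constructor <;> linarith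
  · have : Continuous fun t' : Fin m → ℝ => 2 * B * ∑ i, |t' i - t i| := by fun_prop
    have := this.tendsto t
    simpa using this

/-- First-order condition at a minimiser. -/
lemma first_order {s m : ℕ} (hs : 0 < s) (ν : Measure X) [IsFiniteMeasure ν] (φ : Fin s → X → ℂ)
    (hφ : ∀ i, Continuous (φ i)) (d : ℕ) (hd : 0 < d) (u : Fin m → X → ℝ)
    (hu : ∀ i, Continuous (u i))
    (B : ℝ) (hB0 : 0 < B) (hB : ∀ i x, |u i x| ≤ B) (mv : Fin m → ℝ)
    (t : Fin m → ℝ) (h : 0 < Zf ν φ d (Qt u t)) (η : ℝ)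
    (k : X → ℝ) (hk : Continuous k) (hk0 : ∀ x, 0 ≤ k x) (hk1 : ∫ x, k x ∂ν = 1)
    (hkey : ∀ v : X → ℝ, Continuous v →
        ∫ a : Fin s → X, rhoF φ d (Qt u t) a * ∏ j, Real.exp (v (a j)) ∂(Measure.pi fun _ => ν) ≤
        Zf ν φ d (Qt u t) * (∫ x, Real.exp (v x) * k x ∂ν) ^ s) (i : Fin m)
    (r0 : ℝ) (hr0 : 0 < r0)
    (hmin : ∀ r : ℝ, |r| < r0 → psiF ν φ d u mv t + η / 2 * ∑ l, t l ^ 2 ≤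
      psiF ν φ d u mv (Function.update t i (t i + r)) +
        η / 2 * ∑ l, (Function.update t i (t i + r)) l ^ 2) :
    ∫ x, u i x * k x ∂ν = mv i + η * t i := by
  have hdR : (0:ℝ) < d := by exact_mod_cast hd
  have hsR : (0:ℝ) < s := by exact_mod_cast hs
  have hp : (0:ℝ) < 2 * d * s := by positivity
  set b := ∫ x, u i x * k x ∂ν with hb
  suffices hA : -b + mv i + η * t i = 0 by linarith
  refine linear_zero (r1 := min r0 (1 / (2 * d * B))) (C := 2 * d * B ^ 2 + η / 2)
    (lt_min hr0 (by positivity)) fun r hr => ?_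
  have hr1 := hmin r (hr.trans_le (min_le_left _ _))
  have hr2 : |r| * (2 * d * B) ≤ 1 := by
    rw [← le_div_iff₀ (by positivity)]; exact (hr.trans_le (min_le_right _ _)).le
  have hsum : ∀ f : Fin m → ℝ → ℝ, ∑ l, f l ((Function.update t i (t i + r)) l) =
      ∑ l, f l (t l) + (f i (t i + r) - f i (t i)) := by
    intro f
    rw [← sub_eq_iff_eq_add', ← Finset.sum_sub_distrib, Finset.sum_eq_single i]
    · simp
    · intro l _ hl; simp [Function.update_of_ne hl]
    · simp
  have hQ : Qt u (Function.update t i (t i + r)) = fun x => Qt u t x + r * u i x := by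
    ext x
    unfold Qt
    rw [hsum (fun l y => y * u l x)]; ring
  have hpos := Zf_pos_all ν φ hφ d u hu B hB t (Function.update t i (t i + r)) h
  have hZle : Zf ν φ d (Qt u (Function.update t i (t i + r))) ≤
      Zf ν φ d (Qt u t) * Real.exp (s * (-(2 * d * r) * b + (|r| * (2 * d * B)) ^ 2)) := by
    have e1 : Zf ν φ d (Qt u (Function.update t i (t i + r))) =
        ∫ a : Fin s → X, rhoF φ d (Qt u t) a * ∏ j, Real.exp (-(2 * d : ℝ) * (r * u i (a j)))
          ∂(Measure.pi fun _ => ν) := by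
      rw [Zf, hQ]
      congr 1
      ext a
      exact rhoF_shift φ d (Qt u t) (fun x => r * u i x) a
    have hui := hu i
    have hvc : Continuous fun x => -(2 * d : ℝ) * (r * u i x) := by fun_prop
    rw [e1]
    refine (hkey (fun x => -(2 * d : ℝ) * (r * u i x)) hvc).trans ?_
    refine mul_le_mul_of_nonneg_left ?_ h.le
    rw [Real.exp_nat_mul]
    refine pow_le_pow_left₀ (integral_nonneg fun x => mul_nonneg (Real.exp_pos _).le (hk0 x)) ?_ _
    refine (integral_exp_le ν k hk hk0 hk1 _ hvc (|r| * (2 * d * B)) ?_ hr2).trans (le_of_eq ?_)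
    · intro x
      rw [abs_mul, abs_neg, abs_mul r, abs_of_pos (by positivity : (0:ℝ) < 2 * d)]
      have := mul_le_mul_of_nonneg_left (hB i x) (by positivity : 0 ≤ 2 * d * |r|)
      linarith
    · congr 2
      rw [hb, ← integral_const_mul]
      congr 1; ext x; ring
  have hlog := Real.log_le_log hpos hZle
  rw [Real.log_mul h.ne' (Real.exp_pos _).ne', Real.log_exp] at hlog
  unfold psiF at hr1
  rw [hsum (fun l y => y * mv l), hsum (fun l y => y ^ 2)] at hr1
  have hdiv : Real.log (Zf ν φ d (Qt u (Function.update t i (t i + r)))) / (2 * d * s) ≤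
      Real.log (Zf ν φ d (Qt u t)) / (2 * d * s) + (-r * b + 2 * d * B ^ 2 * r ^ 2) := by
    rw [div_add' _ _ _ hp.ne', div_le_div_iff_of_pos_right hp]
    refine hlog.trans (le_of_eq ?_)
    rw [mul_pow, sq_abs]; ring
  nlinarith

end PartB

end

section
section PartB2
set_option linter.unusedSectionVars false
variable {X : Type*} [TopologicalSpace X] [CompactSpace X] [SecondCountableTopology X]
  [MeasurableSpace X] [BorelSpace X]

lemma conc_one {s : ℕ} (ν : Measure X) [IsFiniteMeasure ν] (ρ : (Fin s → X) → ℝ) (Z : ℝ)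
    (hZ : 0 ≤ Z)
    (k : X → ℝ) (hk : Continuous k) (hk0 : ∀ x, 0 ≤ k x) (hk1 : ∫ x, k x ∂ν = 1)
    (hkey : ∀ v : X → ℝ, Continuous v →
        ∫ a : Fin s → X, ρ a * ∏ j, Real.exp (v (a j)) ∂(Measure.pi fun _ => ν) ≤
        Z * (∫ x, Real.exp (v x) * k x ∂ν) ^ s)
    (u : X → ℝ) (hu : Continuous u) (B : ℝ) (hB0 : 0 < B) (hB : ∀ x, |u x| ≤ B)
    (l e : ℝ) (hl : 0 < l) (hl1 : 2 * B * l ≤ 1) :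
    ∫ a : Fin s → X, ρ a * ∏ j, Real.exp (l * (u (a j) - (∫ x, u x * k x ∂ν) - e))
      ∂(Measure.pi fun _ => ν) ≤ Z * Real.exp (-(s * (l * e - 4 * l ^ 2 * B ^ 2))) := by
  set b := ∫ x, u x * k x ∂ν with hb
  have hbB : |b| ≤ B := by
    have h1 : b ≤ ∫ x, B * k x ∂ν := integral_mono (cont_integrable ν (hu.mul hk))
      (cont_integrable ν (continuous_const.mul hk))
      fun x => mul_le_mul_of_nonneg_right (abs_le.1 (hB x)).2 (hk0 x)
    have h2 : ∫ x, (-B) * k x ∂ν ≤ b := integral_mono (cont_integrable ν (continuous_const.mul hk))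
      (cont_integrable ν (hu.mul hk))
      fun x => mul_le_mul_of_nonneg_right (abs_le.1 (hB x)).1 (hk0 x)
    rw [integral_const_mul, hk1] at h1 h2
    exact abs_le.2 ⟨by linarith, by linarith⟩
  have h1 := hkey (fun x => l * (u x - b - e)) (by fun_prop)
  refine h1.trans (mul_le_mul_of_nonneg_left ?_ hZ)
  have h2 := integral_exp_le ν k hk hk0 hk1 (fun x => l * (u x - b)) (by fun_prop) (2 * B * l)
    (fun x => by
      rw [abs_mul, abs_of_pos hl]
      have : |u x - b| ≤ 2 * B := (abs_sub _ _).trans (by linarith [hB x])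
      nlinarith) hl1
  have h3 : ∫ x, l * (u x - b) * k x ∂ν = 0 := by
    have : ∀ x, l * (u x - b) * k x = l * (u x * k x) - l * b * k x := fun x => by ring
    simp_rw [this]
    rw [integral_sub, integral_const_mul, integral_const_mul, hk1, ← hb]
    · ring
    · exact cont_integrable ν (by fun_prop)
    · exact cont_integrable ν (by fun_prop)
  rw [h3] at h2
  have h4 : ∫ x, Real.exp (l * (u x - b - e)) * k x ∂ν ≤
      Real.exp (-(l * e - 4 * l ^ 2 * B ^ 2)) := by
    have : ∀ x, Real.exp (l * (u x - b - e)) * k x =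
        Real.exp (-(l * e)) * (Real.exp (l * (u x - b)) * k x) := fun x => by
      rw [← mul_assoc, ← Real.exp_add]; ring_nf
    simp_rw [this]
    rw [integral_const_mul]
    refine (mul_le_mul_of_nonneg_left h2 (Real.exp_pos _).le).trans (le_of_eq ?_)
    rw [← Real.exp_add]; ring_nf
  refine (pow_le_pow_left₀ (integral_nonneg fun x => ?_) h4 s).trans (le_of_eq ?_)
  · exact mul_nonneg (Real.exp_pos _).le (hk0 x)
  · rw [← Real.exp_nat_mul]; ring_nf

lemma ld_lower {s m : ℕ} (hs : 0 < s) (ν : Measure X) [IsFiniteMeasure ν] (φ : Fin s → X → ℂ)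
    (hφ : ∀ i, Continuous (φ i)) (d : ℕ) (hd : 0 < d) (u : Fin m → X → ℝ)
    (hu : ∀ i, Continuous (u i))
    (B : ℝ) (hB0 : 0 < B) (hB : ∀ i x, |u i x| ≤ B) (mv : Fin m → ℝ) (hmv : ∀ i, |mv i| ≤ B)
    (h0 : 0 < Zf ν φ d (Qt u 0)) (I C0 η R : ℝ) (hη : 0 < η) (hR : 0 < R)
    (hI : ∀ t : Fin m → ℝ, ∑ i, t i ^ 2 ≤ R ^ 2 → I ≤ psiF ν φ d u mv t)
    (hC0 : psiF ν φ d u mv 0 ≤ C0) (hRη : C0 - I < η * R ^ 2 / 2)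
    (l e : ℝ) (hl : 0 < l) (hl1 : 2 * B * l ≤ 1) (he : 0 < e)
    (hle : 2 * m * Real.exp (-(s * (l * e - 4 * l ^ 2 * B ^ 2))) ≤ 1 / 2) :
    ∃ b : Fin m → ℝ, (∀ i, (b i - mv i) ^ 2 ≤ 2 * η * (C0 - I)) ∧
      1 / 2 * Real.exp (2 * d * s * (I - e * m * R)) ≤
        ∫ a in {a : Fin s → X | ∀ i, |(∑ j, u i (a j)) - s * b i| ≤ s * e},
          rhoF φ d 0 a ∂(Measure.pi fun _ => ν) := by
  have hdR : (0:ℝ) < d := by exact_mod_cast hd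
  have hsR : (0:ℝ) < s := by exact_mod_cast hs
  have hp : (0:ℝ) < 2 * d * s := by positivity
  have hψc := psiF_continuous hs ν φ hφ d hd u hu B hB mv hmv h0
  set S : Set (Fin m → ℝ) := {t | ∑ i, t i ^ 2 ≤ R ^ 2} with hS
  have hSc : IsCompact S := by
    refine Metric.isCompact_of_isClosed_isBounded
      (isClosed_le (by fun_prop) continuous_const) ?_
    refine (Metric.isBounded_closedBall (x := (0 : Fin m → ℝ)) (r := R)).subset fun t ht => ?_
    rw [mem_closedBall_zero_iff, pi_norm_le_iff_of_nonneg hR.le]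
    intro i
    have h1 : t i ^ 2 ≤ ∑ i, t i ^ 2 :=
      Finset.single_le_sum (f := fun i => t i ^ 2) (fun j _ => sq_nonneg _) (Finset.mem_univ i)
    exact abs_le_of_sq_le_sq (h1.trans ht) hR.le
  obtain ⟨t, htS, htmin⟩ := hSc.exists_isMinOn (f := fun t => psiF ν φ d u mv t +
      η / 2 * ∑ l, t l ^ 2) ⟨0, by simp [hS, sq_nonneg]⟩ (by fun_prop)
  have hmin0 : ∀ t' ∈ S, psiF ν φ d u mv t + η / 2 * ∑ l, t l ^ 2 ≤
      psiF ν φ d u mv t' + η / 2 * ∑ l, t' l ^ 2 := fun t' h' => htmin h'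
  have hIt := hI t htS
  have hg0 := hmin0 0 (by simp [hS, sq_nonneg])
  simp only [Pi.zero_apply, ne_eq, OfNat.ofNat_ne_zero, not_false_eq_true, zero_pow,
    Finset.sum_const_zero, mul_zero, add_zero] at hg0
  have hsum : η / 2 * ∑ l, t l ^ 2 ≤ C0 - I := by linarith
  have hhnt : ∑ l, t l ^ 2 < R ^ 2 := by
    by_contra hcon
    push Not at hcon
    nlinarith
  have hZt : 0 < Zf ν φ d (Qt u t) := Zf_pos_all ν φ hφ d u hu B hB 0 t h0
  obtain ⟨k, hk, hk0, hk1, hkey⟩ := tilt_key hs ν φ hφ d (Qt u t) (Qt_cont u hu t) hZt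
  have hb : ∀ i, ∫ x, u i x * k x ∂ν = mv i + η * t i := by
    intro i
    have hop : ∀ᶠ r in 𝓝 (0:ℝ), ∑ l, (Function.update t i (t i + r)) l ^ 2 < R ^ 2 := by
      have hc : Continuous fun r : ℝ => ∑ l, (Function.update t i (t i + r)) l ^ 2 := by
        refine continuous_finsetSum _ fun l _ => Continuous.pow ?_ 2
        exact (continuous_apply l).comp (continuous_const.update i (by fun_prop))
      refine hc.continuousAt.eventually_lt continuousAt_const ?_
      simpa using hhnt
    obtain ⟨r0, hr0, hr⟩ := Metric.eventually_nhds_iff.1 hop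
    refine first_order hs ν φ hφ d hd u hu B hB0 hB mv t hZt η k hk hk0 hk1 hkey i r0 hr0 ?_
    intro r hrr
    refine hmin0 _ (hr ?_).le
    simpa using hrr
  refine ⟨fun i => mv i + η * t i, fun i => ?_, ?_⟩
  · have h1 : t i ^ 2 ≤ ∑ i, t i ^ 2 :=
      Finset.single_le_sum (f := fun i => t i ^ 2) (fun j _ => sq_nonneg _) (Finset.mem_univ i)
    have : (mv i + η * t i - mv i) ^ 2 = η * (η * t i ^ 2) := by ring
    rw [this]
    have : η * t i ^ 2 ≤ 2 * (C0 - I) := by nlinarith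
    nlinarith
  set N : Set (Fin s → X) := {a | ∀ i, |(∑ j, u i (a j)) - s * (mv i + η * t i)| ≤ s * e} with hN
  have hNc : IsClosed N := by
    rw [hN, Set.setOf_forall]
    refine isClosed_iInter fun i => isClosed_le ?_ continuous_const
    refine Continuous.abs (Continuous.sub (continuous_finsetSum _ fun j _ => ?_) continuous_const)
    exact (hu i).comp (continuous_apply j)
  set P := Measure.pi fun _ : Fin s => ν with hP
  set ρ := rhoF φ d (Qt u t) with hρ
  have hρc : Continuous ρ := rhoF_cont φ hφ d _ (Qt_cont u hu t)
  -- the tail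
  set U : Fin m → (Fin s → X) → ℝ := fun i a =>
    ρ a * ∏ j, Real.exp (l * (u i (a j) - (∫ x, u i x * k x ∂ν) - e)) with hU
  set L : Fin m → (Fin s → X) → ℝ := fun i a =>
    ρ a * ∏ j, Real.exp (l * (-u i (a j) - (∫ x, -u i x * k x ∂ν) - e)) with hL
  have hUc : ∀ i, Continuous (U i) := fun i => hρc.mul
    (cont_prod_apply (fun x => Real.exp (l * (u i x - (∫ x, u i x * k x ∂ν) - e))) (by
      have := hu i; fun_prop))
  have hLc : ∀ i, Continuous (L i) := fun i => hρc.mul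
    (cont_prod_apply (fun x => Real.exp (l * (-u i x - (∫ x, -u i x * k x ∂ν) - e))) (by
      have := hu i; fun_prop))
  set q := Zf ν φ d (Qt u t) * Real.exp (-(s * (l * e - 4 * l ^ 2 * B ^ 2))) with hq
  have hUi : ∀ i, ∫ a, U i a ∂P ≤ q := fun i =>
    conc_one ν ρ _ hZt.le k hk hk0 hk1 hkey (u i) (hu i) B hB0 (hB i) l e hl hl1
  have hLi : ∀ i, ∫ a, L i a ∂P ≤ q := fun i =>
    conc_one ν ρ _ hZt.le k hk hk0 hk1 hkey (fun x => - u i x) (hu i).neg B hB0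
      (fun x => by rw [abs_neg]; exact hB i x) l e hl hl1
  have hU0 : ∀ i a, 0 ≤ U i a := fun i a => mul_nonneg (rhoF_nonneg _ _ _ _)
    (Finset.prod_nonneg fun _ _ => (Real.exp_pos _).le)
  have hL0 : ∀ i a, 0 ≤ L i a := fun i a => mul_nonneg (rhoF_nonneg _ _ _ _)
    (Finset.prod_nonneg fun _ _ => (Real.exp_pos _).le)
  have htail : ∀ a ∈ Nᶜ, ρ a ≤ ∑ i, (U i a + L i a) := by
    intro a ha
    simp only [hN, Set.mem_compl_iff, Set.mem_setOf_eq, not_forall, not_le] at ha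
    obtain ⟨i, hi⟩ := ha
    refine le_trans ?_ (Finset.single_le_sum (f := fun i => U i a + L i a)
      (fun i _ => add_nonneg (hU0 i a) (hL0 i a)) (Finset.mem_univ i))
    have hneg : ∫ x, -u i x * k x ∂ν = -(mv i + η * t i) := by
      simp_rw [neg_mul]
      rw [integral_neg, hb]
    rcases lt_abs.1 hi with h | h
    · refine le_trans ?_ (le_add_of_nonneg_right (hL0 i a))
      refine le_mul_of_one_le_right (rhoF_nonneg _ _ _ _) ?_
      rw [← Real.exp_sum, hb, Real.one_le_exp_iff, ← Finset.mul_sum]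
      refine mul_nonneg hl.le ?_
      simp only [Finset.sum_sub_distrib, Finset.sum_const, Finset.card_univ, Fintype.card_fin,
        nsmul_eq_mul]
      linarith
    · refine le_trans ?_ (le_add_of_nonneg_left (hU0 i a))
      refine le_mul_of_one_le_right (rhoF_nonneg _ _ _ _) ?_
      rw [← Real.exp_sum, hneg, Real.one_le_exp_iff, ← Finset.mul_sum]
      refine mul_nonneg hl.le ?_
      simp only [Finset.sum_sub_distrib, Finset.sum_const, Finset.card_univ, Fintype.card_fin,
        nsmul_eq_mul, Finset.sum_neg_distrib]
      linarith
  have hcompl : ∫ a in Nᶜ, ρ a ∂P ≤ Zf ν φ d (Qt u t) / 2 := by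
    have hsc : Continuous fun a => ∑ i, (U i a + L i a) :=
      continuous_finsetSum _ fun i _ => (hUc i).add (hLc i)
    calc ∫ a in Nᶜ, ρ a ∂P ≤ ∫ a in Nᶜ, ∑ i, (U i a + L i a) ∂P :=
          setIntegral_mono_on (cont_integrable P hρc).integrableOn
            (cont_integrable P hsc).integrableOn hNc.measurableSet.compl htail
      _ ≤ ∫ a, ∑ i, (U i a + L i a) ∂P := setIntegral_le_integral (cont_integrable P hsc)
          (Filter.Eventually.of_forall fun a =>
            Finset.sum_nonneg fun i _ => add_nonneg (hU0 i a) (hL0 i a))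
      _ = ∑ i, (∫ a, U i a ∂P + ∫ a, L i a ∂P) := by
          rw [integral_finsetSum (f := fun i a => U i a + L i a) _
            fun i _ => cont_integrable P ((hUc i).add (hLc i))]
          exact Finset.sum_congr rfl fun i _ =>
            integral_add (cont_integrable P (hUc i)) (cont_integrable P (hLc i))
      _ ≤ ∑ i : Fin m, (q + q) := Finset.sum_le_sum fun i _ => add_le_add (hUi i) (hLi i)
      _ = Zf ν φ d (Qt u t) * (2 * m * Real.exp (-(s * (l * e - 4 * l ^ 2 * B ^ 2)))) := by
          simp [hq]; ring
      _ ≤ _ := by nlinarith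
  have hhalf : Zf ν φ d (Qt u t) / 2 ≤ ∫ a in N, ρ a ∂P := by
    have := integral_add_compl hNc.measurableSet (cont_integrable P hρc)
    have h2 : ∫ a, ρ a ∂P = Zf ν φ d (Qt u t) := rfl
    linarith
  -- lower bound of Zf
  have hZlow : Real.exp (2 * d * s * (I - ∑ i, t i * mv i)) ≤ Zf ν φ d (Qt u t) := by
    rw [← Real.le_log_iff_exp_le hZt]
    have h1 : I ≤ Real.log (Zf ν φ d (Qt u t)) / (2 * d * s) + ∑ i, t i * mv i := hIt
    have h2 : I - ∑ i, t i * mv i ≤ Real.log (Zf ν φ d (Qt u t)) / (2 * d * s) := by linarith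
    rwa [le_div_iff₀ hp, mul_comm] at h2
  set c := Real.exp (2 * d * s * (∑ i, t i * mv i - e * m * R)) with hc
  have hpt : ∀ a ∈ N, ρ a * c ≤ rhoF φ d 0 a := by
    intro a ha
    have h1 := rhoF_shift φ d (Qt u t) (fun x => - Qt u t x) a
    have h2 : (fun x => Qt u t x + - Qt u t x) = 0 := by ext; simp
    rw [h2] at h1
    rw [h1]
    refine mul_le_mul_of_nonneg_left ?_ (rhoF_nonneg _ _ _ _)
    rw [← Real.exp_sum, hc, Real.exp_le_exp]
    have h3 : ∑ j, -(2 * d : ℝ) * -Qt u t (a j) = 2 * d * ∑ i, t i * ∑ j, u i (a j) := by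
      simp only [Qt, neg_mul_neg]
      rw [← Finset.mul_sum, Finset.sum_comm]
      simp_rw [Finset.mul_sum]
    rw [h3, mul_assoc (2 * (d:ℝ)) s]
    refine mul_le_mul_of_nonneg_left ?_ (by positivity)
    have h4 : ∀ i, s * (t i * mv i - e * R) ≤ t i * ∑ j, u i (a j) := by
      intro i
      have h5 := ha i
      have h6 : |t i| ≤ R := by
        have h1 : t i ^ 2 ≤ ∑ i, t i ^ 2 :=
          Finset.single_le_sum (f := fun i => t i ^ 2) (fun j _ => sq_nonneg _) (Finset.mem_univ i)
        exact abs_le_of_sq_le_sq (h1.trans htS) hR.le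
      have h7 : |t i * ((∑ j, u i (a j)) - s * (mv i + η * t i))| ≤ R * (s * e) := by
        rw [abs_mul]; exact mul_le_mul h6 h5 (abs_nonneg _) hR.le
      have h8 := (abs_le.1 h7).1
      have h9 : 0 ≤ s * (η * t i ^ 2) := by positivity
      nlinarith
    calc s * (∑ i, t i * mv i - e * m * R) = ∑ i, s * (t i * mv i - e * R) := by
          rw [← Finset.mul_sum, Finset.sum_sub_distrib]; simp; ring_nf; simp
      _ ≤ _ := Finset.sum_le_sum fun i _ => h4 i
  calc 1 / 2 * Real.exp (2 * d * s * (I - e * m * R))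
      = Real.exp (2 * d * s * (I - ∑ i, t i * mv i)) / 2 * c := by
        have : 2 * d * s * (I - e * m * R) = 2 * d * s * (I - ∑ i, t i * mv i) +
          2 * d * s * (∑ i, t i * mv i - e * m * R) := by ring
        rw [this, Real.exp_add]; ring
    _ ≤ Zf ν φ d (Qt u t) / 2 * c := by
        refine mul_le_mul_of_nonneg_right ?_ (Real.exp_pos _).le
        linarith
    _ ≤ (∫ a in N, ρ a ∂P) * c := mul_le_mul_of_nonneg_right hhalf (Real.exp_pos _).le
    _ = ∫ a in N, ρ a * c ∂P := (integral_mul_const _ _).symm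
    _ ≤ _ := setIntegral_mono_on (cont_integrable P (hρc.mul continuous_const)).integrableOn
        (cont_integrable P (rhoF_cont φ hφ d 0 continuous_const)).integrableOn
        hNc.measurableSet hpt

end PartB2

end

section
section PartC1

def dV {X : Type*} (f : ℕ → X → ℂ) (k : ℕ) (a : Fin k → X) : ℂ :=
  Matrix.det (Matrix.of fun i j : Fin k => f i (a j))

lemma dV_snoc {X : Type*} (f : ℕ → X → ℂ) (k : ℕ) (a : Fin k → X) (h : dV f k a ≠ 0) :
    ∃ c : Fin k → ℂ, ∀ z, dV f (k + 1) (Fin.snoc a z) =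
      dV f k a * (f k z + ∑ i, c i * f i z) := by
  set A : X → Matrix (Fin (k+1)) (Fin (k+1)) ℂ := fun z =>
    Matrix.of fun i j => f i ((Fin.snoc a z : Fin (k+1) → X) j) with hA
  set mn : Fin (k+1) → ℂ := fun i =>
    Matrix.det (Matrix.of fun (l j : Fin k) => f (i.succAbove l) (a j)) with hmn
  have hsub : ∀ z (i : Fin (k+1)), (A z).submatrix i.succAbove (Fin.last k).succAbove =
      Matrix.of fun (l j : Fin k) => f (i.succAbove l) (a j) := by
    intro z i
    ext l j
    simp [hA]
  refine ⟨fun i => (-1) ^ ((i : ℕ) + k) * mn i.castSucc / dV f k a, fun z => ?_⟩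
  have h1 : dV f (k + 1) (Fin.snoc a z) = (A z).det := rfl
  rw [h1, Matrix.det_succ_column _ (Fin.last k), Fin.sum_univ_castSucc]
  simp_rw [hsub]
  have hlast : Matrix.det (Matrix.of fun (l j : Fin k) => f ((Fin.last k).succAbove l) (a j)) =
      dV f k a := by
    simp [dV]
  rw [hlast, mul_add, Finset.mul_sum, add_comm]
  congr 1
  · simp [hA, ← two_mul, mul_comm]
  · refine Finset.sum_congr rfl fun i _ => ?_
    simp only [hA, Matrix.of_apply, Fin.snoc_last, Fin.val_castSucc, Fin.val_last, hmn]
    field_simp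

lemma cheb_exist {X : Type*} [TopologicalSpace X] [CompactSpace X] [Nonempty X] (f : ℕ → X → ℂ)
    (hf : ∀ i, Continuous (f i)) (s : ℕ)
    (hind : ∀ k < s, ∀ c : Fin k → ℂ, ∃ x, f k x + ∑ i, c i * f i x ≠ 0) :
    ∃ (c : ∀ k : ℕ, Fin k → ℂ) (C : ℕ → ℝ),
      (∀ k < s, 0 < C k ∧ ∀ x, ‖f k x + ∑ i, c k i * f i x‖ ≤ C k) ∧
      ∃ a : Fin s → X, ∏ k ∈ Finset.range s, C k ≤ ‖dV f s a‖ := by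
  have hmax : ∀ k, ∃ a : Fin k → X, ∀ b, ‖dV f k b‖ ≤ ‖dV f k a‖ := by
    intro k
    have hc : Continuous fun a => ‖dV f k a‖ := by
      refine Continuous.norm (Continuous.matrix_det (continuous_matrix fun i j => ?_))
      exact (hf i).comp (continuous_apply j)
    obtain ⟨a, -, ha⟩ := isCompact_univ.exists_isMaxOn (s := (Set.univ : Set (Fin k → X)))
      Set.univ_nonempty hc.continuousOn
    exact ⟨a, fun b => ha (Set.mem_univ b)⟩
  choose a ha using hmax
  have hpos : ∀ k ≤ s, 0 < ‖dV f k (a k)‖ := by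
    intro k
    induction k with
    | zero => intro _; simp [dV]
    | succ k ih =>
      intro hk
      have h0 := norm_pos_iff.1 (ih (by omega))
      obtain ⟨c, hc⟩ := dV_snoc f k (a k) h0
      obtain ⟨x, hx⟩ := hind k (by omega) c
      refine lt_of_lt_of_le ?_ (ha (k+1) (Fin.snoc (a k) x))
      rw [hc, norm_mul]
      exact mul_pos (norm_pos_iff.2 h0) (norm_pos_iff.2 hx)
  have hc : ∀ k, ∃ c : Fin k → ℂ, k < s → ∀ z, dV f (k + 1) (Fin.snoc (a k) z) =
      dV f k (a k) * (f k z + ∑ i, c i * f i z) := by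
    intro k
    by_cases hk : k < s
    · obtain ⟨c, hc⟩ := dV_snoc f k (a k) (norm_pos_iff.1 (hpos k hk.le))
      exact ⟨c, fun _ => hc⟩
    · exact ⟨0, fun h => absurd h hk⟩
  choose c hc using hc
  refine ⟨c, fun k => ‖dV f (k+1) (a (k+1))‖ / ‖dV f k (a k)‖, fun k hk => ⟨?_, fun x => ?_⟩,
    a s, ?_⟩
  · exact div_pos (hpos _ (by omega)) (hpos _ (by omega))
  · rw [le_div_iff₀ (hpos k hk.le), mul_comm, ← norm_mul, ← hc k hk x]
    exact ha _ _
  · have : ∀ r ≤ s, ∏ k ∈ Finset.range r, ‖dV f (k+1) (a (k+1))‖ / ‖dV f k (a k)‖ =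
        ‖dV f r (a r)‖ := by
      intro r
      induction r with
      | zero => intro _; simp [dV]
      | succ r ih =>
        intro hr
        rw [Finset.prod_range_succ, ih (by omega)]
        have := (hpos r (by omega)).ne'
        field_simp
    exact (this s le_rfl).le

/-- the finite set of multi-indices of degree at most `d` -/
def Tset (n d : ℕ) : Finset (Fin n →₀ ℕ) :=
  (Finset.range (d + 1)).biUnion fun k => Finset.finsuppAntidiag Finset.univ k

lemma mem_Tset {n d : ℕ} {α : Fin n →₀ ℕ} : α ∈ Tset n d ↔ ∑ i, α i ≤ d := by
  simp [Tset, Nat.lt_succ_iff]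

lemma Tset_card {n d : ℕ} {E : Fin (sdim n d) → (Fin n → ℕ)} (hE : IsEnum n d E) :
    (Tset n d).card = sdim n d := by
  have : Tset n d = Finset.univ.image fun i => Finsupp.equivFunOnFinite.symm (E i) := by
    ext α
    rw [mem_Tset, hE.2 α]
    simp only [Set.mem_range, Finset.mem_image, Finset.mem_univ, true_and]
    constructor
    · rintro ⟨y, hy⟩; exact ⟨y, by rw [hy]; exact Finsupp.equivFunOnFinite.symm_apply_apply α⟩
    · rintro ⟨y, hy⟩; exact ⟨y, by rw [← hy]; rfl⟩
  rw [this, Finset.card_image_of_injective, Finset.card_univ, Fintype.card_fin]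
  exact Finsupp.equivFunOnFinite.symm.injective.comp hE.1

/-- monomial evaluation -/
def mev {n : ℕ} (α : Fin n →₀ ℕ) (z : Pt n) : ℂ := ∏ k, z k ^ α k

lemma exists_sorted {n d : ℕ} {E : Fin (sdim n d) → (Fin n → ℕ)} (hE : IsEnum n d E) :
    ∃ e : Fin (sdim n d) → (Fin n →₀ ℕ),
      (∀ i j, i < j → MonomialOrder.lex.toSyn (e i) < MonomialOrder.lex.toSyn (e j)) ∧
      (∀ α, α ∈ Tset n d ↔ ∃ i, e i = α) ∧
      ∀ a : Fin (sdim n d) → Pt n, ‖VDM n d E a‖ =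
        ‖Matrix.det (Matrix.of fun i j => mev (e i) (a j))‖ := by
  classical
  set m : MonomialOrder (Fin n) := MonomialOrder.lex with hm
  set S : Finset m.syn := (Tset n d).map m.toSyn.toEquiv.toEmbedding with hS
  have hcard : S.card = sdim n d := by rw [hS, Finset.card_map, Tset_card hE]
  set o := S.orderEmbOfFin hcard with ho
  have hmem : ∀ α, α ∈ Tset n d ↔ ∃ i, m.toSyn.symm (o i) = α := by
    intro α
    have h1 : α ∈ Tset n d ↔ m.toSyn α ∈ (S : Set m.syn) := by
      simp [hS]
    rw [h1, ← Finset.range_orderEmbOfFin S hcard, Set.mem_range]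
    refine exists_congr fun i => ?_
    rw [AddEquiv.symm_apply_eq]
  refine ⟨fun i => m.toSyn.symm (o i), fun i j hij => ?_, hmem, fun a => ?_⟩
  · simpa using hij
  have hσ : ∀ i, ∃ j, (m.toSyn.symm (o j)) = Finsupp.equivFunOnFinite.symm (E i) := by
    intro i
    rw [← hmem, mem_Tset]
    exact (hE.2 (E i)).2 ⟨i, rfl⟩
  choose σ hσ using hσ
  have hinj : Function.Injective σ := by
    intro i j hij
    have h1 := hσ i
    rw [hij, hσ j] at h1
    exact (hE.1 (Finsupp.equivFunOnFinite.symm.injective h1)).symm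
  have hbij : Function.Bijective σ := Finite.injective_iff_bijective.1 hinj
  have hmat : (Matrix.of fun i j => ∏ k, (a j k) ^ (E i k)) =
      (Matrix.of fun i j => mev (m.toSyn.symm (o i)) (a j)).submatrix (Equiv.ofBijective σ hbij) id := by
    ext i j
    simp only [Matrix.of_apply, Matrix.submatrix_apply, mev, Equiv.ofBijective_apply, hσ i]
    rfl
  rw [VDM, hmat, Matrix.det_permute, norm_mul]
  rcases Int.units_eq_one_or (Equiv.Perm.sign (Equiv.ofBijective σ hbij)) with h | h <;> simp [h]

end PartC1

end

section
section PartC2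

/-- evaluation of a polynomial at a point -/
def pev {n : ℕ} (p : MvPolynomial (Fin n) ℂ) (z : Pt n) : ℂ := MvPolynomial.eval (fun k => z k) p

lemma pev_monomial {n : ℕ} (α : Fin n →₀ ℕ) (c : ℂ) (z : Pt n) :
    pev (MvPolynomial.monomial α c) z = c * mev α z := by
  simp [pev, mev, MvPolynomial.eval_monomial, Finsupp.prod_fintype]

lemma pev_cont {n : ℕ} (p : MvPolynomial (Fin n) ℂ) : Continuous (pev p) := by
  unfold pev
  exact (MvPolynomial.continuous_eval p).comp (by fun_prop)

lemma mev_cont {n : ℕ} (α : Fin n →₀ ℕ) : Continuous (mev α) := by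
  unfold mev
  fun_prop

lemma poly_eq_zero {n : ℕ} {H : Set (Pt n)} (hH : (interior H).Nonempty)
    (p : MvPolynomial (Fin n) ℂ) (hp : ∀ z ∈ H, pev p z = 0) : p = 0 := by
  obtain ⟨c, hc⟩ := hH
  set e := EuclideanSpace.equiv (Fin n) ℂ with he
  have hopen : IsOpen (e.symm ⁻¹' (interior H)) := isOpen_interior.preimage e.symm.continuous
  obtain ⟨r, hr, hball⟩ := Metric.isOpen_iff.1 hopen (e c) (by simpa using hc)
  have := MvPolynomial.funext_set (p := p) (q := 0) (fun i => Metric.ball (e c i) r)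
    (fun i => by
      have hmem : Metric.ball (e c i) r ∈ 𝓝 (e c i) := Metric.ball_mem_nhds _ hr
      exact infinite_of_mem_nhds _ hmem) (by
      intro x hx
      have hx' : x ∈ Metric.ball (e c) r := by
        rw [← ball_pi _ hr] at *
        exact hx
      have h1 : e.symm x ∈ H := interior_subset (hball hx')
      have h2 := hp _ h1
      simpa [pev, he] using h2)
  exact this

lemma cheb_poly {n d : ℕ} {E : Fin (sdim n d) → (Fin n → ℕ)} (hE : IsEnum n d E)
    {H : Set (Pt n)} (hHc : IsCompact H) (hHi : (interior H).Nonempty) (Q : H → ℝ)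
    (hQ : Continuous Q) :
    ∃ (p : (Fin n →₀ ℕ) → MvPolynomial (Fin n) ℂ) (C : (Fin n →₀ ℕ) → ℝ),
      (∀ α ∈ Tset n d, MonomialOrder.lex.Monic (p α) ∧ MonomialOrder.lex.degree (p α) = α ∧
        (p α).totalDegree ≤ d ∧ 0 < C α ∧
        ∀ z : H, ‖pev (p α) z‖ * Real.exp (-(d:ℝ) * Q z) ≤ C α) ∧
      ∃ a : Fin (sdim n d) → H, ∏ α ∈ Tset n d, C α ≤
        ‖VDM n d E (fun j => (a j : Pt n))‖ * ∏ j, Real.exp (-(d:ℝ) * Q (a j)) := by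
  classical
  obtain ⟨e, hlt, hmem, hV⟩ := exists_sorted hE
  have : CompactSpace H := isCompact_iff_compactSpace.1 hHc
  have : Nonempty H := ⟨⟨_, interior_subset hHi.choose_spec⟩⟩
  have : Nonempty (Fin (sdim n d)) := ⟨⟨0, sdim_pos n d⟩⟩
  set m : MonomialOrder (Fin n) := MonomialOrder.lex with hm
  have hinj : Function.Injective e := by
    intro i j hij
    rcases lt_trichotomy i j with h | h | h
    · exact absurd (hlt _ _ h) (by rw [hij]; exact lt_irrefl _)
    · exact h
    · exact absurd (hlt _ _ h) (by rw [hij]; exact lt_irrefl _)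
  set f : ℕ → H → ℂ := fun i z => if h : i < sdim n d then
    mev (e ⟨i, h⟩) z * (Real.exp (-(d:ℝ) * Q z) : ℂ) else 0 with hf
  set P : (c : ∀ k : ℕ, Fin k → ℂ) → Fin (sdim n d) → MvPolynomial (Fin n) ℂ := fun c k =>
    MvPolynomial.monomial (e k) 1 + ∑ i : Fin k, MvPolynomial.monomial
      (e ⟨i, i.2.trans k.2⟩) (c k i) with hP
  have hfP : ∀ c (k : Fin (sdim n d)) (z : H), f k z + ∑ i : Fin k, c k i * f i z =
      pev (P c k) z * (Real.exp (-(d:ℝ) * Q z) : ℂ) := by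
    intro c k z
    have h1 : pev (P c k) z = mev (e k) z + ∑ i : Fin k, c k i * mev (e ⟨i, i.2.trans k.2⟩) z := by
      simp only [hP]
      rw [pev, map_add, map_sum]
      have h2 := fun α c => pev_monomial (n := n) α c z
      simp only [pev] at h2
      simp only [h2, one_mul]
    rw [h1, add_mul, Finset.sum_mul]
    congr 1
    · simp [hf]
    · refine Finset.sum_congr rfl fun i _ => ?_
      have : (i : ℕ) < sdim n d := i.2.trans k.2
      simp [hf, this, mul_assoc]
  have hcoeff : ∀ c k, (P c k).coeff (e k) = 1 := by
    intro c k
    simp only [hP, MvPolynomial.coeff_add, MvPolynomial.coeff_monomial, if_true,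
      MvPolynomial.coeff_sum]
    rw [Finset.sum_eq_zero, add_zero]
    intro i _
    rw [if_neg]
    intro h
    have := congrArg Fin.val (hinj h)
    have h3 := i.2
    simp only at this
    omega
  have hsupp : ∀ c k, ∀ α ∈ (P c k).support, ∃ i ≤ k, α = e i := by
    intro c k α hα
    by_contra hcon
    push Not at hcon
    rw [MvPolynomial.mem_support_iff] at hα
    apply hα
    simp only [hP, MvPolynomial.coeff_add, MvPolynomial.coeff_monomial, MvPolynomial.coeff_sum]
    rw [if_neg (fun h => hcon k le_rfl h.symm), zero_add]
    refine Finset.sum_eq_zero fun i _ => ?_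
    rw [if_neg]
    intro h
    exact hcon _ (le_of_lt (by exact i.2)) h.symm
  have hdeg : ∀ c k, m.degree (P c k) = e k := by
    intro c k
    apply m.toSyn.injective
    apply le_antisymm
    · rw [MonomialOrder.degree_le_iff]
      intro α hα
      obtain ⟨i, hik, rfl⟩ := hsupp c k α hα
      rcases hik.lt_or_eq with h | h
      · exact (hlt _ _ h).le
      · rw [h]
    · apply MonomialOrder.le_degree
      rw [MvPolynomial.mem_support_iff, hcoeff]
      exact one_ne_zero
  obtain ⟨c, C, hC, a, ha⟩ := cheb_exist f (fun i => by
      simp only [hf]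
      split_ifs with h
      · exact ((mev_cont _).comp continuous_subtype_val).mul
          (Complex.continuous_ofReal.comp (by fun_prop))
      · exact continuous_const) (sdim n d) (by
      intro k hk c
      by_contra hcon
      push Not at hcon
      set c' : ∀ k : ℕ, Fin k → ℂ := fun l => if h : l = k then h ▸ c else 0 with hc'
      have hck : c' k = c := by simp [hc']
      have h0 : P c' ⟨k, hk⟩ = 0 := by
        refine poly_eq_zero hHi _ fun z hz => ?_
        have h1 := hfP c' ⟨k, hk⟩ ⟨z, hz⟩
        simp only [hck] at h1
        rw [hcon] at h1
        have h2 : (Real.exp (-(d:ℝ) * Q ⟨z, hz⟩) : ℂ) ≠ 0 := by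
          exact_mod_cast (Real.exp_pos _).ne'
        exact (mul_eq_zero.1 h1.symm).resolve_right h2
      have := hcoeff c' ⟨k, hk⟩
      rw [h0] at this
      simp at this)
  set idx := Function.invFun e with hidx
  have hidxe : ∀ i, idx (e i) = i := Function.leftInverse_invFun hinj
  refine ⟨fun α => P c (idx α), fun α => C (idx α), ?_, a, ?_⟩
  · intro α hα
    obtain ⟨i, rfl⟩ := (hmem α).1 hα
    simp only [hidxe]
    refine ⟨?_, hdeg c i, ?_, (hC i i.2).1, fun z => ?_⟩
    · rw [MonomialOrder.Monic, MonomialOrder.leadingCoeff, hdeg, hcoeff]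
    · refine Finset.sup_le fun β hβ => ?_
      obtain ⟨j, -, rfl⟩ := hsupp c i β hβ
      have h1 := mem_Tset.1 ((hmem (e j)).2 ⟨j, rfl⟩)
      rwa [Finsupp.sum_fintype _ _ (fun _ => rfl)]
    · have h1 := (hC i i.2).2 z
      rw [hfP, norm_mul, Complex.norm_real, Real.norm_eq_abs, abs_of_pos (Real.exp_pos _)] at h1
      exact h1
  · have hT : Tset n d = Finset.univ.image e := by
      ext α; rw [hmem]; simp
    rw [hT, Finset.prod_image (fun i _ j _ h => hinj h)]
    simp only [hidxe]
    rw [Finset.prod_range] at ha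
    refine ha.trans (le_of_eq ?_)
    rw [hV, dV]
    have : (Matrix.of fun i j : Fin (sdim n d) => f i (a j)) = Matrix.of fun i j =>
        ((fun j => (Real.exp (-(d : ℝ) * Q (a j)) : ℂ)) j) *
        (Matrix.of fun i j => mev (e i) (a j)) i j := by
      ext i j
      simp [hf, mul_comm]
    rw [this, Matrix.det_mul_row, norm_mul, norm_prod, mul_comm]
    congr 1
    refine Finset.prod_congr rfl fun j _ => ?_
    rw [Complex.norm_real, Real.norm_eq_abs, abs_of_pos (Real.exp_pos _)]

lemma cheb_upper {n D : ℕ} {E : Fin (sdim n D) → (Fin n → ℕ)} (hE : IsEnum n D E)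
    {H : Set (Pt n)} (Q : H → ℝ)
    (q : (Fin n →₀ ℕ) → MvPolynomial (Fin n) ℂ) (c : (Fin n →₀ ℕ) → ℝ)
    (hq : ∀ α ∈ Tset n D, MonomialOrder.lex.Monic (q α) ∧ MonomialOrder.lex.degree (q α) = α ∧
        (q α).totalDegree ≤ D ∧
        ∀ z : H, ‖pev (q α) z‖ * Real.exp (-(D:ℝ) * Q z) ≤ c α)
    (a : Fin (sdim n D) → H) :
    ‖VDM n D E (fun j => (a j : Pt n))‖ * ∏ j, Real.exp (-(D:ℝ) * Q (a j)) ≤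
      (sdim n D).factorial * ∏ α ∈ Tset n D, c α := by
  classical
  obtain ⟨e, hlt, hmem, hV⟩ := exists_sorted hE
  set m : MonomialOrder (Fin n) := MonomialOrder.lex with hm
  have hinj : Function.Injective e := by
    intro i j hij
    rcases lt_trichotomy i j with h | h | h
    · exact absurd (hlt _ _ h) (by rw [hij]; exact lt_irrefl _)
    · exact h
    · exact absurd (hlt _ _ h) (by rw [hij]; exact lt_irrefl _)
  have hT : Tset n D = Finset.univ.image e := by
    ext α; rw [hmem]; simp
  have hq' := fun i => hq (e i) ((hmem _).2 ⟨i, rfl⟩)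
  set T : Matrix (Fin (sdim n D)) (Fin (sdim n D)) ℂ :=
    Matrix.of fun i l => (q (e i)).coeff (e l) with hTdef
  set V : Matrix (Fin (sdim n D)) (Fin (sdim n D)) ℂ :=
    Matrix.of fun i j => mev (e i) (a j : Pt n) with hVdef
  have hTdet : T.det = 1 := by
    rw [Matrix.det_of_isLowerTriangular]
    · refine Finset.prod_eq_one fun i _ => ?_
      have h1 := (hq' i).1.coeff_degree
      rw [(hq' i).2.1] at h1
      exact h1
    · intro i j hij
      simp only [hTdef, Matrix.of_apply]
      apply m.coeff_eq_zero_of_lt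
      rw [(hq' i).2.1]
      exact hlt _ _ hij
  have hM : (Matrix.of fun i j => pev (q (e i)) (a j : Pt n)) = T * V := by
    ext i j
    rw [Matrix.mul_apply]
    simp only [Matrix.of_apply, hTdef, hVdef]
    rw [pev, MvPolynomial.eval_eq']
    have hsub : (q (e i)).support ⊆ Tset n D := by
      intro α hα
      rw [mem_Tset]
      have := (MvPolynomial.le_totalDegree hα).trans (hq' i).2.2.1
      rwa [Finsupp.sum_fintype _ _ (fun _ => rfl)] at this
    rw [Finset.sum_subset hsub, hT, Finset.sum_image (fun i _ j _ h => hinj h)]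
    · rfl
    · intro α _ hα
      rw [MvPolynomial.notMem_support_iff.1 hα, zero_mul]
  have hdet : ‖VDM n D E (fun j => (a j : Pt n))‖ =
      ‖Matrix.det (Matrix.of fun i j => pev (q (e i)) (a j : Pt n))‖ := by
    rw [hM, Matrix.det_mul, hTdet, one_mul, hV]
  have hN : ‖VDM n D E (fun j => (a j : Pt n))‖ * ∏ j, Real.exp (-(D:ℝ) * Q (a j)) =
      ‖Matrix.det (Matrix.of fun i j => ((fun j => (Real.exp (-(D : ℝ) * Q (a j)) : ℂ)) j) *
        (Matrix.of fun i j => pev (q (e i)) (a j : Pt n)) i j)‖ := by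
    rw [Matrix.det_mul_row, norm_mul, norm_prod, mul_comm, hdet]
    congr 1
    refine Finset.prod_congr rfl fun j _ => ?_
    rw [Complex.norm_real, Real.norm_eq_abs, abs_of_pos (Real.exp_pos _)]
  rw [hN, Matrix.det_apply]
  have hterm : ∀ σ : Equiv.Perm (Fin (sdim n D)),
      ‖Equiv.Perm.sign σ • ∏ i, (Matrix.of fun i j =>
        ((fun j => (Real.exp (-(D : ℝ) * Q (a j)) : ℂ)) j) *
        (Matrix.of fun i j => pev (q (e i)) (a j : Pt n)) i j) (σ i) i‖ ≤ ∏ i, c (e i) := by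
    intro σ
    have h1 : ∀ x : ℂ, ‖Equiv.Perm.sign σ • x‖ = ‖x‖ := by
      intro x
      rcases Int.units_eq_one_or (Equiv.Perm.sign σ) with h | h <;> simp [h]
    rw [h1, norm_prod, ← Equiv.prod_comp σ (fun i => c (e i))]
    refine Finset.prod_le_prod (fun _ _ => norm_nonneg _) fun i _ => ?_
    simp only [Matrix.of_apply]
    rw [norm_mul, Complex.norm_real, Real.norm_eq_abs, abs_of_pos (Real.exp_pos _), mul_comm]
    exact (hq' (σ i)).2.2.2 (a i)
  refine (norm_sum_le _ _).trans ((Finset.sum_le_sum fun σ _ => hterm σ).trans (le_of_eq ?_))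
  rw [Finset.sum_const, Finset.card_univ, Fintype.card_perm, Fintype.card_fin, nsmul_eq_mul,
    hT, Finset.prod_image (fun i _ j _ h => hinj h)]

end PartC2

end

section
section PartC3

/-- the real valued weighted Vandermonde -/
def vq (n d : ℕ) (E : Fin (sdim n d) → (Fin n → ℕ)) {H : Set (Pt n)} (Q : H → ℝ)
    (a : Fin (sdim n d) → H) : ℝ :=
  ‖VDM n d E (fun j => (a j : Pt n))‖ * ∏ j, Real.exp (-(d : ℝ) * Q (a j))

lemma vq_nonneg (n d : ℕ) (E : Fin (sdim n d) → (Fin n → ℕ)) {H : Set (Pt n)} (Q : H → ℝ)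
    (a : Fin (sdim n d) → H) : 0 ≤ vq n d E Q a :=
  mul_nonneg (norm_nonneg _) (Finset.prod_nonneg fun _ _ => (Real.exp_pos _).le)

def divk {n : ℕ} (k : ℕ) (γ : Fin n →₀ ℕ) : Fin n →₀ ℕ := γ.mapRange (· / k) (Nat.zero_div k)
def modk {n : ℕ} (k : ℕ) (γ : Fin n →₀ ℕ) : Fin n →₀ ℕ := γ.mapRange (· % k) (Nat.zero_mod k)

lemma div_mod_eq {n : ℕ} (k : ℕ) (γ : Fin n →₀ ℕ) : k • divk k γ + modk k γ = γ := by
  ext i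
  simp [divk, modk, Nat.div_add_mod]

lemma modk_sum {n k : ℕ} (hk : 0 < k) (γ : Fin n →₀ ℕ) : ∑ i, modk k γ i ≤ n * k := by
  calc ∑ i, modk k γ i ≤ ∑ _i : Fin n, k :=
        Finset.sum_le_sum fun i _ => by simpa [modk] using (Nat.mod_lt _ hk).le
    _ = n * k := by simp

lemma fibre_card {n d D k : ℕ} (hk : 0 < k) (hD : k * (d + n) ≤ D) {α : Fin n →₀ ℕ}
    (hα : α ∈ Tset n d) :
    (((Tset n D).filter fun γ => divk k γ ∈ Tset n d).filter fun γ => divk k γ = α).card = k ^ n := by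
  have : k ^ n = (Finset.univ : Finset (Fin n → Fin k)).card := by simp
  rw [this]
  symm
  have hdiv : ∀ ρ : Fin n → Fin k, divk k (k • α +
      (Finsupp.equivFunOnFinite.symm fun i => (ρ i : ℕ))) = α := by
    intro ρ
    ext i
    simp only [divk, Finsupp.mapRange_apply, Finsupp.add_apply, Finsupp.smul_apply, smul_eq_mul,
      Finsupp.equivFunOnFinite_symm_apply_apply]
    rw [Nat.mul_add_div hk, Nat.div_eq_of_lt (ρ i).2, add_zero]
  refine Finset.card_bij (fun ρ _ => k • α + Finsupp.equivFunOnFinite.symm fun i => (ρ i : ℕ))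
    ?_ ?_ ?_
  · intro ρ _
    rw [Finset.mem_filter, Finset.mem_filter, hdiv]
    refine ⟨⟨?_, hα⟩, rfl⟩
    rw [mem_Tset] at hα ⊢
    simp only [Finsupp.add_apply, Finsupp.smul_apply, smul_eq_mul,
      Finsupp.equivFunOnFinite_symm_apply_apply]
    rw [Finset.sum_add_distrib, ← Finset.mul_sum]
    have h1 : ∑ i, (ρ i : ℕ) ≤ ∑ _i : Fin n, k := Finset.sum_le_sum fun i _ => (ρ i).2.le
    simp only [Finset.sum_const, Finset.card_univ, Fintype.card_fin, smul_eq_mul] at h1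
    nlinarith
  · intro ρ _ ρ' _ h
    have h1 := add_left_cancel h
    have h2 := Finsupp.equivFunOnFinite.symm.injective h1
    funext i
    exact Fin.ext (congrFun h2 i)
  · intro γ hγ
    rw [Finset.mem_filter, Finset.mem_filter] at hγ
    refine ⟨fun i => ⟨γ i % k, Nat.mod_lt _ hk⟩, Finset.mem_univ _, ?_⟩
    rw [← hγ.2]
    conv_rhs => rw [← div_mod_eq k γ]
    congr 1
    ext i
    simp [modk]

lemma pev_mul {n : ℕ} (p q : MvPolynomial (Fin n) ℂ) (z : Pt n) :
    pev (p * q) z = pev p z * pev q z := by simp [pev]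

lemma pev_pow {n : ℕ} (p : MvPolynomial (Fin n) ℂ) (k : ℕ) (z : Pt n) :
    pev (p ^ k) z = pev p z ^ k := by simp [pev]

lemma mev_bound {n : ℕ} (ρ : Fin n →₀ ℕ) (z : Pt n) (x : ℝ) (hx : 0 ≤ x) (hx1 : x ≤ 1)
    (hz : ∀ i, ‖z i‖ * x ≤ 1) (r : ℕ) (hr : ∑ i, ρ i ≤ r) : ‖mev ρ z‖ * x ^ r ≤ 1 := by
  obtain ⟨t, rfl⟩ := Nat.exists_eq_add_of_le hr
  rw [pow_add, ← mul_assoc, mev, norm_prod, ← Finset.prod_pow_eq_pow_sum, ← Finset.prod_mul_distrib]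
  refine mul_le_one₀ ?_ (by positivity) (pow_le_one₀ hx hx1)
  refine Finset.prod_le_one (fun i _ => by positivity) fun i _ => ?_
  rw [norm_pow, ← mul_pow]
  exact pow_le_one₀ (by positivity) (hz i)

lemma cheb_combine {n d D k : ℕ} {E : Fin (sdim n d) → (Fin n → ℕ)} (hE : IsEnum n d E)
    {E' : Fin (sdim n D) → (Fin n → ℕ)} (hE' : IsEnum n D E')
    {H : Set (Pt n)} (hHc : IsCompact H) (hHi : (interior H).Nonempty) (Q : H → ℝ)
    (hQ : Continuous Q) (hQ0 : ∀ z, 0 ≤ Q z)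
    (hQ1 : ∀ (z : H) i, ‖(z : Pt n) i‖ * Real.exp (-Q z) ≤ 1) (hk : 0 < k) (hD : k * (d + n) ≤ D)
    (V : ℝ) (hV : ∀ a, vq n d E Q a ≤ V) (a : Fin (sdim n D) → H) :
    vq n D E' Q a ≤ (sdim n D).factorial * V ^ (k ^ (n + 1)) := by
  classical
  obtain ⟨p, C, hp, b, hb⟩ := cheb_poly hE hHc hHi Q hQ
  have hexp : ∀ (r : ℕ) (z : H), Real.exp (-(r:ℝ) * Q z) = Real.exp (-Q z) ^ r := by
    intro r z
    rw [← Real.exp_nat_mul]; ring_nf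
  have hx1 : ∀ z : H, Real.exp (-Q z) ≤ 1 := fun z => Real.exp_le_one_iff.2 (by linarith [hQ0 z])
  set q : (Fin n →₀ ℕ) → MvPolynomial (Fin n) ℂ := fun γ =>
    if divk k γ ∈ Tset n d then p (divk k γ) ^ k * MvPolynomial.monomial (modk k γ) 1
    else MvPolynomial.monomial γ 1 with hq
  set c : (Fin n →₀ ℕ) → ℝ := fun γ => if divk k γ ∈ Tset n d then C (divk k γ) ^ k else 1 with hc
  have hmono : ∀ γ : Fin n →₀ ℕ, (MvPolynomial.monomial γ (1:ℂ)).totalDegree = ∑ i, γ i := by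
    intro γ
    rw [MvPolynomial.totalDegree_monomial _ one_ne_zero, Finsupp.sum_fintype _ _ (fun _ => rfl)]
  have hmdeg : ∀ γ : Fin n →₀ ℕ, MonomialOrder.lex.degree (MvPolynomial.monomial γ (1:ℂ)) = γ := by
    intro γ
    rw [MonomialOrder.degree_monomial, if_neg one_ne_zero]
  have key := cheb_upper hE' Q q c (by
    intro γ hγ
    by_cases h : divk k γ ∈ Tset n d
    · simp only [hq, hc, if_pos h]
      obtain ⟨h1, h2, h3, h4, h5⟩ := hp _ h
      have hms := modk_sum hk γ
      refine ⟨h1.pow.mul MonomialOrder.monic_monomial_one, ?_, ?_, fun z => ?_⟩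
      · rw [MonomialOrder.degree_mul h1.pow.ne_zero (MonomialOrder.monic_monomial_one (m := MonomialOrder.lex)).ne_zero,
          MonomialOrder.degree_pow, h2, hmdeg, div_mod_eq]
      · refine (MvPolynomial.totalDegree_mul _ _).trans ?_
        rw [hmono]
        have := MvPolynomial.totalDegree_pow (p (divk k γ)) k
        nlinarith
      · rw [pev_mul, pev_pow, pev_monomial, one_mul, norm_mul, norm_pow, hexp]
        obtain ⟨r, hr⟩ : ∃ r, D = d * k + r := ⟨D - d * k, by
          have : d * k ≤ D := by nlinarith
          omega⟩
        have h6 := mev_bound (modk k γ) z _ (Real.exp_pos (-Q z)).le (hx1 z) (hQ1 z) r (by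
          have : n * k ≤ r := by nlinarith
          omega)
        have h7 := h5 z
        rw [hexp] at h7
        calc ‖pev (p (divk k γ)) z‖ ^ k * ‖mev (modk k γ) z‖ * Real.exp (-Q z) ^ D
            = (‖pev (p (divk k γ)) z‖ * Real.exp (-Q z) ^ d) ^ k *
              (‖mev (modk k γ) z‖ * Real.exp (-Q z) ^ r) := by
              rw [hr, pow_add, pow_mul, mul_pow]; ring
          _ ≤ C (divk k γ) ^ k * 1 := by
              refine mul_le_mul (pow_le_pow_left₀ (by positivity) h7 k) h6 (by positivity)
                (by positivity)
          _ = _ := mul_one _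
    · simp only [hq, hc, if_neg h]
      rw [mem_Tset] at hγ
      refine ⟨MonomialOrder.monic_monomial_one, hmdeg γ, by rw [hmono]; exact hγ, fun z => ?_⟩
      rw [pev_monomial, one_mul, hexp]
      exact mev_bound γ z _ (Real.exp_pos (-Q z)).le (hx1 z) (hQ1 z) D hγ) a
  refine key.trans (mul_le_mul_of_nonneg_left ?_ (by positivity))
  have hprod : ∏ γ ∈ Tset n D, c γ = (∏ α ∈ Tset n d, C α) ^ (k ^ (n + 1)) := by
    simp only [hc]
    rw [← Finset.prod_filter, ← Finset.prod_fiberwise_of_maps_to (t := Tset n d) (g := divk k)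
      (fun γ hγ => (Finset.mem_filter.1 hγ).2), ← Finset.prod_pow]
    refine Finset.prod_congr rfl fun α hα => ?_
    rw [Finset.prod_congr rfl (g := fun _ => C α ^ k), Finset.prod_const, fibre_card hk hD hα,
      ← pow_mul, pow_succ, mul_comm]
    intro γ hγ
    rw [(Finset.mem_filter.1 hγ).2]
  rw [hprod]
  refine pow_le_pow_left₀ (Finset.prod_nonneg fun α hα => (hp α hα).2.2.2.1.le) (hb.trans (hV b)) _

/-- trivial bound -/
lemma vq_trivial {n D : ℕ}
    {E' : Fin (sdim n D) → (Fin n → ℕ)} (hE' : IsEnum n D E')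
    {H : Set (Pt n)} (Q : H → ℝ) (hQ0 : ∀ z, 0 ≤ Q z)
    (hQ1 : ∀ (z : H) i, ‖(z : Pt n) i‖ * Real.exp (-Q z) ≤ 1) (a : Fin (sdim n D) → H) :
    vq n D E' Q a ≤ (sdim n D).factorial := by
  classical
  have hexp : ∀ (r : ℕ) (z : H), Real.exp (-(r:ℝ) * Q z) = Real.exp (-Q z) ^ r := by
    intro r z
    rw [← Real.exp_nat_mul]; ring_nf
  have hx1 : ∀ z : H, Real.exp (-Q z) ≤ 1 := fun z => Real.exp_le_one_iff.2 (by linarith [hQ0 z])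
  have key := cheb_upper hE' Q (fun γ => MvPolynomial.monomial γ 1) (fun _ => 1) (by
    intro γ hγ
    rw [mem_Tset] at hγ
    refine ⟨MonomialOrder.monic_monomial_one, ?_, ?_, fun z => ?_⟩
    · rw [MonomialOrder.degree_monomial, if_neg one_ne_zero]
    · rwa [MvPolynomial.totalDegree_monomial _ one_ne_zero, Finsupp.sum_fintype _ _ (fun _ => rfl)]
    · rw [pev_monomial, one_mul, hexp]
      exact mev_bound γ z _ (Real.exp_pos (-Q z)).le (hx1 z) (hQ1 z) D hγ) a
  simpa [vq] using key

end PartC3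

end

section
section PartC4

lemma absVDMQ_eq (n d : ℕ) (E : Fin (sdim n d) → (Fin n → ℕ)) {H : Set (Pt n)} (Q : H → ℝ)
    (a : Fin (sdim n d) → H) : absVDMQ n d E H Q a = ENNReal.ofReal (vq n d E Q a) := rfl

lemma tendsto_add_div (n : ℕ) : Tendsto (fun D : ℕ => ((D:ℝ) + n) / D) atTop (𝓝 1) := by
  have h : Tendsto (fun D : ℕ => 1 + (n:ℝ) / (D:ℝ)) atTop (𝓝 (1 + 0)) :=
    tendsto_const_nhds.add (tendsto_const_div_atTop_nhds_zero_nat (n:ℝ))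
  rw [add_zero] at h
  refine h.congr' ?_
  filter_upwards [eventually_gt_atTop 0] with D hD
  have : (D:ℝ) ≠ 0 := by exact_mod_cast hD.ne'
  field_simp

lemma tendsto_sdim (n : ℕ) :
    Tendsto (fun D : ℕ => (sdim n D : ℝ) / D ^ n) atTop (𝓝 (1 / n.factorial)) := by
  have h0 := (isEquivalent_choose n)
  rw [Asymptotics.isEquivalent_iff_tendsto_one] at h0
  · have h1 := h0.comp (tendsto_add_atTop_nat n)
    have h2 := (h1.mul ((tendsto_add_div n).pow n)).mul_const (1 / (n.factorial:ℝ))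
    simp only [one_pow, mul_one, one_mul] at h2
    refine h2.congr' ?_
    filter_upwards [eventually_gt_atTop 0] with D hD
    have hD0 : (D:ℝ) ≠ 0 := by exact_mod_cast hD.ne'
    have hDn : (D:ℝ) + n ≠ 0 := by positivity
    have hf : (n.factorial : ℝ) ≠ 0 := by positivity
    simp only [Function.comp, Pi.div_apply, sdim]
    push_cast
    rw [div_pow]
    field_simp
  · filter_upwards [eventually_gt_atTop 0] with D hD
    have hD0 : (0:ℝ) < D := by exact_mod_cast hD
    positivity

lemma tendsto_sdim_root (n : ℕ) :
    Tendsto (fun D : ℕ => (sdim n D : ℝ) ^ (1 / (D:ℝ))) atTop (𝓝 1) := by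
  have h1 : Tendsto (fun D : ℕ => ((sdim n D : ℝ) / D ^ n) ^ (1 / (D:ℝ))) atTop
      (𝓝 ((1 / n.factorial : ℝ) ^ (0:ℝ))) :=
    (tendsto_sdim n).rpow tendsto_one_div_atTop_nhds_zero_nat (Or.inl (by positivity))
  have h2 : Tendsto (fun D : ℕ => ((D:ℝ) ^ (1 / (D:ℝ))) ^ n) atTop (𝓝 (1 ^ n)) :=
    (tendsto_rpow_div.comp tendsto_natCast_atTop_atTop).pow n
  have h3 := h1.mul h2
  rw [Real.rpow_zero, one_pow, one_mul] at h3
  refine h3.congr' ?_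
  filter_upwards [eventually_gt_atTop 0] with D hD
  have hD0 : (0:ℝ) < D := by exact_mod_cast hD
  rw [← Real.rpow_natCast ((D:ℝ) ^ (1 / (D:ℝ))) n, ← Real.rpow_mul hD0.le, mul_comm (1 / (D:ℝ)) n,
    Real.rpow_mul hD0.le, Real.rpow_natCast, ← Real.mul_rpow (by positivity) (by positivity)]
  congr 1
  field_simp

lemma fact_root (s D : ℕ) (hs : 0 < s) (hD : 0 < D) :
    ((s.factorial : ℝ)) ^ (1 / ((D:ℝ) * s)) ≤ (s:ℝ) ^ (1 / (D:ℝ)) := by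
  have h1 : (s.factorial : ℝ) ≤ (s:ℝ) ^ s := by exact_mod_cast Nat.factorial_le_pow s
  have hD0 : (0:ℝ) < D := by exact_mod_cast hD
  have hs0 : (0:ℝ) < s := by exact_mod_cast hs
  refine (Real.rpow_le_rpow (by positivity) h1 (by positivity)).trans (le_of_eq ?_)
  rw [← Real.rpow_natCast (s:ℝ) s, ← Real.rpow_mul hs0.le]
  congr 1
  field_simp

lemma delta_le_of {n : ℕ} (E : ∀ d, Fin (sdim n d) → (Fin n → ℕ)) {H : Set (Pt n)} (Q : H → ℝ)
    (y : ℕ → ℝ) (hy : ∀ D, 0 ≤ y D) (L : ℝ) (hL : Tendsto y atTop (𝓝 L))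
    (h : ∀ᶠ D in atTop, ∀ a, vq n D (E D) Q a ≤
      (sdim n D).factorial * (y D) ^ (((D:ℝ) * sdim n D))) :
    deltaBar n E H Q ≤ ENNReal.ofReal L := by
  have hlim : Tendsto (fun D : ℕ => ENNReal.ofReal ((sdim n D : ℝ) ^ (1 / (D:ℝ)) * y D)) atTop
      (𝓝 (ENNReal.ofReal L)) := by
    have := (tendsto_sdim_root n).mul hL
    rw [one_mul] at this
    exact ENNReal.tendsto_ofReal this
  rw [← hlim.limsup_eq]
  refine limsup_le_limsup ?_
  filter_upwards [h, eventually_gt_atTop 0] with D hD hD0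
  have hD' : (0:ℝ) < D := by exact_mod_cast hD0
  have hs' : (0:ℝ) < sdim n D := by exact_mod_cast sdim_pos n D
  have h1 : (⨆ a, absVDMQ n D (E D) H Q a) ≤ ENNReal.ofReal ((sdim n D).factorial *
      (y D) ^ (((D:ℝ) * sdim n D))) := iSup_le fun a => ENNReal.ofReal_le_ofReal (hD a)
  refine (ENNReal.rpow_le_rpow h1 (by positivity)).trans ?_
  rw [ENNReal.ofReal_rpow_of_nonneg (by have := hy D; positivity) (by positivity)]
  refine ENNReal.ofReal_le_ofReal ?_
  rw [Real.mul_rpow (by positivity) (Real.rpow_nonneg (hy D) _), ← Real.rpow_mul (hy D),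
    mul_one_div_cancel (by positivity), Real.rpow_one]
  exact mul_le_mul_of_nonneg_right (fact_root _ _ (sdim_pos n D) hD0) (hy D)

lemma delta_liminf_norm {n : ℕ} {E : ∀ d, Fin (sdim n d) → (Fin n → ℕ)}
    (hE : ∀ d, IsEnum n d (E d)) {H : Set (Pt n)} (hHc : IsCompact H)
    (hHi : (interior H).Nonempty) (Q : H → ℝ)
    (hQ : Continuous Q) (hQ0 : ∀ z, 0 ≤ Q z)
    (hQ1 : ∀ (z : H) i, ‖(z : Pt n) i‖ * Real.exp (-Q z) ≤ 1) (c c' : ℝ) (hc' : 0 < c')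
    (hcc : c' < c) (hc : ENNReal.ofReal c < deltaBar n E H Q) :
    ∀ᶠ d in atTop, ∃ a, c' ^ (d * sdim n d) < vq n d (E d) Q a := by
  by_contra hcon
  rw [not_eventually] at hcon
  set θ : ℕ → ℝ := fun d => d * sdim n d * n.factorial * (1 / ((d:ℝ) + n)) ^ (n + 1) with hθ
  have hθ1 : Tendsto θ atTop (𝓝 1) := by
    have h1 := ((tendsto_sdim n).mul_const (n.factorial : ℝ)).mul
      (((tendsto_add_div n).inv₀ one_ne_zero).pow (n + 1))
    have hf : (n.factorial : ℝ) ≠ 0 := by positivity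
    rw [inv_one, one_pow, mul_one, one_div, inv_mul_cancel₀ hf] at h1
    refine h1.congr' ?_
    filter_upwards [eventually_gt_atTop 0] with d hd
    have hd0 : (0:ℝ) < d := by exact_mod_cast hd
    have : (d:ℝ) + n ≠ 0 := by positivity
    simp only [hθ]
    rw [inv_div, div_pow, div_pow, one_pow]
    field_simp
    ring
  have hev : ∀ᶠ d in atTop, c' ^ θ d < c := by
    have : Tendsto (fun d => c' ^ θ d) atTop (𝓝 (c' ^ (1:ℝ))) :=
      tendsto_const_nhds.rpow hθ1 (Or.inl hc'.ne')
    rw [Real.rpow_one] at this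
    exact this.eventually_lt_const hcc
  obtain ⟨d, hd, hdc, hd0⟩ := (hcon.and_eventually (hev.and (eventually_gt_atTop 0))).exists
  push Not at hd
  have hd0' : (0:ℝ) < d := by exact_mod_cast hd0
  set k : ℕ → ℕ := fun D => ⌊(1 / ((d:ℝ) + n)) * (D:ℝ)⌋₊ with hk
  set x : ℕ → ℝ := fun D => d * sdim n d * (k D : ℝ) ^ (n + 1) / (D * sdim n D) with hx
  have hklim : Tendsto (fun D : ℕ => (k D : ℝ) / D) atTop (𝓝 (1 / ((d:ℝ) + n))) :=
    (tendsto_nat_floor_mul_div_atTop (R := ℝ) (a := 1 / ((d:ℝ) + n)) (by positivity)).comp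
      tendsto_natCast_atTop_atTop
  have hxlim : Tendsto x atTop (𝓝 (θ d)) := by
    have h1 := ((hklim.pow (n + 1)).mul ((tendsto_sdim n).inv₀ (by positivity))).const_mul
      ((d:ℝ) * sdim n d)
    have : (d:ℝ) * sdim n d * ((1 / ((d:ℝ) + n)) ^ (n + 1) * (1 / (n.factorial:ℝ))⁻¹) = θ d := by
      simp only [hθ]; rw [one_div (n.factorial:ℝ), inv_inv]; ring
    rw [this] at h1
    refine h1.congr' ?_
    filter_upwards [eventually_gt_atTop 0] with D hD
    have hD0 : (0:ℝ) < D := by exact_mod_cast hD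
    have hs' : (0:ℝ) < sdim n D := by exact_mod_cast sdim_pos n D
    simp only [hx]
    rw [inv_div, div_pow]
    field_simp
    ring
  have hle : deltaBar n E H Q ≤ ENNReal.ofReal (c' ^ θ d) := by
    refine delta_le_of E Q (fun D => c' ^ x D) (fun D => (Real.rpow_pos_of_pos hc' _).le) _
      (tendsto_const_nhds.rpow hxlim (Or.inl hc'.ne')) ?_
    filter_upwards [eventually_ge_atTop (d + n), eventually_gt_atTop 0] with D hD hDp a
    have hD0 : (0:ℝ) < D := by exact_mod_cast hDp
    have hs' : (0:ℝ) < sdim n D := by exact_mod_cast sdim_pos n D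
    have hdn : (0:ℝ) < (d:ℝ) + n := by positivity
    have hkpos : 0 < k D := by
      simp only [hk]
      rw [Nat.floor_pos, one_div, inv_mul_eq_div, le_div_iff₀ hdn, one_mul]
      exact_mod_cast hD
    have hkD : k D * (d + n) ≤ D := by
      have h1 : (k D : ℝ) ≤ (1 / ((d:ℝ) + n)) * (D:ℝ) := Nat.floor_le (by positivity)
      rw [one_div, inv_mul_eq_div, le_div_iff₀ hdn] at h1
      exact_mod_cast h1
    refine (cheb_combine (hE d) (hE D) hHc hHi Q hQ hQ0 hQ1 hkpos hkD _ hd a).trans (le_of_eq ?_)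
    congr 1
    rw [← Real.rpow_mul hc'.le, ← pow_mul, ← Real.rpow_natCast]
    congr 1
    simp only [hx]
    push_cast
    field_simp
  refine absurd (hc.trans_le hle) (not_lt.2 ?_)
  exact ENNReal.ofReal_le_ofReal hdc.le

lemma vq_shift (n d : ℕ) (E : Fin (sdim n d) → (Fin n → ℕ)) {H : Set (Pt n)} (Q : H → ℝ) (K : ℝ)
    (a : Fin (sdim n d) → H) :
    vq n d E (fun z => Q z + K) a = vq n d E Q a * Real.exp (-K) ^ (d * sdim n d) := by
  unfold vq
  have : ∀ j, Real.exp (-(d:ℝ) * (Q (a j) + K)) =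
      Real.exp (-(d:ℝ) * Q (a j)) * Real.exp (-K) ^ d := by
    intro j
    rw [← Real.exp_nat_mul, ← Real.exp_add]; ring_nf
  simp_rw [this]
  rw [Finset.prod_mul_distrib, Finset.prod_const, ← pow_mul]
  simp [mul_assoc]

lemma delta_shift {n : ℕ} (E : ∀ d, Fin (sdim n d) → (Fin n → ℕ)) {H : Set (Pt n)} (Q : H → ℝ)
    (K : ℝ) : deltaBar n E H Q ≤ ENNReal.ofReal (Real.exp K) *
      deltaBar n E H (fun z => Q z + K) := by
  unfold deltaBar
  rw [← ENNReal.limsup_const_mul_of_ne_top ENNReal.ofReal_ne_top]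
  refine limsup_le_limsup ?_
  filter_upwards [eventually_gt_atTop 0] with d hd
  have hd' : (0:ℝ) < d := by exact_mod_cast hd
  have hs' : (0:ℝ) < sdim n d := by exact_mod_cast sdim_pos n d
  have h1 : (⨆ a, absVDMQ n d (E d) H Q a) ≤ ENNReal.ofReal (Real.exp K ^ (d * sdim n d)) *
      ⨆ a, absVDMQ n d (E d) H (fun z => Q z + K) a := by
    refine iSup_le fun a => ?_
    refine le_trans (le_of_eq ?_) (mul_le_mul_right (le_iSup _ a) _)
    rw [absVDMQ_eq, absVDMQ_eq, vq_shift, ← ENNReal.ofReal_mul (by positivity)]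
    congr 1
    rw [mul_comm, mul_assoc, ← mul_pow, ← Real.exp_add]
    simp
  refine (ENNReal.rpow_le_rpow h1 (by positivity)).trans (le_of_eq ?_)
  rw [ENNReal.mul_rpow_of_nonneg _ _ (by positivity)]
  congr 1
  rw [ENNReal.ofReal_rpow_of_nonneg (by positivity) (by positivity)]
  congr 1
  rw [← Real.rpow_natCast, ← Real.rpow_mul (Real.exp_pos _).le]
  push_cast
  rw [mul_one_div_cancel (by positivity), Real.rpow_one]

lemma exists_shift {n : ℕ} {H : Set (Pt n)} (hHc : IsCompact H) (Q : H → ℝ) (hQ : Continuous Q) :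
    ∃ K : ℝ, (∀ z, 0 ≤ Q z + K) ∧
      ∀ (z : H) i, ‖(z : Pt n) i‖ * Real.exp (-(Q z + K)) ≤ 1 := by
  have : CompactSpace H := isCompact_iff_compactSpace.1 hHc
  obtain ⟨B, hB⟩ := isCompact_univ.exists_bound_of_continuousOn hQ.continuousOn
  obtain ⟨M, hM⟩ := hHc.isBounded.exists_norm_le
  have hQB : ∀ z, -B ≤ Q z := fun z => (abs_le.1 (by simpa using hB z (Set.mem_univ z))).1
  refine ⟨B + |M|, fun z => by linarith [hQB z, abs_nonneg M], fun z i => ?_⟩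
  have h1 : ‖(z : Pt n) i‖ ≤ Real.exp (Q z + (B + |M|)) := by
    calc ‖(z : Pt n) i‖ ≤ ‖(z : Pt n)‖ := PiLp.norm_apply_le _ i
      _ ≤ M := hM z z.2
      _ ≤ |M| := le_abs_self M
      _ ≤ |M| + 1 := by linarith
      _ ≤ Real.exp |M| := Real.add_one_le_exp _
      _ ≤ _ := Real.exp_le_exp.2 (by linarith [hQB z])
  rw [Real.exp_neg, ← div_eq_mul_inv]
  exact (div_le_one (Real.exp_pos _)).2 h1

lemma delta_liminf {n : ℕ} {E : ∀ d, Fin (sdim n d) → (Fin n → ℕ)}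
    (hE : ∀ d, IsEnum n d (E d)) {H : Set (Pt n)} (hHc : IsCompact H)
    (hHi : (interior H).Nonempty) (Q : H → ℝ)
    (hQ : Continuous Q) (c c' : ℝ) (hc' : 0 < c')
    (hcc : c' < c) (hc : ENNReal.ofReal c < deltaBar n E H Q) :
    ∀ᶠ d in atTop, ∃ a, c' ^ (d * sdim n d) < vq n d (E d) Q a := by
  obtain ⟨K, hK0, hK1⟩ := exists_shift hHc Q hQ
  have h1 := delta_liminf_norm hE hHc hHi (fun z => Q z + K) (by fun_prop) hK0 hK1
    (c * Real.exp (-K)) (c' * Real.exp (-K)) (by positivity)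
    (mul_lt_mul_of_pos_right hcc (Real.exp_pos _)) (by
      have h2 := hc.trans_le (delta_shift E Q K)
      by_contra hcon
      push Not at hcon
      refine absurd h2 (not_lt.2 ((mul_le_mul_right hcon _).trans (le_of_eq ?_)))
      rw [← ENNReal.ofReal_mul (Real.exp_pos _).le]
      congr 1
      rw [mul_comm, mul_assoc, ← Real.exp_add]
      simp)
  filter_upwards [h1] with d hd
  obtain ⟨a, ha⟩ := hd
  refine ⟨a, ?_⟩
  rw [vq_shift, mul_pow] at ha
  exact lt_of_mul_lt_mul_right ha (by positivity)

/-- uniform upper bound for the Vandermonde -/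
lemma vq_upper {n : ℕ} {E : ∀ d, Fin (sdim n d) → (Fin n → ℕ)}
    (hE : ∀ d, IsEnum n d (E d)) {H : Set (Pt n)} (hHc : IsCompact H) (Q : H → ℝ)
    (hQ : Continuous Q) :
    ∃ C : ℝ, 0 < C ∧ ∀ d a, 0 < d → vq n d (E d) Q a ≤
      (sdim n d).factorial * C ^ (d * sdim n d) := by
  obtain ⟨K, hK0, hK1⟩ := exists_shift hHc Q hQ
  refine ⟨Real.exp K, Real.exp_pos _, fun d a _ => ?_⟩
  have h1 := vq_trivial (hE d) (fun z => Q z + K) hK0 hK1 a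
  rw [vq_shift] at h1
  rw [← div_le_iff₀ (by positivity)]
  refine le_trans (le_of_eq ?_) h1
  rw [Real.exp_neg, inv_pow, div_eq_mul_inv]

end PartC4

end

section
lemma cheb_walsh (q : Polynomial ℂ) (d : ℕ) (hq : q.natDegree ≤ d) (θ m : ℝ) (hm : 0 < m)
    (h : ∀ t ∈ Set.Icc (-1:ℝ) 1, ‖q.eval (t:ℂ)‖ ≤ m) :
    ‖q.eval ((Real.cosh θ : ℝ) : ℂ)‖ ≤ m * Real.exp (d * |θ|) := by
  set x := Real.cosh θ with hx
  obtain ⟨u, hu1, hu2⟩ : ∃ u : ℂ, ‖u‖ = 1 ∧ u * q.eval (x:ℂ) = ‖q.eval (x:ℂ)‖ := by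
    by_cases h0 : q.eval (x:ℂ) = 0
    · exact ⟨1, by simp, by simp [h0]⟩
    · have h0' : (‖q.eval (x:ℂ)‖ : ℂ) ≠ 0 := by simpa using h0
      refine ⟨(‖q.eval (x:ℂ)‖ : ℂ) / q.eval (x:ℂ), ?_, ?_⟩
      · rw [norm_div, Complex.norm_real, norm_norm, div_self (by simpa using h0)]
      · field_simp
  set P : Polynomial ℝ := ∑ i ∈ Finset.range (d+1),
    Polynomial.monomial i ((u * q.coeff i).re / m) with hP
  have hev : ∀ t : ℝ, P.eval t = (u * q.eval (t:ℂ)).re / m := by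
    intro t
    rw [Polynomial.eval_eq_sum_range' (Nat.lt_succ_of_le hq), Finset.mul_sum, Complex.re_sum,
      Finset.sum_div, hP, Polynomial.eval_finset_sum]
    refine Finset.sum_congr rfl fun i _ => ?_
    rw [Polynomial.eval_monomial, ← Complex.ofReal_pow, ← mul_assoc, Complex.re_mul_ofReal]
    ring
  have hdeg : P.degree ≤ d := by
    rw [hP]
    refine (Polynomial.degree_sum_le _ _).trans (Finset.sup_le fun i hi => ?_)
    refine (Polynomial.degree_monomial_le _ _).trans ?_
    have := Finset.mem_range.1 hi
    exact_mod_cast Nat.lt_succ_iff.1 this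
  have key := Polynomial.Chebyshev.eval_iterate_derivative_le_of_forall_abs_le_one (n := d)
    (P := P) (k := 0) (x := x) (Real.one_le_cosh θ) hdeg (by
      intro t ht
      rw [hev, abs_div, abs_of_pos hm, div_le_one hm]
      refine (Complex.abs_re_le_norm _).trans ?_
      rw [norm_mul, hu1, one_mul]
      exact h t ht)
  simp only [Function.iterate_zero, id_eq] at key
  rw [hev, hu2, Complex.ofReal_re, hx, Polynomial.Chebyshev.T_real_cosh, div_le_iff₀ hm] at key
  refine key.trans ?_
  rw [mul_comm]
  refine mul_le_mul_of_nonneg_left ?_ hm.le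
  rw [← Real.cosh_abs, Real.cosh_eq]
  have e1 : |((d:ℤ):ℝ) * θ| = d * |θ| := by
    rw [abs_mul]; simp
  rw [e1]
  have : Real.exp (-(d * |θ|)) ≤ Real.exp (d * |θ|) := by
    apply Real.exp_le_exp.2
    have : 0 ≤ (d:ℝ) * |θ| := by positivity
    linarith
  linarith

lemma jensen_half (q : Polynomial ℂ) (M : ℝ) (hM : 1 ≤ M)
    (hb : ∀ θ : ℝ, ‖q.eval (circleMap 0 1 θ)‖ ≤ M)
    (hvol : volume ({θ : ℝ | 1 < ‖q.eval (circleMap 0 1 θ)‖} ∩ Set.Ioc 0 (2 * Real.pi)) ≤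
      ENNReal.ofReal Real.pi) : ‖q.coeff 0‖ ^ 2 ≤ M := by
  by_cases h0 : q.coeff 0 = 0
  · rw [h0, norm_zero]; nlinarith
  have hq0 : q ≠ 0 := by rintro rfl; simp at h0
  have h1 := Polynomial.norm_coeff_le_choose_mul_mahlerMeasure 0 q
  rw [Nat.choose_zero_right, Nat.cast_one, one_mul] at h1
  have hpos : 0 < ‖q.coeff 0‖ := norm_pos_iff.2 h0
  have h2 : Real.log ‖q.coeff 0‖ ≤ q.logMahlerMeasure := by
    rw [Polynomial.logMahlerMeasure_eq_log_MahlerMeasure]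
    exact Real.log_le_log hpos h1
  rw [Polynomial.logMahlerMeasure_def, Real.circleAverage_def, smul_eq_mul] at h2
  set S := {θ : ℝ | 1 < ‖q.eval (circleMap 0 1 θ)‖} with hS
  have hSm : MeasurableSet S := by
    apply IsOpen.measurableSet
    exact isOpen_lt continuous_const ((q.continuous.comp (continuous_circleMap 0 1)).norm)
  have hpi := Real.pi_pos
  have h3 : ∫ θ in (0:ℝ)..(2 * Real.pi), Real.log ‖q.eval (circleMap 0 1 θ)‖ ≤
      ∫ θ in (0:ℝ)..(2 * Real.pi), S.indicator (fun _ => Real.log M) θ := by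
    apply intervalIntegral.integral_mono_on (by positivity) q.intervalIntegrable_mahlerMeasure
    · rw [intervalIntegrable_iff]
      have hcst : IntervalIntegrable (fun _ : ℝ => Real.log M) volume 0 (2 * Real.pi) :=
        intervalIntegrable_const
      exact Integrable.indicator (intervalIntegrable_iff.1 hcst) hSm
    · intro θ _
      by_cases hθ : θ ∈ S
      · rw [Set.indicator_of_mem hθ]
        exact Real.log_le_log (lt_trans one_pos hθ) (hb θ)
      · rw [Set.indicator_of_notMem hθ]
        exact Real.log_nonpos (norm_nonneg _) (not_lt.1 hθ)
  have h4 : ∫ θ in (0:ℝ)..(2 * Real.pi), S.indicator (fun _ => Real.log M) θ ≤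
      Real.pi * Real.log M := by
    rw [intervalIntegral.integral_of_le (by positivity), integral_indicator hSm,
      integral_const, smul_eq_mul]
    refine mul_le_mul_of_nonneg_right ?_ (Real.log_nonneg hM)
    rw [Measure.real, Measure.restrict_apply MeasurableSet.univ, Set.univ_inter,
      Measure.restrict_apply hSm]
    exact ENNReal.toReal_le_of_le_ofReal hpi.le hvol
  have h5 : Real.log ‖q.coeff 0‖ ≤ Real.log M / 2 := by
    refine h2.trans ((mul_le_mul_of_nonneg_left (h3.trans h4) (by positivity)).trans_eq ?_)
    field_simp
  have h6 : Real.log (‖q.coeff 0‖ ^ 2) ≤ Real.log M := by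
    rw [Real.log_pow]; push_cast; linarith
  exact (Real.log_le_log_iff (by positivity) (by linarith)).1 h6

lemma haar_rot {n : ℕ} (μ : Measure (Pt n)) [μ.IsAddHaarMeasure] (w : ℂ) (hw : ‖w‖ = 1)
    (s : Set (Pt n)) : μ ((fun v => w • v) ⁻¹' s) = μ s := by
  have hw0 : w ≠ 0 := by rintro rfl; simp at hw
  let f : Pt n →ₗ[ℝ] Pt n :=
    { toFun := fun v => w • v
      map_add' := fun x y => smul_add w x y
      map_smul' := fun r x => smul_comm w r x }
  let g : Pt n →ₗ[ℝ] Pt n :=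
    { toFun := fun v => w⁻¹ • v
      map_add' := fun x y => smul_add w⁻¹ x y
      map_smul' := fun r x => smul_comm w⁻¹ r x }
  have hfg : f ∘ₗ g = LinearMap.id := by
    ext v : 1
    simp [f, g, smul_smul, mul_inv_cancel₀ hw0]
  have hdet : LinearMap.det f ≠ 0 := by
    intro h
    have := congrArg LinearMap.det hfg
    rw [LinearMap.det_comp, h, zero_mul, LinearMap.det_id] at this
    exact zero_ne_one this
  have hb : f ⁻¹' (Metric.ball 0 1) = Metric.ball 0 1 := by
    ext v
    simp [f, norm_smul, hw]
  have h1 := Measure.addHaar_preimage_linearMap μ hdet (Metric.ball 0 1)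
  rw [hb] at h1
  have hne : μ (Metric.ball (0:Pt n) 1) ≠ 0 := (Metric.measure_ball_pos μ 0 one_pos).ne'
  have hnt : μ (Metric.ball (0:Pt n) 1) ≠ ∞ := measure_ball_lt_top.ne
  have h2 : ENNReal.ofReal |(LinearMap.det f)⁻¹| = 1 := by
    have := ENNReal.mul_left_inj hne hnt |>.1 ((one_mul _).trans h1)
    exact this.symm
  have h3 := Measure.addHaar_preimage_linearMap μ hdet s
  rw [h2, one_mul] at h3
  exact h3

lemma rot_exists {n : ℕ} (μ : Measure (Pt n)) [μ.IsAddHaarMeasure] (r : ℝ) (K : Set (Pt n))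
    (hK : MeasurableSet K)
    (h : 2 * μ (Metric.ball 0 r ∩ K) < μ (Metric.ball 0 r)) :
    ∃ v ∈ Metric.ball (0 : Pt n) r,
      volume ({θ : ℝ | (circleMap 0 1 θ) • v ∈ K} ∩ Set.Ioc 0 (2 * Real.pi)) ≤
        ENNReal.ofReal Real.pi := by
  by_contra hcon
  push Not at hcon
  set B := Metric.ball (0 : Pt n) r
  have hBm : MeasurableSet B := Metric.isOpen_ball.measurableSet
  have hBK : MeasurableSet (B ∩ K) := hBm.inter hK
  set I := Set.Ioc (0:ℝ) (2 * Real.pi)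
  let F : Pt n → ℝ → ℝ≥0∞ := fun v θ => (B ∩ K).indicator 1 ((circleMap 0 1 θ) • v)
  have hFm : Measurable (Function.uncurry F) := by
    refine (measurable_one.indicator hBK).comp (f := fun x : Pt n × ℝ => (circleMap 0 1 x.2) • x.1) ?_
    apply Continuous.measurable
    exact ((continuous_circleMap 0 1).comp continuous_snd).smul continuous_fst
  have hswap : ∫⁻ v, ∫⁻ θ in I, F v θ ∂volume ∂μ = ∫⁻ θ in I, ∫⁻ v, F v θ ∂μ ∂volume :=
    lintegral_lintegral_swap hFm.aemeasurable
  have hR : ∫⁻ θ in I, ∫⁻ v, F v θ ∂μ ∂volume = ENNReal.ofReal (2 * Real.pi) * μ (B ∩ K) := by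
    have : ∀ θ, ∫⁻ v, F v θ ∂μ = μ (B ∩ K) := by
      intro θ
      have hw : ‖circleMap 0 1 θ‖ = 1 := by simp [circleMap]
      rw [← haar_rot μ (circleMap 0 1 θ) hw (B ∩ K)]
      rw [← lintegral_indicator_one]
      · rfl
      · exact hBK.preimage (measurable_const_smul (circleMap 0 1 θ))
    simp only [this, lintegral_const, Measure.restrict_apply MeasurableSet.univ, Set.univ_inter, I,
      Real.volume_Ioc, sub_zero]
    rw [mul_comm]
  have hL : ENNReal.ofReal Real.pi * μ B ≤ ∫⁻ v, ∫⁻ θ in I, F v θ ∂volume ∂μ := by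
    rw [← setLIntegral_const]
    refine le_trans (setLIntegral_mono' hBm fun v hv => ?_) (setLIntegral_le_lintegral B _)
    refine (hcon v hv).le.trans (le_of_eq ?_)
    rw [← Measure.restrict_apply, ← lintegral_indicator_one]
    · refine lintegral_congr fun θ => ?_
      have hvB : (circleMap 0 1 θ) • v ∈ B := by
        have hv' : ‖v‖ < r := by simpa [B] using hv
        simp [B, norm_smul, circleMap, hv']
      by_cases hk : (circleMap 0 1 θ) • v ∈ K
      · simp [F, Set.indicator, hk, hvB]
      · simp [F, Set.indicator, hk]
    · exact hK.preimage (((continuous_circleMap 0 1).smul continuous_const).measurable)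
    · exact hK.preimage (((continuous_circleMap 0 1).smul continuous_const).measurable)
  rw [hswap, hR, show (2 * Real.pi) = Real.pi * 2 by ring, ENNReal.ofReal_mul Real.pi_pos.le,
    mul_assoc, ENNReal.ofReal_ofNat] at hL
  have := (ENNReal.mul_le_mul_iff_right (by simpa using Real.pi_pos) ENNReal.ofReal_ne_top).1 hL
  exact absurd h (not_lt.2 this)

end

section
lemma restrict_line {n d : ℕ} (p : MvPolynomial (Fin n) ℂ) (hp : p.totalDegree ≤ d)
    (z w : Pt n) : ∃ q : Polynomial ℂ, q.natDegree ≤ d ∧ ∀ t : ℂ, q.eval t = pev p (z + t • w) := by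
  refine ⟨MvPolynomial.aeval (fun k => Polynomial.C (w k) * Polynomial.X + Polynomial.C (z k)) p,
    ?_, ?_⟩
  · have := MvPolynomial.aeval_natDegree_le (n := 1) p hp
      (fun k => Polynomial.C (w k) * Polynomial.X + Polynomial.C (z k))
      (fun i => Polynomial.natDegree_linear_le)
    rwa [mul_one] at this
  · intro t
    unfold pev
    rw [← Polynomial.coe_evalRingHom, MvPolynomial.map_aeval]
    have : (Polynomial.evalRingHom t).comp (algebraMap ℂ (Polynomial ℂ)) = RingHom.id ℂ := by
      ext; simp
    rw [this]
    simp only [MvPolynomial.coe_eval₂Hom, ← MvPolynomial.eval₂_id]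
    congr 1
    ext k
    simp
    ring

lemma bm_step1 {n d : ℕ} (p : MvPolynomial (Fin n) ℂ) (hp : p.totalDegree ≤ d)
    (z0 w : Pt n) (θ : ℝ) : ∃ t ∈ Set.Icc (-1:ℝ) 1,
      ‖pev p z0‖ ≤ ‖pev p (z0 + (Real.cosh θ - t) • w)‖ * Real.exp (d * |θ|) := by
  obtain ⟨q, hq, hqe⟩ := restrict_line p hp (z0 + (Real.cosh θ) • w) (-w)
  have hqe' : ∀ t : ℝ, q.eval (t:ℂ) = pev p (z0 + (Real.cosh θ - t) • w) := by
    intro t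
    rw [hqe, sub_smul, smul_neg, Complex.coe_smul, ← sub_eq_add_neg, add_sub_assoc]
  obtain ⟨t, ht, hmax⟩ := isCompact_Icc.exists_isMaxOn (Set.nonempty_Icc.2 (by norm_num : (-1:ℝ) ≤ 1))
    (f := fun t : ℝ => ‖q.eval (t:ℂ)‖)
    ((q.continuous.comp Complex.continuous_ofReal).norm.continuousOn)
  refine ⟨t, ht, ?_⟩
  rw [← hqe' t]
  have hx := hqe' (Real.cosh θ)
  rw [sub_self, zero_smul, add_zero] at hx
  rw [← hx]
  have hE := Real.exp_pos (d * |θ|)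
  rw [← div_le_iff₀ hE]
  refine le_of_forall_gt_imp_ge_of_dense fun m hm => ?_
  rw [div_le_iff₀ hE]
  refine cheb_walsh q d hq θ m ((norm_nonneg _).trans_lt hm) fun t' ht' => ?_
  exact (hmax ht').trans hm.le

lemma bm_step2 {n d : ℕ} (μ : Measure (Pt n)) [μ.IsAddHaarMeasure]
    (p : MvPolynomial (Fin n) ℂ) (hp : p.totalDegree ≤ d)
    (z1 : Pt n) (r m M : ℝ) (hm : 0 < m) (hmM : m ≤ M)
    (hM : ∀ v ∈ Metric.ball (0:Pt n) r, ‖pev p (z1 + v)‖ ≤ M)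
    (h : 2 * μ (Metric.ball 0 r ∩ {v | m < ‖pev p (z1 + v)‖}) < μ (Metric.ball 0 r)) :
    ‖pev p z1‖ ^ 2 ≤ m * M := by
  have hK : MeasurableSet {v | m < ‖pev p (z1 + v)‖} := by
    apply IsOpen.measurableSet
    exact isOpen_lt continuous_const (((pev_cont p).comp (by fun_prop)).norm)
  obtain ⟨v, hv, hvol⟩ := rot_exists μ r _ hK h
  obtain ⟨q, hq, hqe⟩ := restrict_line p hp z1 v
  have hnorm : ∀ t, ‖(Polynomial.C (m:ℂ)⁻¹ * q).eval t‖ = ‖pev p (z1 + t • v)‖ / m := by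
    intro t
    rw [Polynomial.eval_mul, Polynomial.eval_C, norm_mul, hqe, norm_inv, Complex.norm_real,
      Real.norm_of_nonneg hm.le, inv_mul_eq_div]
  have := jensen_half (Polynomial.C (m:ℂ)⁻¹ * q) (M / m) ((one_le_div hm).2 hmM) (by
      intro θ
      rw [hnorm]
      refine div_le_div_of_nonneg_right (hM _ ?_) hm.le
      have hv' : ‖v‖ < r := by simpa using hv
      simp [norm_smul, circleMap, hv']) (by
      refine le_trans (le_of_eq ?_) hvol
      congr 2
      ext θ
      simp only [Set.mem_setOf_eq, hnorm]
      rw [one_lt_div hm])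
  rw [Polynomial.coeff_zero_eq_eval_zero, hnorm, zero_smul, add_zero, div_pow,
    div_le_div_iff₀ (by positivity) hm] at this
  have h2 : ‖pev p z1‖ ^ 2 * m ≤ (m * M) * m := by nlinarith
  exact le_of_mul_le_mul_right h2 hm

lemma pev_diff {n : ℕ} (p : MvPolynomial (Fin n) ℂ) : Differentiable ℂ (pev p) := by
  have : pev p = fun z => ∑ α ∈ p.support, p.coeff α * ∏ k, (z k) ^ α k := by
    ext z; rw [pev, MvPolynomial.eval_eq']
  rw [this]
  apply Differentiable.fun_sum
  intro α _
  apply Differentiable.const_mul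
  have hcd : ContDiff ℂ 1 (fun y : Pt n => ∏ k, (y k) ^ α k) :=
    contDiff_prod fun k _ => ((EuclideanSpace.proj (𝕜 := ℂ) k).contDiff).pow _
  exact hcd.differentiable one_ne_zero

lemma bm_step3 {n : ℕ} (p : MvPolynomial (Fin n) ℂ) (z2 : Pt n) (r M b : ℝ) (hr : 0 < r)
    (hb : 0 < b) (hbM : b ≤ M)
    (hM : ∀ z ∈ Metric.ball z2 r, ‖pev p z‖ ≤ M) (hz2 : b ≤ ‖pev p z2‖) (z : Pt n)
    (hz : dist z z2 < r * (b / (4 * M))) : b / 2 ≤ ‖pev p z‖ := by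
  have hM0 : 0 < M := hb.trans_le hbM
  have hz' : z ∈ Metric.ball z2 r := by
    rw [Metric.mem_ball]
    refine hz.trans_le ?_
    have : b / (4 * M) ≤ 1 := by rw [div_le_one (by positivity)]; linarith
    nlinarith
  have := Complex.dist_le_div_mul_dist_of_mapsTo_ball (f := pev p) (c := z2) (R₁ := r)
    (R₂ := 2 * M) (pev_diff p).differentiableOn (by
      intro y hy
      rw [Metric.mem_closedBall, dist_eq_norm]
      refine (norm_sub_le _ _).trans ?_
      have h1 := hM y hy
      have h2 := hM z2 (Metric.mem_ball_self hr)
      linarith) hz'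
  have h3 : 2 * M / r * dist z z2 ≤ b / 2 := by
    have : 2 * M / r * dist z z2 ≤ 2 * M / r * (r * (b / (4 * M))) :=
      mul_le_mul_of_nonneg_left hz.le (by positivity)
    refine this.trans (le_of_eq ?_)
    field_simp
    norm_num
  have h4 : ‖pev p z2‖ - ‖pev p z‖ ≤ dist (pev p z) (pev p z2) := by
    rw [dist_comm, dist_eq_norm]; exact norm_sub_norm_le _ _
  linarith

lemma convex_ball_sub {n : ℕ} {H : Set (Pt n)} (hH : Convex ℝ H) (c z0 : Pt n) (δ σ : ℝ)
    (hδ : Metric.closedBall c δ ⊆ H) (hz0 : z0 ∈ H) (h0 : 0 < σ) (h1 : σ ≤ 1) :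
    Metric.closedBall (z0 + σ • (c - z0)) (σ * δ) ⊆ H := by
  intro y hy
  rw [Metric.mem_closedBall, dist_eq_norm] at hy
  have hc' : c + σ⁻¹ • (y - (z0 + σ • (c - z0))) ∈ H := by
    apply hδ
    rw [Metric.mem_closedBall, dist_eq_norm, add_sub_cancel_left, norm_smul, norm_inv,
      Real.norm_of_nonneg h0.le, inv_mul_le_iff₀ h0]
    exact hy
  have := hH hz0 hc' (by linarith : 0 ≤ 1 - σ) h0.le (by ring)
  convert this using 1
  rw [smul_add, smul_smul, mul_inv_cancel₀ h0.ne', one_smul, sub_smul, one_smul, smul_sub]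
  abel

lemma dens_uniform {n : ℕ} {H : Set (Pt n)} (hHc : IsCompact H) (ν : Measure H) (T : ℝ) (hT : 0 < T)
    (hd : ∀ z₀ : H, ∃ r₀ > 0, ∀ r : ℝ, 0 < r → r < r₀ →
      ENNReal.ofReal (r ^ T) ≤ ν (Metric.ball z₀ r))
    (μ : Measure (Pt n)) [μ.IsAddHaarMeasure] (ε : ℝ≥0∞) (hε : ε ≠ 0) :
    ∃ R0 > 0, ∃ A : Set H, μ (H \ Subtype.val '' A) < ε ∧
      ∀ z ∈ A, ∀ r : ℝ, 0 < r → r < R0 → ENNReal.ofReal (r ^ T) ≤ ν (Metric.ball z r) := by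
  let A : ℕ → Set H := fun k => {z | ∀ r : ℝ, 0 < r → r < 1 / ((k:ℝ) + 1) →
    ENNReal.ofReal (r ^ T) ≤ ν (Metric.ball z r)}
  have hAcl : ∀ k, IsClosed (A k) := by
    intro k
    rw [← isSeqClosed_iff_isClosed]
    intro x z hx hxz r hr hrk
    have hlim : Tendsto (fun e : ℝ => ENNReal.ofReal ((r - e) ^ T)) (𝓝[>] 0)
        (𝓝 (ENNReal.ofReal ((r - 0) ^ T))) := by
      apply ENNReal.tendsto_ofReal
      apply Tendsto.mono_left _ nhdsWithin_le_nhds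
      exact ((continuous_const.sub continuous_id).rpow_const (fun _ => Or.inr hT.le)).tendsto 0
    rw [sub_zero] at hlim
    refine le_of_tendsto hlim ?_
    filter_upwards [self_mem_nhdsWithin, nhdsWithin_le_nhds (gt_mem_nhds hr)] with e he her
    have he : 0 < e := he
    obtain ⟨j, hj⟩ := (Metric.tendsto_atTop.1 hxz e he)
    refine (hx j (r - e) (by linarith) (by linarith)).trans (measure_mono ?_)
    apply Metric.ball_subset_ball'
    have := hj j le_rfl
    linarith
  have hcl : ∀ k, IsClosed (Subtype.val '' A k) := fun k =>
    hHc.isClosed.isClosedEmbedding_subtypeVal.isClosedMap _ (hAcl k)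
  have hmono : Monotone A := by
    intro k l hkl z hz r hr hrl
    refine hz r hr (hrl.trans_le ?_)
    apply one_div_le_one_div_of_le (by positivity)
    have : (k:ℝ) ≤ l := by exact_mod_cast hkl
    linarith
  have hlim := tendsto_measure_iInter_atTop (μ := μ) (s := fun k => H \ Subtype.val '' A k)
    (fun k => (hHc.isClosed.measurableSet.diff (hcl k).measurableSet).nullMeasurableSet)
    (fun k l hkl => Set.sdiff_subset_sdiff_right (Set.image_mono (hmono hkl)))
    ⟨0, ((measure_mono Set.sdiff_subset).trans_lt hHc.measure_lt_top).ne⟩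
  have hemp : ⋂ k, H \ Subtype.val '' A k = ∅ := by
    rw [Set.eq_empty_iff_forall_notMem]
    intro z hz
    rw [Set.mem_iInter] at hz
    have hzH := (hz 0).1
    obtain ⟨r0, hr0, h⟩ := hd ⟨z, hzH⟩
    obtain ⟨k, hk⟩ := exists_nat_one_div_lt hr0
    exact (hz k).2 ⟨⟨z, hzH⟩, fun r hr hrk => h r hr (hrk.trans hk), rfl⟩
  rw [hemp, measure_empty] at hlim
  obtain ⟨k, hk⟩ := (hlim.eventually_lt_const (pos_iff_ne_zero.2 hε)).exists
  exact ⟨1 / ((k:ℝ) + 1), by positivity, A k, hk, fun z hz => hz⟩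

end

section
lemma bm_core {n d : ℕ} (hd : 0 < d) {H : Set (Pt n)} (hHconv : Convex ℝ H)
    (Q : H → ℝ) (c : Pt n) (δ D ε ρ θ κ : ℝ) (hδ : Metric.closedBall c δ ⊆ H) (hδ0 : 0 < δ)
    (hD : ∀ z ∈ H, ‖c - z‖ ≤ D) (hε : 0 < ε)
    (hρ : ∀ z z' : H, dist z z' ≤ ρ → |Q z - Q z'| ≤ ε)
    (hθ0 : 0 < θ) (hθε : θ ≤ ε) (hθ2 : Real.cosh θ ≤ 2) (hκ : 0 < κ) (hκ1 : 3 * κ ≤ 1)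
    (hκρ : 3 * κ * (D + δ) ≤ ρ)
    (μ : Measure (Pt n)) [μ.IsAddHaarMeasure] (A : Set H) (r1 : ℝ)
    (hr1 : r1 = (Real.cosh θ - 1) * κ * δ)
    (hA : 2 * μ (H \ Subtype.val '' A) < μ (Metric.ball 0 (r1 / 2)))
    (p : MvPolynomial (Fin n) ℂ) (hp : p.totalDegree ≤ d) (z0 : H)
    (hmax : ∀ z : H, ‖pev p z‖ * Real.exp (-(d:ℝ) * Q z) ≤ ‖pev p z0‖ * Real.exp (-(d:ℝ) * Q z0))
    (hpz : 0 < ‖pev p z0‖) :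
    ∃ z2 ∈ A, ∀ z : H, dist z z2 < r1 / 8 * Real.exp (-(5 * d * ε)) →
      Q z ≤ Q z0 + ε ∧ 1 / 2 * Real.exp (-(4 * d * ε)) * ‖pev p z0‖ ≤ ‖pev p z‖ := by
  have hd0 : (0:ℝ) < d := by exact_mod_cast hd
  set M0 := ‖pev p z0‖ with hM0
  have hcosh : 1 < Real.cosh θ := Real.one_lt_cosh.2 hθ0.ne'
  have hr1pos : 0 < r1 := by rw [hr1]; have : 0 < Real.cosh θ - 1 := by linarith
                             positivity
  have hDpos : 0 ≤ D := (norm_nonneg _).trans (hD z0 z0.2)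
  have hnear : ∀ z : H, dist z z0 ≤ ρ → ‖pev p z‖ ≤ Real.exp (d * ε) * M0 := by
    intro z hz
    have h1 := hmax z
    have h2 := (abs_le.1 (hρ z z0 hz)).2
    have h3 : ‖pev p z‖ ≤ M0 * Real.exp (d * (Q z - Q z0)) := by
      have : M0 * Real.exp (d * (Q z - Q z0)) =
        (M0 * Real.exp (-(d:ℝ) * Q z0)) * Real.exp (d * Q z) := by
        rw [mul_assoc, ← Real.exp_add]; congr 2; ring
      rw [this]
      refine le_trans (le_of_eq ?_) (mul_le_mul_of_nonneg_right h1 (Real.exp_pos _).le)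
      rw [mul_assoc, ← Real.exp_add]; simp
    refine h3.trans ?_
    rw [mul_comm]
    refine mul_le_mul_of_nonneg_right (Real.exp_le_exp.2 ?_) hpz.le
    exact mul_le_mul_of_nonneg_left h2 hd0.le
  obtain ⟨t, ht, hz1⟩ := bm_step1 p hp z0 (κ • (c - z0)) θ
  rw [smul_smul] at hz1
  set σ := (Real.cosh θ - t) * κ with hσ
  set z1 : Pt n := z0 + σ • (c - z0) with hz1def
  have hσ1 : (Real.cosh θ - 1) * κ ≤ σ := by
    rw [hσ]; exact mul_le_mul_of_nonneg_right (by linarith [ht.2]) hκ.le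
  have hσ2 : σ ≤ 3 * κ := by
    rw [hσ]; exact mul_le_mul_of_nonneg_right (by linarith [ht.1]) hκ.le
  have hσ0 : 0 < σ := lt_of_lt_of_le (mul_pos (by linarith) hκ) hσ1
  have hr1σ : r1 ≤ σ * δ := by rw [hr1]; exact mul_le_mul_of_nonneg_right hσ1 hδ0.le
  have hball : ∀ y : Pt n, dist y z1 ≤ r1 → y ∈ H ∧ dist y z0 ≤ ρ := by
    intro y hy
    refine ⟨convex_ball_sub hHconv c z0 δ σ hδ z0.2 hσ0 (hσ2.trans hκ1)
      (Metric.mem_closedBall.2 (hy.trans hr1σ)), ?_⟩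
    have h1 : dist z1 (z0:Pt n) ≤ σ * D := by
      rw [dist_eq_norm, hz1def, add_sub_cancel_left, norm_smul, Real.norm_of_nonneg hσ0.le]
      exact mul_le_mul_of_nonneg_left (hD z0 z0.2) hσ0.le
    have h2 := dist_triangle y z1 z0
    have h3 : σ * (D + δ) ≤ 3 * κ * (D + δ) := mul_le_mul_of_nonneg_right hσ2 (by positivity)
    nlinarith
  have hup : ∀ y : Pt n, dist y z1 ≤ r1 → ‖pev p y‖ ≤ Real.exp (d * ε) * M0 := fun y hy =>
    hnear ⟨y, (hball y hy).1⟩ (hball y hy).2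
  have hlow : Real.exp (-(d * ε)) * M0 ≤ ‖pev p z1‖ := by
    have h1 : Real.exp (d * |θ|) ≤ Real.exp (d * ε) := by
      rw [abs_of_pos hθ0]
      exact Real.exp_le_exp.2 (mul_le_mul_of_nonneg_left hθε hd0.le)
    have h2 : M0 ≤ ‖pev p z1‖ * Real.exp (d * ε) :=
      hz1.trans (mul_le_mul_of_nonneg_left h1 (norm_nonneg _))
    rw [Real.exp_neg, inv_mul_le_iff₀ (Real.exp_pos _), mul_comm]
    exact h2
  obtain ⟨z2, hz2A, hz2d, hz2⟩ : ∃ z2 ∈ A, dist (z2 : Pt n) z1 < r1 / 2 ∧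
      Real.exp (-(4 * d * ε)) * M0 ≤ ‖pev p z2‖ := by
    by_contra hcon
    push Not at hcon
    have h1 := bm_step2 μ p hp z1 (r1 / 2) (Real.exp (-(4 * d * ε)) * M0) (Real.exp (d * ε) * M0)
      (by positivity) (by
        refine mul_le_mul_of_nonneg_right (Real.exp_le_exp.2 ?_) hpz.le
        have : 0 < d * ε := by positivity
        linarith) (by
        intro v hv
        apply hup
        have hv' : ‖v‖ < r1 / 2 := by simpa using hv
        rw [dist_eq_norm, add_sub_cancel_left]
        linarith) (by
        refine lt_of_le_of_lt ?_ hA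
        refine mul_le_mul_right ?_ 2
        rw [← measure_preimage_add μ z1 (H \ Subtype.val '' A)]
        refine measure_mono ?_
        rintro v ⟨hv, hvm⟩
        have hv' : ‖v‖ < r1 / 2 := by simpa using hv
        have hdv : dist (z1 + v) z1 < r1 / 2 := by
          rw [dist_eq_norm, add_sub_cancel_left]; exact hv'
        refine ⟨(hball (z1 + v) (by linarith)).1, ?_⟩
        rintro ⟨y, hyA, hy⟩
        have := hcon y hyA (by rw [hy]; exact hdv)
        rw [hy] at this
        exact absurd hvm (not_lt.2 this.le))
    have h2 : (Real.exp (-(d * ε)) * M0) ^ 2 ≤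
        Real.exp (-(4 * d * ε)) * M0 * (Real.exp (d * ε) * M0) :=
      (pow_le_pow_left₀ (by positivity) hlow 2).trans h1
    have e1 : (Real.exp (-(d * ε)) * M0) ^ 2 = Real.exp (-(2 * d * ε)) * M0 ^ 2 := by
      rw [mul_pow, ← Real.exp_nat_mul]; congr 2; push_cast; ring
    have e2 : Real.exp (-(4 * d * ε)) * M0 * (Real.exp (d * ε) * M0) =
        Real.exp (-(3 * d * ε)) * M0 ^ 2 := by
      have : Real.exp (-(3 * d * ε)) = Real.exp (-(4 * d * ε)) * Real.exp (d * ε) := by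
        rw [← Real.exp_add]; congr 1; ring
      rw [this]; ring
    rw [e1, e2] at h2
    have h3 := Real.exp_le_exp.1 (le_of_mul_le_mul_right h2 (by positivity))
    have : 0 < d * ε := by positivity
    nlinarith
  refine ⟨z2, hz2A, fun z hz => ?_⟩
  have hexp1 : Real.exp (-(5 * d * ε)) ≤ 1 := Real.exp_le_one_iff.2 (by
    have : 0 < d * ε := by positivity
    linarith)
  have hz' : dist (z : Pt n) z2 < r1 / 8 * Real.exp (-(5 * d * ε)) := hz
  have hzr : dist (z:Pt n) z2 < r1 / 2 := by nlinarith
  have hzz1 : dist (z:Pt n) z1 ≤ r1 := by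
    have := dist_triangle (z:Pt n) z2 z1
    linarith
  refine ⟨?_, ?_⟩
  · have := (abs_le.1 (hρ z z0 (hball z hzz1).2)).2
    linarith
  · have := bm_step3 p z2 (r1 / 2) (Real.exp (d * ε) * M0) (Real.exp (-(4 * d * ε)) * M0)
      (by positivity) (by positivity) (by
        refine mul_le_mul_of_nonneg_right (Real.exp_le_exp.2 ?_) hpz.le
        have : 0 < d * ε := by positivity
        linarith) (by
        intro y hy
        apply hup
        have h1 := dist_triangle y z2 z1
        have h2 : dist y z2 < r1 / 2 := hy
        linarith) hz2 z (by
        refine hz'.trans_le (le_of_eq ?_)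
        have : Real.exp (-(5 * d * ε)) = Real.exp (-(4 * d * ε)) / Real.exp (d * ε) := by
          rw [← Real.exp_sub]; congr 1; ring
        rw [this]
        field_simp
        norm_num)
    linarith

lemma bm {n : ℕ} {H : Set (Pt n)} (hHc : IsCompact H) (hHconv : Convex ℝ H)
    (hHi : (interior H).Nonempty) (ν : Measure H) (hdens : DensityCond H ν)
    (Q : H → ℝ) (hQ : Continuous Q) (η : ℝ) (hη : 0 < η) :
    ∀ᶠ d : ℕ in atTop, ∀ p : MvPolynomial (Fin n) ℂ, p.totalDegree ≤ d → ∀ z : H,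
      ENNReal.ofReal ((‖pev p z‖ * Real.exp (-(d:ℝ) * Q z)) ^ 2) ≤
        ENNReal.ofReal (Real.exp (η * d)) *
          ∫⁻ x : H, ENNReal.ofReal ((‖pev p x‖ * Real.exp (-(d:ℝ) * Q x)) ^ 2) ∂ν := by
  haveI : CompactSpace H := isCompact_iff_compactSpace.1 hHc
  obtain ⟨T, hT, hdT⟩ := hdens
  obtain ⟨c, hc⟩ := hHi
  obtain ⟨δ, hδ0, hδ⟩ := Metric.nhds_basis_closedBall.mem_iff.1 (mem_interior_iff_mem_nhds.1 hc)
  obtain ⟨D, hD⟩ := hHc.isBounded.subset_closedBall c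
  have hD' : ∀ z ∈ H, ‖c - z‖ ≤ D := fun z hz => by
    have := hD hz
    rwa [Metric.mem_closedBall, dist_comm, dist_eq_norm] at this
  have hDpos : 0 ≤ D := by
    have := hD' c (interior_subset hc); simpa using this
  set ε := η / (2 * (10 + 5 * T)) with hεdef
  have hε : 0 < ε := by positivity
  obtain ⟨ρ, hρ0, hρ⟩ : ∃ ρ > 0, ∀ z z' : H, dist z z' ≤ ρ → |Q z - Q z'| ≤ ε := by
    obtain ⟨ρ, hρ0, h⟩ := Metric.uniformContinuous_iff.1
      (CompactSpace.uniformContinuous_of_continuous hQ) ε hε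
    refine ⟨ρ / 2, by positivity, fun z z' hz => ?_⟩
    have := h (a := z) (b := z') (by linarith)
    rw [Real.dist_eq] at this
    exact this.le
  obtain ⟨θ, hθ0, hθε, hθ2⟩ : ∃ θ, 0 < θ ∧ θ ≤ ε ∧ Real.cosh θ ≤ 2 := by
    have h1 : ∀ᶠ θ in 𝓝[>] (0:ℝ), Real.cosh θ < 2 := by
      apply nhdsWithin_le_nhds
      exact (Real.continuous_cosh.tendsto 0).eventually_lt_const (by simp)
    have h2 : ∀ᶠ θ in 𝓝[>] (0:ℝ), θ < ε := nhdsWithin_le_nhds (gt_mem_nhds hε)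
    obtain ⟨θ, h0, h1, h2⟩ := (h1.and (h2.and self_mem_nhdsWithin)).exists
    exact ⟨θ, h2, h1.le, h0.le⟩
  obtain ⟨κ, hκ, hκ1, hκρ⟩ : ∃ κ, 0 < κ ∧ 3 * κ ≤ 1 ∧ 3 * κ * (D + δ) ≤ ρ := by
    refine ⟨min (1 / 3) (ρ / (3 * (D + δ))), by positivity, ?_, ?_⟩
    · have := min_le_left (1 / 3) (ρ / (3 * (D + δ))); linarith
    · have := min_le_right (1 / 3) (ρ / (3 * (D + δ)))
      rw [le_div_iff₀ (by positivity)] at this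
      linarith
  set r1 := (Real.cosh θ - 1) * κ * δ with hr1
  have hr1pos : 0 < r1 := by
    have : 0 < Real.cosh θ - 1 := by linarith [Real.one_lt_cosh.2 hθ0.ne']
    positivity
  let μ : Measure (Pt n) := Measure.addHaar
  have hb0 : μ (Metric.ball 0 (r1 / 2)) / 2 ≠ 0 := by
    have := Metric.measure_ball_pos μ (0 : Pt n) (half_pos hr1pos)
    simp [this.ne']
  obtain ⟨R0, hR0, A, hA, hAν⟩ := dens_uniform hHc ν T hT hdT μ _ hb0
  have hA2 : 2 * μ (H \ Subtype.val '' A) < μ (Metric.ball 0 (r1 / 2)) := by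
    rw [ENNReal.lt_div_iff_mul_lt (by simp) (by simp)] at hA
    rwa [mul_comm]
  have hlim1 : Tendsto (fun d : ℕ => Real.exp (-(5 * d * ε))) atTop (𝓝 0) := by
    apply Real.tendsto_exp_neg_atTop_nhds_zero.comp
    have : Tendsto (fun d : ℕ => (5 * ε) * (d:ℝ)) atTop atTop :=
      tendsto_natCast_atTop_atTop.const_mul_atTop (by positivity)
    refine this.congr fun d => by ring
  have hlim2 : Tendsto (fun d : ℕ => Real.exp (-(η / 2 * d))) atTop (𝓝 0) := by
    apply Real.tendsto_exp_neg_atTop_nhds_zero.comp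
    exact tendsto_natCast_atTop_atTop.const_mul_atTop (by positivity)
  have hev1 : ∀ᶠ d : ℕ in atTop, r1 / 8 * Real.exp (-(5 * d * ε)) < R0 := by
    have := hlim1.const_mul (r1 / 8)
    rw [mul_zero] at this
    exact this.eventually_lt_const hR0
  have hev2 : ∀ᶠ d : ℕ in atTop, Real.exp (-(η / 2 * d)) < (r1 / 8) ^ T / 4 :=
    hlim2.eventually_lt_const (by positivity)
  filter_upwards [hev1, hev2, eventually_gt_atTop 0] with d h1 h2 hd p hp z
  have hd0 : (0:ℝ) < d := by exact_mod_cast hd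
  set f : H → ℝ := fun x => ‖pev p x‖ * Real.exp (-(d:ℝ) * Q x) with hf
  have hfc : Continuous f := by
    have := pev_cont p
    fun_prop
  obtain ⟨z0, -, hz0⟩ := isCompact_univ.exists_isMaxOn ⟨z, Set.mem_univ z⟩ hfc.continuousOn
  have hz0' : ∀ x, f x ≤ f z0 := fun x => hz0 (Set.mem_univ x)
  have hfnn : ∀ x, 0 ≤ f x := fun x => by positivity
  refine le_trans (ENNReal.ofReal_le_ofReal (pow_le_pow_left₀ (hfnn z) (hz0' z) 2)) ?_
  rcases (norm_nonneg (pev p (z0:Pt n))).eq_or_lt with h0 | hpos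
  · have : f z0 = 0 := by simp only [hf]; rw [← h0, zero_mul]
    rw [this]; simp
  obtain ⟨z2, hz2, hz2b⟩ := bm_core hd hHconv Q c δ D ε ρ θ κ hδ hδ0 hD' hε hρ hθ0 hθε hθ2 hκ hκ1
    hκρ μ A r1 hr1 hA2 p hp z0 hz0' hpos
  set r := r1 / 8 * Real.exp (-(5 * d * ε)) with hr
  have hrpos : 0 < r := by positivity
  set b := 1 / 2 * Real.exp (-(5 * d * ε)) * f z0 with hb
  have hlb : ∀ x ∈ Metric.ball z2 r, ENNReal.ofReal (b ^ 2) ≤ ENNReal.ofReal (f x ^ 2) := by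
    intro x hx
    obtain ⟨hq, hpx⟩ := hz2b x hx
    refine ENNReal.ofReal_le_ofReal (pow_le_pow_left₀ (by positivity) ?_ 2)
    have e : b = (1 / 2 * Real.exp (-(4 * d * ε)) * ‖pev p z0‖) *
        Real.exp (-(d:ℝ) * (Q z0 + ε)) := by
      have : Real.exp (-(5 * d * ε)) * Real.exp (-(d:ℝ) * Q z0) =
        Real.exp (-(4 * d * ε)) * Real.exp (-(d:ℝ) * (Q z0 + ε)) := by
        rw [← Real.exp_add, ← Real.exp_add]; congr 1; ring
      simp only [hb, hf]
      linear_combination (1 / 2 * ‖pev p z0‖) * this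
    rw [e]
    refine mul_le_mul hpx (Real.exp_le_exp.2 ?_) (Real.exp_pos _).le (norm_nonneg _)
    nlinarith
  have hhnt : ENNReal.ofReal (b ^ 2) * ENNReal.ofReal (r ^ T) ≤
      ∫⁻ x : H, ENNReal.ofReal (f x ^ 2) ∂ν := by
    refine le_trans (mul_le_mul_right (hAν z2 hz2 r hrpos h1) _) ?_
    rw [← setLIntegral_const]
    exact (setLIntegral_mono' Metric.isOpen_ball.measurableSet hlb).trans
      (setLIntegral_le_lintegral _ _)
  refine le_trans ?_ (mul_le_mul_right hhnt _)
  rw [← ENNReal.ofReal_mul (by positivity), ← ENNReal.ofReal_mul (Real.exp_pos _).le]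
  refine ENNReal.ofReal_le_ofReal ?_
  have e1 : r ^ T = (r1 / 8) ^ T * Real.exp (-(5 * T * d * ε)) := by
    rw [hr, Real.mul_rpow (by positivity) (Real.exp_pos _).le, ← Real.exp_mul]
    congr 2; ring
  have e2 : b ^ 2 = 1 / 4 * Real.exp (-(10 * d * ε)) * f z0 ^ 2 := by
    have : Real.exp (-(10 * d * ε)) = Real.exp (-(5 * d * ε)) ^ 2 := by
      rw [← Real.exp_nat_mul]; congr 1; push_cast; ring
    rw [hb, this]; ring
  have e3 : Real.exp (η * d) * Real.exp (-(10 * d * ε)) * Real.exp (-(5 * T * d * ε)) *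
      Real.exp (-(η / 2 * d)) = 1 := by
    rw [← Real.exp_add, ← Real.exp_add, ← Real.exp_add, Real.exp_eq_one_iff, hεdef]
    field_simp
    ring
  rw [e1, e2]
  calc f z0 ^ 2 = Real.exp (η * d) * Real.exp (-(10 * d * ε)) * Real.exp (-(5 * T * d * ε)) *
      f z0 ^ 2 * Real.exp (-(η / 2 * d)) := by linear_combination (- f z0 ^ 2) * e3
    _ ≤ Real.exp (η * d) * Real.exp (-(10 * d * ε)) * Real.exp (-(5 * T * d * ε)) *
      f z0 ^ 2 * ((r1 / 8) ^ T / 4) := mul_le_mul_of_nonneg_left h2.le (by positivity)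
    _ = _ := by ring

end

section
lemma vdm_update {n d : ℕ} {E : Fin (sdim n d) → (Fin n → ℕ)} (hE : IsEnum n d E)
    (a : Fin (sdim n d) → Pt n) (j : Fin (sdim n d)) :
    ∃ p : MvPolynomial (Fin n) ℂ, p.totalDegree ≤ d ∧
      ∀ z, VDM n d E (Function.update a j z) = pev p z := by
  set A : Matrix (Fin (sdim n d)) (Fin (sdim n d)) ℂ :=
    Matrix.of fun i j => ∏ k, (a j k) ^ (E i k) with hA
  refine ⟨∑ i, MvPolynomial.monomial (Finsupp.equivFunOnFinite.symm (E i)) (A.adjugate j i),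
    ?_, ?_⟩
  · apply MvPolynomial.totalDegree_finsetSum_le
    intro i _
    refine (MvPolynomial.totalDegree_monomial_le _ _).trans ?_
    rw [Finsupp.sum_fintype _ _ (by simp)]
    simpa using (hE.2 (E i)).2 ⟨i, rfl⟩
  · intro z
    have h1 : VDM n d E (Function.update a j z) =
        (A.updateCol j fun i => ∏ k, (z k) ^ (E i k)).det := by
      unfold VDM
      congr 1
      ext i l
      by_cases h : l = j
      · subst h; simp
      · simp [h, hA]
    rw [h1, ← Matrix.cramer_apply, Matrix.cramer_eq_adjugate_mulVec]
    unfold pev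
    rw [map_sum, Matrix.mulVec, dotProduct]
    refine Finset.sum_congr rfl fun i _ => ?_
    simp [MvPolynomial.eval_monomial, Finsupp.prod_fintype]

lemma vq_cont {n d : ℕ} (E : Fin (sdim n d) → (Fin n → ℕ)) {H : Set (Pt n)} (Q : H → ℝ)
    (hQ : Continuous Q) : Continuous (vq n d E Q) := by
  unfold vq VDM
  refine Continuous.mul (Continuous.norm ?_) ?_
  · refine Continuous.matrix_det (continuous_matrix fun i j => ?_)
    simp only [Matrix.of_apply]
    refine continuous_finsetProd _ fun k _ => Continuous.pow ?_ _
    exact (EuclideanSpace.proj (𝕜 := ℂ) k).continuous.comp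
      (continuous_subtype_val.comp (continuous_apply j))
  · refine continuous_finsetProd _ fun k _ => ?_
    have := hQ.comp (continuous_apply (A := fun _ : Fin (sdim n d) => H) k)
    exact Real.continuous_exp.comp (this.const_mul _)

lemma bm_one {n d : ℕ} {E : Fin (sdim n d) → (Fin n → ℕ)} (hE : IsEnum n d E) {H : Set (Pt n)}
    (ν : Measure H) (Q : H → ℝ) (K : ℝ≥0∞)
    (hbm : ∀ p : MvPolynomial (Fin n) ℂ, p.totalDegree ≤ d → ∀ z : H,
      ENNReal.ofReal ((‖pev p z‖ * Real.exp (-(d:ℝ) * Q z)) ^ 2) ≤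
        K * ∫⁻ x : H, ENNReal.ofReal ((‖pev p x‖ * Real.exp (-(d:ℝ) * Q x)) ^ 2) ∂ν)
    (a : Fin (sdim n d) → H) (j : Fin (sdim n d)) :
    ENNReal.ofReal (vq n d E Q a ^ 2) ≤
      K * ∫⁻ x : H, ENNReal.ofReal (vq n d E Q (Function.update a j x) ^ 2) ∂ν := by
  obtain ⟨p, hp, hpe⟩ := vdm_update hE (fun j => (a j : Pt n)) j
  set C : ℝ := (∏ l ∈ Finset.univ.erase j, Real.exp (-(d : ℝ) * Q (a l))) ^ 2 with hC
  have hC0 : 0 ≤ C := by positivity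
  have key : ∀ x : H, ENNReal.ofReal (vq n d E Q (Function.update a j x) ^ 2) =
      ENNReal.ofReal C * ENNReal.ofReal ((‖pev p x‖ * Real.exp (-(d:ℝ) * Q x)) ^ 2) := by
    intro x
    rw [← ENNReal.ofReal_mul hC0]
    congr 1
    have h1 : (fun l => ((Function.update a j x l : H) : Pt n)) =
        Function.update (fun j => (a j : Pt n)) j x := by
      ext l : 1
      by_cases h : l = j
      · subst h; simp
      · simp [h]
    unfold vq
    rw [h1, hpe, ← Finset.mul_prod_erase _ _ (Finset.mem_univ j), Function.update_self]
    have h2 : ∏ l ∈ Finset.univ.erase j, Real.exp (-(d : ℝ) * Q (Function.update a j x l)) =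
        ∏ l ∈ Finset.univ.erase j, Real.exp (-(d : ℝ) * Q (a l)) :=
      Finset.prod_congr rfl fun l hl => by rw [Function.update_of_ne (Finset.ne_of_mem_erase hl)]
    rw [h2, hC]; ring
  have h3 := key (a j)
  rw [Function.update_eq_self] at h3
  rw [h3, lintegral_congr key, lintegral_const_mul' _ _ ENNReal.ofReal_ne_top]
  calc _ ≤ ENNReal.ofReal C * (K * _) := mul_le_mul_right (hbm p hp (a j)) _
    _ = _ := by ring

lemma bm_all {n d : ℕ} {E : Fin (sdim n d) → (Fin n → ℕ)} (hE : IsEnum n d E) {H : Set (Pt n)}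
    (ν : Measure H) [IsFiniteMeasure ν] (Q : H → ℝ) (hQ : Continuous Q) (K : ℝ≥0∞)
    (hbm : ∀ p : MvPolynomial (Fin n) ℂ, p.totalDegree ≤ d → ∀ z : H,
      ENNReal.ofReal ((‖pev p z‖ * Real.exp (-(d:ℝ) * Q z)) ^ 2) ≤
        K * ∫⁻ x : H, ENNReal.ofReal ((‖pev p x‖ * Real.exp (-(d:ℝ) * Q x)) ^ 2) ∂ν)
    (a : Fin (sdim n d) → H) :
    ENNReal.ofReal (vq n d E Q a ^ 2) ≤
      K ^ (sdim n d) * ∫⁻ a, ENNReal.ofReal (vq n d E Q a ^ 2) ∂(Measure.pi fun _ => ν) := by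
  let F : (Fin (sdim n d) → H) → ℝ≥0∞ := fun a => ENNReal.ofReal (vq n d E Q a ^ 2)
  have hF : Measurable F :=
    (ENNReal.continuous_ofReal.comp ((vq_cont E Q hQ).pow 2)).measurable
  have main : ∀ (S : Finset (Fin (sdim n d))) (a : Fin (sdim n d) → H),
      F a ≤ K ^ S.card * lmarginal (fun _ => ν) S F a := by
    intro S
    induction S using Finset.induction_on with
    | empty => intro a; simp
    | insert j S hj ih =>
      intro a
      rw [lmarginal_insert F hF hj, Finset.card_insert_of_notMem hj, pow_succ]
      refine (bm_one hE ν Q K hbm a j).trans ?_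
      calc _ ≤ K * ∫⁻ x, K ^ S.card * lmarginal (fun _ => ν) S F (Function.update a j x) ∂ν :=
            mul_le_mul_right (lintegral_mono fun x => ih _) _
        _ = _ := by
          rw [lintegral_const_mul]
          · ring
          · exact (hF.lmarginal (fun _ => ν)).comp (measurable_update a)
  have := main Finset.univ a
  rw [lmarginal_univ, Finset.card_univ, Fintype.card_fin] at this
  exact this

/-- the monomial functions -/
def phiE {n d : ℕ} (E : Fin (sdim n d) → (Fin n → ℕ)) (H : Set (Pt n)) (i : Fin (sdim n d))
    (z : H) : ℂ := ∏ k, ((z : Pt n) k) ^ (E i k)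

lemma phiE_cont {n d : ℕ} (E : Fin (sdim n d) → (Fin n → ℕ)) (H : Set (Pt n))
    (i : Fin (sdim n d)) : Continuous (phiE E H i) := by
  unfold phiE
  refine continuous_finsetProd _ fun k _ => Continuous.pow ?_ _
  exact (EuclideanSpace.proj (𝕜 := ℂ) k).continuous.comp continuous_subtype_val

lemma rhoF_eq_vq {n d : ℕ} (E : Fin (sdim n d) → (Fin n → ℕ)) (H : Set (Pt n)) (Q : H → ℝ)
    (a : Fin (sdim n d) → H) : rhoF (phiE E H) d Q a = vq n d E Q a ^ 2 := rfl

/-- lower bound for the weighted free energy -/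
lemma Zf_lower {n : ℕ} {E : ∀ d, Fin (sdim n d) → (Fin n → ℕ)} (hE : ∀ d, IsEnum n d (E d))
    {H : Set (Pt n)} (hHc : IsCompact H) (hHconv : Convex ℝ H)
    (hHi : (interior H).Nonempty) (ν : Measure H) [IsFiniteMeasure ν] (hdens : DensityCond H ν)
    (Q : H → ℝ) (hQ : Continuous Q) (c c' : ℝ) (hc' : 0 < c') (hcc : c' < c)
    (hc : ENNReal.ofReal c < deltaBar n E H Q) :
    ∀ᶠ d : ℕ in atTop, c' ^ (2 * (d * sdim n d)) ≤ Zf ν (phiE (E d) H) d Q := by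
  haveI : CompactSpace H := isCompact_iff_compactSpace.1 hHc
  obtain ⟨b, hb1, hb2⟩ := exists_between hcc
  have hb0 : 0 < b := hc'.trans hb1
  set η := 2 * Real.log (b / c') with hη
  have hη0 : 0 < η := by
    have : 0 < Real.log (b / c') := Real.log_pos ((one_lt_div hc').2 hb1)
    positivity
  filter_upwards [bm hHc hHconv hHi ν hdens Q hQ η hη0, delta_liminf hE hHc hHi Q hQ c b hb0 hb2 hc]
    with d hbm ⟨a, ha⟩
  have h1 := bm_all (hE d) ν Q hQ _ hbm a
  have hI : ∫⁻ a, ENNReal.ofReal (vq n d (E d) Q a ^ 2) ∂(Measure.pi fun _ => ν) =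
      ENNReal.ofReal (∫ a, vq n d (E d) Q a ^ 2 ∂(Measure.pi fun _ => ν)) :=
    (ofReal_integral_eq_lintegral_ofReal (f := fun a => vq n d (E d) Q a ^ 2)
      (cont_integrable (Measure.pi fun _ => ν) ((vq_cont (E d) Q hQ).pow 2))
      (Eventually.of_forall fun a => sq_nonneg _)).symm
  rw [hI,
    ← ENNReal.ofReal_pow (Real.exp_pos _).le, ← ENNReal.ofReal_mul (by positivity),
    ENNReal.ofReal_le_ofReal_iff (mul_nonneg (by positivity)
      (integral_nonneg fun a => sq_nonneg _))] at h1
  have h2 : (b ^ (d * sdim n d)) ^ 2 ≤ vq n d (E d) Q a ^ 2 :=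
    pow_le_pow_left₀ (by positivity) ha.le 2
  have h3 : Real.exp (η * d) ^ sdim n d = (b / c') ^ (2 * (d * sdim n d)) := by
    rw [← Real.exp_nat_mul, ← Real.exp_log (div_pos hb0 hc'), ← Real.exp_nat_mul, hη]
    congr 1
    push_cast
    ring
  have h4 := h2.trans h1
  rw [h3, ← pow_mul, mul_comm _ 2, div_pow, div_mul_eq_mul_div, le_div_iff₀ (by positivity)] at h4
  exact le_of_mul_le_mul_left h4 (by positivity)

end

section
lemma emp_integral {X : Type*} [MeasurableSpace X] [TopologicalSpace X] [CompactSpace X]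
    [BorelSpace X] {s : ℕ} (hs : s ≠ 0) (a : Fin s → X) (f : X → ℝ) (hf : Continuous f) :
    ∫ x, f x ∂(empPM hs a : Measure X) = (∑ j, f (a j)) / s := by
  have h1 : (empPM hs a : Measure X) = ((s : ℝ≥0∞))⁻¹ • ∑ j, Measure.dirac (a j) := rfl
  rw [h1, integral_smul_measure, integral_finsetSum_measure]
  · simp only [ENNReal.toReal_inv, ENNReal.toReal_natCast, smul_eq_mul]
    rw [div_eq_inv_mul]
    congr 1
    refine Finset.sum_congr rfl fun j _ => ?_
    exact integral_dirac' _ _ hf.stronglyMeasurable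
  · intro i _
    exact cont_integrable _ hf

lemma empPM_cont {X : Type*} [MeasurableSpace X] [TopologicalSpace X] [CompactSpace X]
    [BorelSpace X] {s : ℕ} (hs : s ≠ 0) : Continuous (empPM hs : (Fin s → X) → _) := by
  rw [continuous_iff_continuousAt]
  intro a
  unfold ContinuousAt
  rw [ProbabilityMeasure.tendsto_iff_forall_integral_tendsto]
  intro f
  simp_rw [emp_integral hs _ _ f.continuous]
  refine ContinuousAt.tendsto (f := fun x : Fin s → X => (∑ j, f (x j)) / (s:ℝ)) ?_
  refine Continuous.continuousAt ?_
  refine Continuous.div_const ?_ _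
  exact continuous_finsetSum _ fun j _ => f.continuous.comp (continuous_apply j)

lemma nbhd_fin {X : Type*} [MeasurableSpace X] [TopologicalSpace X] [CompactSpace X]
    [BorelSpace X] (μ : ProbabilityMeasure X) (G : Set (ProbabilityMeasure X)) (hG : IsOpen G)
    (hμ : μ ∈ G) : ∃ (m : ℕ) (u : Fin m → X → ℝ) (ε B : ℝ), 0 < ε ∧ 0 < B ∧
      (∀ i, Continuous (u i)) ∧ (∀ i x, |u i x| ≤ B) ∧ ∀ μ' : ProbabilityMeasure X,
        (∀ i, |∫ x, u i x ∂(μ' : Measure X) - ∫ x, u i x ∂(μ : Measure X)| < ε) → μ' ∈ G := by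
  classical
  let F : Filter (ProbabilityMeasure X) := ⨅ f : BoundedContinuousFunction X ℝ,
    comap (fun μ' : ProbabilityMeasure X => ∫ x, f x ∂(μ' : Measure X))
      (𝓝 (∫ x, f x ∂(μ : Measure X)))
  have h1 : Tendsto (fun x => x) F (𝓝 μ) := by
    rw [ProbabilityMeasure.tendsto_iff_forall_integral_tendsto]
    intro f
    exact tendsto_comap.mono_left (iInf_le _ f)
  have h2 : G ∈ F := h1 (hG.mem_nhds hμ)
  rw [Filter.mem_iInf'] at h2
  obtain ⟨S, hS, V, hV, -, hGV, -⟩ := h2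
  have h3 : ∀ f : BoundedContinuousFunction X ℝ, ∃ ε > 0, ∀ μ' : ProbabilityMeasure X,
      |∫ x, f x ∂(μ' : Measure X) - ∫ x, f x ∂(μ : Measure X)| < ε → μ' ∈ V f := by
    intro f
    obtain ⟨U, hU, hUV⟩ := mem_comap.1 (hV f)
    obtain ⟨ε, hε, hb⟩ := Metric.mem_nhds_iff.1 hU
    exact ⟨ε, hε, fun μ' h => hUV (hb (by simpa [Real.dist_eq] using h))⟩
  choose ep hep hepV using h3
  let T := hS.toFinset
  let e := T.equivFin
  obtain ⟨ε, hε, hε'⟩ : ∃ ε > 0, ∀ f ∈ T, ε ≤ ep f := by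
    clear_value T
    clear e
    induction T using Finset.induction_on with
    | empty => exact ⟨1, one_pos, by simp⟩
    | insert f T _ ih =>
      obtain ⟨ε, h, h'⟩ := ih
      refine ⟨min ε (ep f), lt_min h (hep f), fun g hg => ?_⟩
      rcases Finset.mem_insert.1 hg with rfl | hg
      · exact min_le_right _ _
      · exact (min_le_left _ _).trans (h' g hg)
  refine ⟨T.card, fun i => (e.symm i).1, ε, 1 + ∑ f ∈ T, ‖f‖, hε, by positivity,
    fun i => (e.symm i).1.continuous, fun i x => ?_, fun μ' h => ?_⟩
  · have h5 : ‖(e.symm i).1‖ ≤ ∑ f ∈ T, ‖f‖ :=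
      Finset.single_le_sum (f := fun f : BoundedContinuousFunction X ℝ => ‖f‖)
        (fun _ _ => norm_nonneg _) (e.symm i).2
    have h6 := (e.symm i).1.norm_coe_le_norm x
    rw [Real.norm_eq_abs] at h6
    linarith
  · rw [hGV, Set.mem_iInter₂]
    intro f hf
    have hfT : f ∈ T := hS.mem_toFinset.2 hf
    refine hepV f μ' (lt_of_lt_of_le ?_ (hε' f hfT))
    have := h (e ⟨f, hfT⟩)
    simpa using this

lemma Gtilde_meas {n : ℕ} (d : ℕ) {H : Set (Pt n)} (hH : IsCompact H)
    (G : Set (ProbabilityMeasure H)) (hG : IsOpen G) : MeasurableSet (Gtilde d H G) := by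
  haveI : CompactSpace H := isCompact_iff_compactSpace.1 hH
  exact (hG.preimage (empPM_cont (sdim_pos n d).ne')).measurableSet

lemma J_le_W {n : ℕ} (E : ∀ d, Fin (sdim n d) → (Fin n → ℕ)) {H : Set (Pt n)} (hH : IsCompact H)
    (ν : Measure H) (hν : ν Set.univ ≤ 1) (Q : H → ℝ) (μ : ProbabilityMeasure H) :
    JQ n E H ν Q μ ≤ WQ n E H Q μ := by
  haveI : IsFiniteMeasure ν := ⟨hν.trans_lt one_lt_top⟩
  refine iInf₂_mono fun G hG => ?_
  refine limsup_le_limsup ?_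
  filter_upwards [eventually_gt_atTop 0] with d hd
  have hp : (0:ℝ) < d * sdim n d := by
    have := sdim_pos n d; positivity
  have hp' : (0:ℝ) < 2 * d * sdim n d := by rw [mul_assoc]; positivity
  have key : ∀ a ∈ Gtilde d H G, absVDMQ n d (E d) H Q a ≤ Wd n d (E d) H Q G ^ (d * sdim n d : ℝ) := by
    intro a ha
    have h1 : absVDMQ n d (E d) H Q a ^ (1 / (d * sdim n d) : ℝ) ≤ Wd n d (E d) H Q G :=
      le_iSup₂ (f := fun a (_ : a ∈ Gtilde d H G) =>
        absVDMQ n d (E d) H Q a ^ (1 / (d * sdim n d) : ℝ)) a ha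
    have h2 := ENNReal.rpow_le_rpow h1 hp.le
    rwa [← ENNReal.rpow_mul, one_div_mul_cancel hp.ne', ENNReal.rpow_one] at h2
  unfold Jd
  rw [one_div, ENNReal.rpow_inv_le_iff hp']
  calc _ ≤ ∫⁻ a in Gtilde d H G, (Wd n d (E d) H Q G ^ (d * sdim n d : ℝ)) ^ 2
        ∂(Measure.pi fun _ : Fin (sdim n d) => ν) :=
        setLIntegral_mono' (Gtilde_meas d hH G hG.1) fun a ha => pow_le_pow_left₀ zero_le (key a ha) 2
    _ ≤ (Wd n d (E d) H Q G ^ (d * sdim n d : ℝ)) ^ 2 * 1 := by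
        rw [setLIntegral_const]
        refine mul_le_mul_right ?_ _
        refine (measure_mono (Set.subset_univ _)).trans ?_
        rw [Measure.pi_univ]
        exact Finset.prod_le_one' fun _ _ => hν
    _ = _ := by
        rw [mul_one, ← ENNReal.rpow_natCast, ← ENNReal.rpow_mul]
        congr 1
        push_cast; ring

end

section
lemma Wd_le {n d : ℕ} (hd : 0 < d) (E : Fin (sdim n d) → (Fin n → ℕ)) {H : Set (Pt n)}
    (hH : IsCompact H) (Q : H → ℝ) (hQ : Continuous Q) (c : ℝ) (G : Set (ProbabilityMeasure H))
    (hG : ∀ μ' ∈ G, ∫ x, Q x ∂(μ' : Measure H) ≤ c) :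
    Wd n d E H 0 G ≤ ENNReal.ofReal (Real.exp c) *
      (⨆ a : Fin (sdim n d) → H, absVDMQ n d E H Q a) ^ (1 / (d * sdim n d) : ℝ) := by
  haveI : CompactSpace H := isCompact_iff_compactSpace.1 hH
  have hs := sdim_pos n d
  have hp : (0:ℝ) < d * sdim n d := by positivity
  refine iSup₂_le fun a ha => ?_
  have h1 := hG _ ha
  rw [emp_integral _ _ _ hQ, div_le_iff₀ (by positivity)] at h1
  have h2 : vq n d E 0 a ≤ Real.exp (c * (d * sdim n d)) * vq n d E Q a := by
    unfold vq
    rw [← Real.exp_sum, ← Real.exp_sum, mul_left_comm, ← Real.exp_add]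
    refine mul_le_mul_of_nonneg_left (Real.exp_le_exp.2 ?_) (norm_nonneg _)
    simp only [Pi.zero_apply, mul_zero, Finset.sum_const_zero, ← Finset.mul_sum]
    have : (0:ℝ) < d := by positivity
    nlinarith
  have h3 : absVDMQ n d E H 0 a ≤ ENNReal.ofReal (Real.exp (c * (d * sdim n d))) *
      ⨆ a : Fin (sdim n d) → H, absVDMQ n d E H Q a := by
    rw [absVDMQ_eq]
    refine (ENNReal.ofReal_le_ofReal h2).trans ?_
    rw [ENNReal.ofReal_mul (Real.exp_pos _).le]
    exact mul_le_mul_right (le_iSup (fun a => absVDMQ n d E H Q a) a) _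
  refine (ENNReal.rpow_le_rpow h3 (by positivity)).trans (le_of_eq ?_)
  rw [ENNReal.mul_rpow_of_nonneg _ _ (by positivity),
    ENNReal.ofReal_rpow_of_nonneg (Real.exp_pos _).le (by positivity), ← Real.exp_mul]
  congr 3
  field_simp

lemma W_le_inf {n : ℕ} (E : ∀ d, Fin (sdim n d) → (Fin n → ℕ)) {H : Set (Pt n)} (hH : IsCompact H)
    (Q : H → ℝ) (hQ : Continuous Q) (μ : ProbabilityMeasure H) :
    WQ n E H 0 μ ≤ deltaBar n E H Q * ENNReal.ofReal (Real.exp (∫ z, Q z ∂(μ : Measure H))) := by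
  haveI : CompactSpace H := isCompact_iff_compactSpace.1 hH
  have key : ∀ η : ℝ, 0 < η → WQ n E H 0 μ ≤
      deltaBar n E H Q * ENNReal.ofReal (Real.exp ((∫ z, Q z ∂(μ : Measure H)) + η)) := by
    intro η hη
    let G : Set (ProbabilityMeasure H) :=
      {μ' | ∫ z, Q z ∂(μ' : Measure H) < (∫ z, Q z ∂(μ : Measure H)) + η}
    have hG : IsOpen G := by
      refine isOpen_lt ?_ continuous_const
      rw [continuous_iff_continuousAt]
      intro μ'
      exact ProbabilityMeasure.tendsto_iff_forall_integral_tendsto.1 (tendsto_id (x := 𝓝 μ'))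
        (BoundedContinuousFunction.mkOfCompact ⟨Q, hQ⟩)
    refine (iInf₂_le G ⟨hG, by simp [G, hη]⟩).trans ?_
    rw [mul_comm]
    unfold deltaBar
    rw [← ENNReal.limsup_const_mul_of_ne_top ENNReal.ofReal_ne_top]
    refine limsup_le_limsup ?_
    filter_upwards [eventually_gt_atTop 0] with d hd
    exact Wd_le hd (E d) hH Q hQ _ G fun μ' h => le_of_lt h
  have ht : Tendsto (fun η : ℝ => deltaBar n E H Q *
      ENNReal.ofReal (Real.exp ((∫ z, Q z ∂(μ : Measure H)) + η))) (𝓝[>] 0)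
      (𝓝 (deltaBar n E H Q * ENNReal.ofReal (Real.exp ((∫ z, Q z ∂(μ : Measure H)) + 0)))) := by
    refine ENNReal.Tendsto.const_mul ?_ (Or.inl (by simp [Real.exp_pos]))
    refine Tendsto.mono_left ?_ nhdsWithin_le_nhds
    refine ContinuousAt.tendsto (f := fun η : ℝ =>
      ENNReal.ofReal (Real.exp ((∫ z, Q z ∂(μ : Measure H)) + η))) ?_
    refine Continuous.continuousAt ?_
    exact ENNReal.continuous_ofReal.comp (by fun_prop)
  rw [add_zero] at ht
  refine ge_of_tendsto ht ?_
  filter_upwards [self_mem_nhdsWithin] with η hη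
  exact key η hη

end

section
lemma sdim_atTop {n : ℕ} (hn : 1 ≤ n) : Tendsto (fun d => (sdim n d : ℝ)) atTop atTop := by
  refine tendsto_atTop_mono (f := fun d : ℕ => (d : ℝ)) (fun d => ?_) tendsto_natCast_atTop_atTop
  have h1 : (d + 1).choose 1 ≤ (d + n).choose n := by
    rw [← Nat.choose_symm_add (a := d) (b := 1), ← Nat.choose_symm_add (a := d) (b := n)]
    exact Nat.choose_le_choose d (by omega)
  rw [Nat.choose_one_right] at h1
  have : d ≤ sdim n d := by unfold sdim; omega
  exact_mod_cast this

lemma psi_lower {n : ℕ} {E : ∀ d, Fin (sdim n d) → (Fin n → ℕ)} (hE : ∀ d, IsEnum n d (E d))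
    {H : Set (Pt n)} (hHc : IsCompact H) (hHconv : Convex ℝ H)
    (hHi : (interior H).Nonempty) (ν : Measure H) [IsFiniteMeasure ν] (hdens : DensityCond H ν)
    (μ : ProbabilityMeasure H) (I1 : ℝ)
    (hI1 : ∀ Q : H → ℝ, Continuous Q → ENNReal.ofReal (Real.exp I1) <
      deltaBar n E H Q * ENNReal.ofReal (Real.exp (∫ z, Q z ∂(μ : Measure H))))
    {m : ℕ} (u : Fin m → H → ℝ) (hu : ∀ i, Continuous (u i)) (I2 : ℝ) (hI2 : I2 < I1)
    (t : Fin m → ℝ) :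
    ∀ᶠ d : ℕ in atTop, 0 < Zf ν (phiE (E d) H) d (Qt u t) ∧
      I2 ≤ psiF ν (phiE (E d) H) d u (fun i => ∫ z, u i z ∂(μ : Measure H)) t := by
  haveI : CompactSpace H := isCompact_iff_compactSpace.1 hHc
  have hq : ∫ z, Qt u t z ∂(μ : Measure H) = ∑ i, t i * ∫ z, u i z ∂(μ : Measure H) := by
    unfold Qt
    rw [integral_finsetSum]
    · simp_rw [integral_const_mul]
    · intro i _
      exact cont_integrable _ (continuous_const.mul (hu i))
  set q := ∑ i, t i * ∫ z, u i z ∂(μ : Measure H) with hqd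
  have h1 := hI1 (Qt u t) (Qt_cont u hu t)
  rw [hq] at h1
  have h2 : ENNReal.ofReal (Real.exp (I1 - q)) < deltaBar n E H (Qt u t) := by
    by_contra hcon
    have h3 := mul_le_mul_left (not_lt.1 hcon) (ENNReal.ofReal (Real.exp q))
    rw [← ENNReal.ofReal_mul (Real.exp_pos _).le, ← Real.exp_add, sub_add_cancel] at h3
    exact absurd h1 (not_lt.2 h3)
  filter_upwards [Zf_lower hE hHc hHconv hHi ν hdens (Qt u t) (Qt_cont u hu t) _
    (Real.exp (I2 - q)) (Real.exp_pos _) (Real.exp_lt_exp.2 (by linarith)) h2,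
    eventually_gt_atTop 0] with d hd hd0
  have hpos : 0 < Zf ν (phiE (E d) H) d (Qt u t) := lt_of_lt_of_le (by positivity) hd
  refine ⟨hpos, ?_⟩
  have hs := sdim_pos n d
  have hp : (0:ℝ) < 2 * d * sdim n d := by positivity
  have h4 := Real.log_le_log (by positivity) hd
  rw [Real.log_pow, Real.log_exp] at h4
  unfold psiF
  rw [← hqd]
  have h5 : I2 - q ≤ Real.log (Zf ν (phiE (E d) H) d (Qt u t)) / (2 * d * sdim n d) := by
    rw [le_div_iff₀ hp]
    push_cast at h4
    linarith
  linarith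

lemma psi_lower_unif {n : ℕ} {E : ∀ d, Fin (sdim n d) → (Fin n → ℕ)} (hE : ∀ d, IsEnum n d (E d))
    {H : Set (Pt n)} (hHc : IsCompact H) (hHconv : Convex ℝ H)
    (hHi : (interior H).Nonempty) (ν : Measure H) [IsFiniteMeasure ν] (hdens : DensityCond H ν)
    (μ : ProbabilityMeasure H) (I1 : ℝ)
    (hI1 : ∀ Q : H → ℝ, Continuous Q → ENNReal.ofReal (Real.exp I1) <
      deltaBar n E H Q * ENNReal.ofReal (Real.exp (∫ z, Q z ∂(μ : Measure H))))
    {m : ℕ} (u : Fin m → H → ℝ) (hu : ∀ i, Continuous (u i)) (B : ℝ) (hB0 : 0 < B)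
    (hB : ∀ i x, |u i x| ≤ B)
    (hmv : ∀ i, |∫ z, u i z ∂(μ : Measure H)| ≤ B) (I3 : ℝ) (hI3 : I3 < I1) (R : ℝ) (hR : 0 < R) :
    ∀ᶠ d : ℕ in atTop, ∀ t : Fin m → ℝ, ∑ i, t i ^ 2 ≤ R ^ 2 →
      I3 ≤ psiF ν (phiE (E d) H) d u (fun i => ∫ z, u i z ∂(μ : Measure H)) t := by
  haveI : CompactSpace H := isCompact_iff_compactSpace.1 hHc
  obtain ⟨I2, h32, h21⟩ := exists_between hI3
  have hSc : IsCompact {t : Fin m → ℝ | ∑ i, t i ^ 2 ≤ R ^ 2} := by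
    refine Metric.isCompact_of_isClosed_isBounded
      (isClosed_le (by fun_prop) continuous_const) ?_
    refine (Metric.isBounded_closedBall (x := (0 : Fin m → ℝ)) (r := R)).subset fun t ht => ?_
    rw [mem_closedBall_zero_iff, pi_norm_le_iff_of_nonneg hR.le]
    intro i
    rw [Real.norm_eq_abs]
    refine abs_le_of_sq_le_sq ?_ hR.le
    exact (Finset.single_le_sum (f := fun i => t i ^ 2) (fun _ _ => sq_nonneg _)
      (Finset.mem_univ i)).trans ht
  obtain ⟨T, -, hT⟩ := hSc.elim_nhds_subcover
    (fun t => {t' : Fin m → ℝ | 2 * B * ∑ i, |t' i - t i| < I2 - I3}) (fun t _ => by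
      refine IsOpen.mem_nhds (isOpen_lt (by fun_prop) continuous_const) ?_
      simp [h32])
  have hall : ∀ᶠ d : ℕ in atTop, ∀ t ∈ T, 0 < Zf ν (phiE (E d) H) d (Qt u t) ∧
      I2 ≤ psiF ν (phiE (E d) H) d u (fun i => ∫ z, u i z ∂(μ : Measure H)) t := by
    rw [Filter.eventually_all_finset]
    intro t _
    exact psi_lower hE hHc hHconv hHi ν hdens μ I1 hI1 u hu I2 h21 t
  filter_upwards [hall, eventually_gt_atTop 0] with d hd hd0 t ht
  obtain ⟨t0, ht0, htt⟩ := Set.mem_iUnion₂.1 (hT ht)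
  obtain ⟨h1, h2⟩ := hd t0 ht0
  have h3 := psiF_diff (sdim_pos n d) ν (phiE (E d) H) (phiE_cont (E d) H) d hd0 u hu B hB
    (fun i => ∫ z, u i z ∂(μ : Measure H)) hmv t0 t h1
  have h4 : 2 * B * ∑ i, |t i - t0 i| < I2 - I3 := htt
  linarith

lemma psi_upper {n : ℕ} {E : ∀ d, Fin (sdim n d) → (Fin n → ℕ)} (hE : ∀ d, IsEnum n d (E d))
    {H : Set (Pt n)} (hHc : IsCompact H) (ν : Measure H) (hν : ν Set.univ ≤ 1) :
    ∃ C0 : ℝ, ∀ᶠ d : ℕ in atTop, ∀ (m : ℕ) (u : Fin m → H → ℝ) (mv : Fin m → ℝ),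
      0 < Zf ν (phiE (E d) H) d (Qt u 0) → psiF ν (phiE (E d) H) d u mv 0 ≤ C0 := by
  haveI : CompactSpace H := isCompact_iff_compactSpace.1 hHc
  haveI : IsFiniteMeasure ν := ⟨hν.trans_lt one_lt_top⟩
  obtain ⟨C, hC, hup⟩ := vq_upper hE hHc 0 continuous_zero
  refine ⟨Real.log (2 * C), ?_⟩
  filter_upwards [(tendsto_sdim_root n).eventually_lt_const (show (1:ℝ) < 2 by norm_num),
    eventually_gt_atTop 0] with d hd hd0 m u mv hZ
  have hQ0 : Qt u 0 = 0 := by ext x; simp [Qt]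
  have hs := sdim_pos n d
  have hf : ((sdim n d).factorial : ℝ) ≤ 2 ^ (d * sdim n d) := by
    have h1 := (fact_root (sdim n d) d hs hd0).trans hd.le
    have h2 := Real.rpow_le_rpow (by positivity) h1 (z := (d * sdim n d : ℝ)) (by positivity)
    rw [← Real.rpow_mul (by positivity), one_div_mul_cancel (by positivity), Real.rpow_one] at h2
    have h3 : ((d * sdim n d : ℕ) : ℝ) = d * sdim n d := by push_cast; ring
    rwa [← h3, Real.rpow_natCast] at h2
  have hb : ∀ a, vq n d (E d) 0 a ≤ (2 * C) ^ (d * sdim n d) := fun a => by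
    refine (hup d a hd0).trans ?_
    rw [mul_pow]
    exact mul_le_mul_of_nonneg_right hf (by positivity)
  have hZ1 : Zf ν (phiE (E d) H) d (Qt u 0) ≤ ((2 * C) ^ (d * sdim n d)) ^ 2 := by
    rw [hQ0]
    unfold Zf
    calc _ ≤ ∫ a, ((2 * C) ^ (d * sdim n d)) ^ 2 ∂(Measure.pi fun _ : Fin (sdim n d) => ν) := by
          refine integral_mono ?_ (integrable_const _) fun a => ?_
          · exact cont_integrable _ (rhoF_cont _ (phiE_cont (E d) H) d 0 continuous_zero)
          · rw [rhoF_eq_vq]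
            exact pow_le_pow_left₀ (vq_nonneg ..) (hb a) 2
      _ ≤ _ := by
          rw [integral_const, smul_eq_mul]
          refine mul_le_of_le_one_left (by positivity) ?_
          rw [measureReal_def]
          refine ENNReal.toReal_le_of_le_ofReal zero_le_one ?_
          rw [Measure.pi_univ, ENNReal.ofReal_one]
          exact Finset.prod_le_one' fun _ _ => hν
  unfold psiF
  have hp : (0:ℝ) < 2 * d * sdim n d := by positivity
  simp only [Pi.zero_apply, zero_mul, Finset.sum_const_zero, add_zero]
  rw [div_le_iff₀ hp]
  refine (Real.log_le_log hZ hZ1).trans (le_of_eq ?_)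
  rw [Real.log_pow, Real.log_pow]
  push_cast
  ring

end

section
lemma Jd_lower {n : ℕ} (hn : 1 ≤ n) {E : ∀ d, Fin (sdim n d) → (Fin n → ℕ)}
    (hE : ∀ d, IsEnum n d (E d))
    {H : Set (Pt n)} (hHc : IsCompact H) (hHconv : Convex ℝ H)
    (hHi : (interior H).Nonempty) (ν : Measure H) (hν : ν Set.univ ≤ 1) (hdens : DensityCond H ν)
    (μ : ProbabilityMeasure H) (I1 : ℝ)
    (hI1 : ∀ Q : H → ℝ, Continuous Q → ENNReal.ofReal (Real.exp I1) <
      deltaBar n E H Q * ENNReal.ofReal (Real.exp (∫ z, Q z ∂(μ : Measure H))))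
    (I : ℝ) (hI : I < I1) (G : Set (ProbabilityMeasure H)) (hG : IsOpen G) (hμ : μ ∈ G) :
    ∀ᶠ d : ℕ in atTop, ENNReal.ofReal (Real.exp I) ≤ Jd n d (E d) H ν 0 G := by
  haveI : CompactSpace H := isCompact_iff_compactSpace.1 hHc
  haveI : IsFiniteMeasure ν := ⟨hν.trans_lt one_lt_top⟩
  obtain ⟨m, u, ε, B, hε, hB0, hu, hB, hGsub⟩ := nbhd_fin μ G hG hμ
  obtain ⟨I3, hII3, hI31⟩ := exists_between hI
  obtain ⟨C0', hC0'⟩ := psi_upper hE hHc ν hν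
  set mv : Fin m → ℝ := fun i => ∫ z, u i z ∂(μ : Measure H) with hmvd
  have hmv : ∀ i, |mv i| ≤ B := fun i => by
    have := norm_integral_le_of_norm_le_const (μ := (μ : Measure H)) (f := u i) (C := B)
      (Eventually.of_forall fun x => by simpa using hB i x)
    simpa using this
  set C0 := max C0' (I3 + 1) with hC0
  set K := C0 - I3 with hK
  have hK0 : 0 < K := by
    have : I3 + 1 ≤ C0 := le_max_right _ _
    linarith
  set η := ε ^ 2 / (8 * K) with hη
  have hη0 : 0 < η := by positivity
  set R := 4 * K / ε + 1 with hR
  have hR0 : 0 < R := by positivity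
  have hRη : C0 - I3 < η * R ^ 2 / 2 := by
    rw [← hK]
    have h1 : η * R ^ 2 / 2 = (ε * R) ^ 2 / (16 * K) := by rw [hη]; field_simp; ring
    have h2 : ε * R = 4 * K + ε := by rw [hR]; field_simp
    rw [h1, h2, lt_div_iff₀ (by positivity)]
    nlinarith [mul_pos hK0 hε]
  set e := min (ε / 4) ((I3 - I) / (2 * (m * R + 1))) with he
  have hmR : 0 ≤ (m:ℝ) * R := by positivity
  have he0 : 0 < e := lt_min (by positivity) (div_pos (by linarith) (by positivity))
  have he1 : e ≤ ε / 4 := min_le_left _ _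
  have he2 : e * m * R ≤ (I3 - I) / 2 := by
    have h1 : e ≤ (I3 - I) / (2 * (m * R + 1)) := min_le_right _ _
    rw [le_div_iff₀ (by positivity)] at h1
    nlinarith
  set l := min (1 / (2 * B)) (e / (8 * B ^ 2)) with hl
  have hl0 : 0 < l := lt_min (by positivity) (by positivity)
  have hl1 : 2 * B * l ≤ 1 := by
    have h1 : l ≤ 1 / (2 * B) := min_le_left _ _
    rw [le_div_iff₀ (by positivity)] at h1
    linarith
  have hl2 : 0 < l * e - 4 * l ^ 2 * B ^ 2 := by
    have h1 : l ≤ e / (8 * B ^ 2) := min_le_right _ _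
    rw [le_div_iff₀ (by positivity)] at h1
    nlinarith [mul_pos hl0 he0]
  set κ := l * e - 4 * l ^ 2 * B ^ 2 with hκ
  have hexp : ∀ᶠ d : ℕ in atTop, 2 * m * Real.exp (-(sdim n d * κ)) ≤ 1 / 2 := by
    have h1 : Tendsto (fun d : ℕ => 2 * (m:ℝ) * Real.exp (-(sdim n d * κ))) atTop
        (𝓝 (2 * m * 0)) := by
      refine Tendsto.const_mul _ ?_
      exact Real.tendsto_exp_neg_atTop_nhds_zero.comp
        ((sdim_atTop hn).atTop_mul_const hl2)
    rw [mul_zero] at h1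
    exact (h1.eventually_lt_const (by norm_num)).mono fun _ h => h.le
  have hbig : ∀ᶠ d : ℕ in atTop, Real.log 2 ≤ sdim n d * (I3 - I) :=
    ((sdim_atTop hn).atTop_mul_const (show 0 < I3 - I by linarith)).eventually_ge_atTop _
  filter_upwards [hC0', psi_lower_unif hE hHc hHconv hHi ν hdens μ I1 hI1 u hu B hB0 hB hmv I3
    hI31 R hR0, psi_lower hE hHc hHconv hHi ν hdens μ I1 hI1 u hu I3 hI31 0, hexp, hbig,
    eventually_gt_atTop 0] with d hCd hlow hZ hexpd hbigd hd0
  have hs := sdim_pos n d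
  have hsR : (0:ℝ) < sdim n d := by exact_mod_cast hs
  have hdR : (1:ℝ) ≤ d := by exact_mod_cast hd0
  obtain ⟨b, hb, hhnt⟩ := ld_lower hs ν (phiE (E d) H) (phiE_cont (E d) H) d hd0 u hu B hB0 hB mv
    hmv hZ.1 I3 C0 η R hη0 hR0 hlow ((hCd m u mv hZ.1).trans (le_max_left _ _)) hRη l e hl0 hl1
    he0 hexpd
  set N : Set (Fin (sdim n d) → H) :=
    {a | ∀ i, |(∑ j, u i (a j)) - sdim n d * b i| ≤ sdim n d * e} with hN
  have hNG : N ⊆ Gtilde d H G := by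
    intro a ha
    refine hGsub _ fun i => ?_
    rw [emp_integral _ _ _ (hu i)]
    have h1 := ha i
    have h2 : |(∑ j, u i (a j)) / sdim n d - b i| ≤ e := by
      have : (∑ j, u i (a j)) / sdim n d - b i =
          ((∑ j, u i (a j)) - sdim n d * b i) / sdim n d := by field_simp
      rw [this, abs_div, abs_of_pos hsR, div_le_iff₀ hsR]
      linarith
    have h3 : |b i - mv i| ≤ ε / 2 := by
      refine abs_le_of_sq_le_sq ?_ (by positivity)
      refine (hb i).trans (le_of_eq ?_)
      rw [← hK, hη]
      field_simp
      ring
    calc _ = |((∑ j, u i (a j)) / sdim n d - b i) + (b i - mv i)| := by congr 1; simp [hmvd]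
      _ ≤ _ := abs_add_le _ _
      _ < ε := by linarith
  have hp : (0:ℝ) < 2 * d * sdim n d := by positivity
  unfold Jd
  rw [one_div, ENNReal.le_rpow_inv_iff hp, ENNReal.ofReal_rpow_of_nonneg (Real.exp_pos _).le hp.le,
    ← Real.exp_mul]
  have hle : Real.exp (I * (2 * d * sdim n d)) ≤
      ∫ a in N, rhoF (phiE (E d) H) d 0 a ∂(Measure.pi fun _ => ν) := by
    refine le_trans ?_ hhnt
    have : (1:ℝ) / 2 = Real.exp (-Real.log 2) := by
      rw [Real.exp_neg, Real.exp_log (by norm_num)]; norm_num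
    rw [this, ← Real.exp_add]
    refine Real.exp_le_exp.2 ?_
    have h1 : (2 * d * sdim n d : ℝ) * ((I3 - I) / 2) ≤
        2 * d * sdim n d * (I3 - e * m * R - I) :=
      mul_le_mul_of_nonneg_left (by linarith) hp.le
    have h2 : (sdim n d : ℝ) * (I3 - I) ≤ d * (sdim n d * (I3 - I)) :=
      le_mul_of_one_le_left (mul_nonneg hsR.le (by linarith)) hdR
    nlinarith
  have hNm : MeasurableSet N := by
    refine IsClosed.measurableSet ?_
    rw [hN, Set.setOf_forall]
    refine isClosed_iInter fun i => isClosed_le ?_ continuous_const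
    refine Continuous.abs (Continuous.sub ?_ continuous_const)
    exact continuous_finsetSum _ fun j _ => (hu i).comp (continuous_apply j)
  calc _ ≤ ENNReal.ofReal (∫ a in N, rhoF (phiE (E d) H) d 0 a ∂(Measure.pi fun _ => ν)) :=
        ENNReal.ofReal_le_ofReal hle
    _ = ∫⁻ a in N, ENNReal.ofReal (rhoF (phiE (E d) H) d 0 a) ∂(Measure.pi fun _ => ν) :=
        ofReal_integral_eq_lintegral_ofReal
          (cont_integrable _ (rhoF_cont _ (phiE_cont (E d) H) d 0 continuous_zero))
          (Eventually.of_forall fun a => rhoF_nonneg _ _ _ _)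
    _ ≤ ∫⁻ a in Gtilde d H G, ENNReal.ofReal (rhoF (phiE (E d) H) d 0 a)
          ∂(Measure.pi fun _ => ν) := lintegral_mono_set hNG
    _ = _ := by
        refine lintegral_congr fun a => ?_
        rw [rhoF_eq_vq, absVDMQ_eq, ENNReal.ofReal_pow (vq_nonneg ..)]

lemma inf_le_J {n : ℕ} (hn : 1 ≤ n) {E : ∀ d, Fin (sdim n d) → (Fin n → ℕ)}
    (hE : ∀ d, IsEnum n d (E d))
    {H : Set (Pt n)} (hHc : IsCompact H) (hHconv : Convex ℝ H)
    (hHi : (interior H).Nonempty) (ν : Measure H) (hν : ν Set.univ ≤ 1) (hdens : DensityCond H ν)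
    (μ : ProbabilityMeasure H) :
    (⨅ (Q : H → ℝ) (_ : Continuous Q),
        deltaBar n E H Q * ENNReal.ofReal (Real.exp (∫ z, Q z ∂(μ : Measure H)))) ≤
      JQ n E H ν 0 μ := by
  refine le_of_forall_lt_imp_le_of_dense fun c hc => ?_
  rcases eq_or_ne c 0 with rfl | hc0
  · exact zero_le
  obtain ⟨c1, hcc1, hc1⟩ := exists_between hc
  have hform : ∀ x : ℝ≥0∞, x ≠ 0 → x ≠ ⊤ → x = ENNReal.ofReal (Real.exp (Real.log x.toReal)) := by
    intro x h0 h1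
    rw [Real.exp_log (ENNReal.toReal_pos h0 h1), ENNReal.ofReal_toReal h1]
  have h1 := hform c hc0 hcc1.ne_top
  have hc10 : c1 ≠ 0 := (lt_of_le_of_lt zero_le hcc1).ne'
  have h2 := hform c1 hc10 hc1.ne_top
  have hlt : Real.log c.toReal < Real.log c1.toReal :=
    Real.log_lt_log (ENNReal.toReal_pos hc0 hcc1.ne_top)
      ((ENNReal.toReal_lt_toReal hcc1.ne_top hc1.ne_top).2 hcc1)
  refine le_iInf₂ fun G hG => ?_
  refine le_limsup_of_frequently_le ?_
  refine Eventually.frequently ?_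
  rw [h1]
  refine Jd_lower hn hE hHc hHconv hHi ν hν hdens μ _ (fun Q hQ => ?_) _ hlt G hG.1 hG.2
  rw [← h2]
  exact hc1.trans_le (iInf₂_le Q hQ)

end

/-- **Theorem (main result).** Let `H ⊂ ℂⁿ` be a compact convex set with nonempty interior
and suppose `(H, ν)` satisfies the density condition. Then for every `μ ∈ 𝓜(H)`,
`J(μ) = W(μ) = inf { δ̄^{e^{-Q}}(H) · exp(∫_H Q dμ) : Q : H → ℝ continuous }`. -/
theorem J_eq_W_eq_inf_weighted_transfinite
    (n : ℕ) (hn : 1 ≤ n)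
    (E : ∀ d, Fin (sdim n d) → (Fin n → ℕ)) (hE : ∀ d, IsEnum n d (E d))
    (H : Set (Pt n)) (hHcomp : IsCompact H) (hHconv : Convex ℝ H)
    (hHint : (interior H).Nonempty)
    (ν : Measure H) (hν : ν Set.univ ≤ 1) (hdens : DensityCond H ν)
    (μ : ProbabilityMeasure H) :
    JQ n E H ν 0 μ = WQ n E H 0 μ ∧
    WQ n E H 0 μ =
      ⨅ (Q : H → ℝ) (_ : Continuous Q),
        deltaBar n E H Q * ENNReal.ofReal (Real.exp (∫ z, Q z ∂(μ : Measure H))) := by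
  have h1 := J_le_W E hHcomp ν hν 0 μ
  have h2 : WQ n E H 0 μ ≤ ⨅ (Q : H → ℝ) (_ : Continuous Q),
        deltaBar n E H Q * ENNReal.ofReal (Real.exp (∫ z, Q z ∂(μ : Measure H))) :=
    le_iInf₂ fun Q hQ => W_le_inf E hHcomp Q hQ μ
  have h3 := inf_le_J hn hE hHcomp hHconv hHint ν hν hdens μ
  exact ⟨le_antisymm h1 (h2.trans h3), le_antisymm h2 (h3.trans h1)⟩

end
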